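/- arXiv:math/9812080 — 2 statements merged into one kernel-verified Lean document; each statement's English description precedes it below -/
import Mathlib

section
/- Let κ be a partition with n distinct parts κ_1>κ_2>⋯>κ_n≥0. For σ∈S_n let σκ denote the composition with (σκ)_i = κ_{σ^{−1}(i)}. Assume the non-symmetric Macdonald polynomials E_{σκ} exist for all σ∈S_n and the q-antisymmetric Macdonald polynomial S_κ exists. Then S_κ = Σ_{σ∈S_n} (−t)^{−l(σ)}·(d_{σκ}(q,t)/d_κ(q,t))·E_{σκ}. -/
/- STATEMENT 8: for a partition κ with n distinct parts,
S_κ = Σ_{σ∈S_n} (−t)^{−l(σ)}·(d_{σκ}(q,t)/d_κ(q,t))·E_{σκ}. -/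

open Finset MvPolynomial

namespace Stmt8

/-- leg colength l'_η(i) -/
def legCo (n : ℕ) (η : Fin n → ℕ) (i : Fin n) : ℕ :=
  (univ.filter fun k => k < i ∧ η i ≤ η k).card +
  (univ.filter fun k => i < k ∧ η i < η k).card

/-- leg length l(s) of the node s = (i,j) -/
def leg (n : ℕ) (η : Fin n → ℕ) (i : Fin n) (j : ℕ) : ℕ :=
  (univ.filter fun k => i < k ∧ j ≤ η k ∧ η k ≤ η i).card +
  (univ.filter fun k => k < i ∧ j ≤ η k + 1 ∧ η k + 1 ≤ η i).card

/-- The field K = ℚ(q,t). -/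
abbrev K : Type := FractionRing (MvPolynomial (Fin 2) ℚ)

noncomputable def q : K := algebraMap (MvPolynomial (Fin 2) ℚ) K (X 0)
noncomputable def t : K := algebraMap (MvPolynomial (Fin 2) ℚ) K (X 1)

/-- The polynomial ring K[x_1,…,x_n]. -/
abbrev P (n : ℕ) : Type := MvPolynomial (Fin n) K

/-- the automorphism s_k exchanging x_k and x_{k+1} (0-indexed; identity out of range) -/
noncomputable def sOp (n : ℕ) (k : ℕ) : P n →ₗ[K] P n :=
  if h : k + 1 < n then
    (rename (Equiv.swap (⟨k, Nat.lt_of_succ_lt h⟩ : Fin n) ⟨k + 1, h⟩)).toLinearMap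
  else LinearMap.id

/-- τ_1 : x_1 ↦ qv·x_1 (the first variable is 0-indexed) -/
noncomputable def tauOp (n : ℕ) (qv : K) : P n →ₗ[K] P n :=
  (aeval (fun j : Fin n => if (j : ℕ) = 0 then C qv * X j else X j)).toLinearMap

/-- ω := s_{n−1}⋯s_2 s_1 τ_1 -/
noncomputable def omegaOp (n : ℕ) (qv : K) : P n →ₗ[K] P n :=
  (List.range (n - 1)).foldl (fun acc k => sOp n k ∘ₗ acc) (tauOp n qv)

/-- The defining property of the Demazure–Lustig operators T_k (0-indexed), for the
parameter value tv: (x_k − x_{k+1})·(T_k f) = (x_k − x_{k+1})·tv·f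
+ (tv·x_k − x_{k+1})·(s_k f − f), i.e. T_k f is the polynomial quotient from the usual
definition. -/
def IsDL (n : ℕ) (tv : K) (T : ℕ → P n →ₗ[K] P n) : Prop :=
  ∀ k, ∀ hk : k + 1 < n, ∀ f : P n,
    (X (⟨k, Nat.lt_of_succ_lt hk⟩ : Fin n) - X ⟨k + 1, hk⟩) * T k f =
      (X (⟨k, Nat.lt_of_succ_lt hk⟩ : Fin n) - X ⟨k + 1, hk⟩) * (C tv * f) +
      (C tv * X (⟨k, Nat.lt_of_succ_lt hk⟩ : Fin n) - X ⟨k + 1, hk⟩) * (sOp n k f - f)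

/-- T_k⁻¹ = tv⁻¹ − 1 + tv⁻¹ T_k -/
noncomputable def Tinv (n : ℕ) (tv : K) (T : ℕ → P n →ₗ[K] P n) (k : ℕ) : P n →ₗ[K] P n :=
  tv⁻¹ • LinearMap.id - LinearMap.id + tv⁻¹ • T k

/-- The Cherednik operator Y_i (0-indexed i):
Y_i = tv^{i+1−n}·T_i⋯T_{n−2}·ω·T_0⁻¹⋯T_{i−1}⁻¹. -/
noncomputable def Yop (n : ℕ) (qv tv : K) (T : ℕ → P n →ₗ[K] P n) (i : Fin n) :
    P n →ₗ[K] P n :=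
  (tv ^ (n - 1 - (i : ℕ)))⁻¹ •
    (((List.range' (i : ℕ) (n - 1 - (i : ℕ))).foldr (fun k acc => T k ∘ₗ acc) LinearMap.id) ∘ₗ
      omegaOp n qv ∘ₗ
      ((List.range (i : ℕ)).foldr (fun k acc => Tinv n tv T k ∘ₗ acc) LinearMap.id))

/-- the decreasing rearrangement η⁺ of η -/
noncomputable def sortDesc (n : ℕ) (η : Fin n → ℕ) : Fin n → ℕ :=
  fun i => η (Tuple.sort η i.rev)

/-- dominance order on n-tuples (of equal sum) -/
def domLE (n : ℕ) (ν μ : Fin n → ℕ) : Prop :=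
  (∑ i, ν i = ∑ i, μ i) ∧
  ∀ p : Fin n, ∑ i ∈ univ.filter (· ≤ p), ν i ≤ ∑ i ∈ univ.filter (· ≤ p), μ i

def domLT (n : ℕ) (ν μ : Fin n → ℕ) : Prop := domLE n ν μ ∧ ν ≠ μ

/-- the order ≺ : ν ≺ η iff ν⁺ < η⁺, or ν⁺ = η⁺ and ν < η (dominance order) -/
noncomputable def prec (n : ℕ) (ν η : Fin n → ℕ) : Prop :=
  domLT n (sortDesc n ν) (sortDesc n η) ∨ (sortDesc n ν = sortDesc n η ∧ domLT n ν η)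

/-- E is the non-symmetric Macdonald polynomial for the composition η (with parameters
qv, tv and Demazure–Lustig operators T): it has the triangular form
E = x^η + Σ_{ν≺η} b_{ην} x^ν and satisfies Y_i E = qv^{η_i}·tv^{−l'_η(i)}·E for all i. -/
noncomputable def IsNSMac (n : ℕ) (qv tv : K) (T : ℕ → P n →ₗ[K] P n)
    (η : Fin n → ℕ) (E : P n) : Prop :=
  coeff (Finsupp.equivFunOnFinite.symm η) E = 1 ∧
  (∀ ν : Fin n →₀ ℕ, coeff ν E ≠ 0 → (ν : Fin n → ℕ) = η ∨ prec n (ν : Fin n → ℕ) η) ∧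
  ∀ i : Fin n, Yop n qv tv T i E = (qv ^ η i / tv ^ legCo n η i) • E

/-- the adjacent transposition s_k as a permutation (identity out of range, 0-indexed) -/
def sPerm (n : ℕ) (k : ℕ) : Equiv.Perm (Fin n) :=
  if h : k + 1 < n then Equiv.swap ⟨k, Nat.lt_of_succ_lt h⟩ ⟨k + 1, h⟩ else 1

/-- the length l(σ) of a permutation, i.e. its number of inversions -/
def inversions {n : ℕ} (σ : Equiv.Perm (Fin n)) : ℕ :=
  (univ.filter fun p : Fin n × Fin n => p.1 < p.2 ∧ σ p.2 < σ p.1).card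

/-- The defining property of σ ↦ T_σ: T_1 = id and T_{σ·s_k} = T_σ ∘ T_k whenever
l(σ·s_k) = l(σ)+1; by the braid relations this determines T_σ = T_{i_1}⋯T_{i_p} for any
reduced word σ = s_{i_1}⋯s_{i_p}. -/
def IsTsigma (n : ℕ) (T : ℕ → P n →ₗ[K] P n)
    (Tw : Equiv.Perm (Fin n) → P n →ₗ[K] P n) : Prop :=
  Tw 1 = LinearMap.id ∧
  ∀ σ : Equiv.Perm (Fin n), ∀ k, k + 1 < n →
    inversions (σ * sPerm n k) = inversions σ + 1 →
    Tw (σ * sPerm n k) = Tw σ ∘ₗ T k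

/-- U⁺ := Σ_σ T_σ -/
noncomputable def Uplus (n : ℕ) (Tw : Equiv.Perm (Fin n) → P n →ₗ[K] P n) :
    P n →ₗ[K] P n := ∑ σ : Equiv.Perm (Fin n), Tw σ

/-- U⁻ := Σ_σ (−tv)^{−l(σ)} T_σ -/
noncomputable def Uminus (n : ℕ) (tv : K) (Tw : Equiv.Perm (Fin n) → P n →ₗ[K] P n) :
    P n →ₗ[K] P n := ∑ σ : Equiv.Perm (Fin n), ((-tv) ^ inversions σ)⁻¹ • Tw σ

/-- the monomial x^η -/
noncomputable def xmon (n : ℕ) (η : Fin n → ℕ) : P n :=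
  monomial (Finsupp.equivFunOnFinite.symm η) 1

/-- S is the q-antisymmetric Macdonald polynomial for the partition-with-distinct-parts κ:
it is q-antisymmetric (T_k S = −S), of the form m'_κ + Σ_{μ<κ} v_{κμ} m'_μ with
m'_μ := U⁻ x^μ, and satisfies (Σ_i Y_i) S = (Σ_i qv^{κ_i}·tv^{1−i}) S. -/
noncomputable def IsQASMac (n : ℕ) (qv tv : K) (T : ℕ → P n →ₗ[K] P n)
    (Tw : Equiv.Perm (Fin n) → P n →ₗ[K] P n) (κ : Fin n → ℕ) (S : P n) : Prop :=
  (∀ k, k + 1 < n → T k S = -S) ∧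
  (∃ v : (Fin n → ℕ) → K,
    S = Uminus n tv Tw (xmon n κ) +
      ∑ᶠ μ ∈ {μ : Fin n → ℕ | StrictAnti μ ∧ domLT n μ κ},
        v μ • Uminus n tv Tw (xmon n μ)) ∧
  (∑ i : Fin n, Yop n qv tv T i) S = (∑ i : Fin n, qv ^ κ i * (tv ^ (i : ℕ))⁻¹) • S

/-- d_η(q,t) = ∏_s (1 − q^{a(s)+1} t^{l(s)+1}) -/
noncomputable def dP (n : ℕ) (η : Fin n → ℕ) : K :=
  ∏ i : Fin n, ∏ j ∈ Finset.Icc 1 (η i), (1 - q ^ (η i - j + 1) * t ^ (leg n η i j + 1))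

end Stmt8

open Stmt8

/-!
Filter the polynomials by the square sum of the exponents. On the top layer each `Tᵢ` only mixes
`x ^ ν` with `x ^ sᵢν`, and each `Yᵢ` is triangular for the order by `∑ i νᵢ`, with diagonal entry
`q ^ νᵢ / t ^ l'_ν(i)` at `x ^ ν`. Hence a joint eigenvector of the `Yᵢ` with the spectrum of
`E_η` is zero once its coefficient at `x ^ η` is. For a `q`-antisymmetric polynomial a leading
exponent is strictly decreasing, and then already `∑ q ^ νᵢ t ^ (1 - i)` determines it; so `S_κ`
equals any `q`-antisymmetric eigenvector of `∑ Yᵢ` with the same eigenvalue and coefficient `1` at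
`x ^ κ`.

For the sum on the right only the antisymmetry is not immediate. If `η_{i+1} < η_i` and `z` is the
ratio of the eigenvalues of `Yᵢ` and `Yᵢ₊₁` on `E_η`, then `Tᵢ + (t - 1) / (z - 1)` intertwines the
spectra of `E_{sᵢη}` and `E_η`, which gives `(Tᵢ + (t - 1) / (z - 1)) E_{sᵢη} = t E_η`. The diagrams
of `η` and `sᵢη` differ in the leg of a single node, whence
`d_{sᵢη} / d_η = (1 - t z) / (1 - z) = t + (t - 1) / (z - 1)`. Therefore
`t E_η - (d_{sᵢη} / d_η) E_{sᵢη} = (Tᵢ - t) E_{sᵢη}` is annihilated by `Tᵢ + 1`, and the sum over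
`S_n` splits into multiples of such pairs.
-/

namespace Stmt8

section Coefficients

variable {ι R : Type*} [Fintype ι] [CommRing R]

/-- The coefficient of `x ^ ν` as a linear functional. Exponents are plain functions, as in the
indexing of the non-symmetric Macdonald polynomials. -/
noncomputable def coeffAt (ν : ι → ℕ) : MvPolynomial ι R →ₗ[R] R :=
  lcoeff R (Finsupp.equivFunOnFinite.symm ν)

lemma coeffAt_apply (ν : ι → ℕ) (f : MvPolynomial ι R) :
    coeffAt ν f = coeff (Finsupp.equivFunOnFinite.symm ν) f := rfl

lemma ext_coeffAt {f g : MvPolynomial ι R} (h : ∀ ν, coeffAt ν f = coeffAt ν g) : f = g :=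
  MvPolynomial.ext _ _ fun m => by simpa [coeffAt_apply] using h m

lemma coeffAt_rename (ν : ι → ℕ) (σ : Equiv.Perm ι) (f : MvPolynomial ι R) :
    coeffAt ν (rename σ f) = coeffAt (ν ∘ σ) f := by
  have h : Finsupp.mapDomain σ (Finsupp.equivFunOnFinite.symm (ν ∘ σ)) =
      Finsupp.equivFunOnFinite.symm ν := by
    ext i
    rw [← σ.apply_symm_apply i, Finsupp.mapDomain_apply σ.injective]
    rfl
  rw [coeffAt_apply, ← h, coeff_rename_mapDomain _ σ.injective, coeffAt_apply]

/-- The squared Euclidean norm of an exponent. It is strictly monotone for the dominance order on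
partitions, so it can replace the order `prec` in triangularity arguments. -/
def sqNorm (ν : ι → ℕ) : ℕ := ∑ i, ν i ^ 2

lemma sqNorm_comp_perm (ν : ι → ℕ) (σ : Equiv.Perm ι) : sqNorm (ν ∘ σ) = sqNorm ν :=
  Equiv.sum_comp σ fun i => ν i ^ 2

/-- The polynomials all of whose exponents have squared norm at most `N`. -/
def sqNormLE (ι R : Type*) [Fintype ι] [CommRing R] (N : ℕ) :
    Submodule R (MvPolynomial ι R) where
  carrier := {f | ∀ ν, N < sqNorm ν → coeffAt ν f = 0}
  zero_mem' := fun _ _ => map_zero _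
  add_mem' := fun hf hg ν h => by rw [map_add, hf ν h, hg ν h, add_zero]
  smul_mem' := fun c f hf ν h => by rw [map_smul, hf ν h, smul_zero]

lemma rename_mem_sqNormLE {N : ℕ} {f : MvPolynomial ι R} (hf : f ∈ sqNormLE ι R N)
    (σ : Equiv.Perm ι) : rename σ f ∈ sqNormLE ι R N := fun ν h => by
  rw [coeffAt_rename]
  exact hf _ (by rwa [sqNorm_comp_perm])

variable [DecidableEq ι]

lemma coeffAt_X_mul (ν : ι → ℕ) (i : ι) (f : MvPolynomial ι R) :
    coeffAt ν (X i * f) = if ν i = 0 then 0 else coeffAt (Function.update ν i (ν i - 1)) f := by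
  have h : Finsupp.equivFunOnFinite.symm ν - Finsupp.single i 1 =
      Finsupp.equivFunOnFinite.symm (Function.update ν i (ν i - 1)) := by
    ext j
    rcases eq_or_ne j i with rfl | hj
    · simp
    · simp [hj]
  rw [coeffAt_apply, coeff_X_mul', h]
  simp [coeffAt_apply]

/-- The exponent of `x ^ ν * x_i / x_j`, truncated when `ν j = 0`. -/
def moveUnit (ν : ι → ℕ) (i j : ι) : ι → ℕ :=
  Function.update (Function.update ν i (ν i + 1)) j (ν j - 1)

omit [Fintype ι] in
lemma moveUnit_left (ν : ι → ℕ) {i j : ι} (hij : i ≠ j) : moveUnit ν i j i = ν i + 1 := by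
  simp [moveUnit, hij]

omit [Fintype ι] in
lemma moveUnit_right (ν : ι → ℕ) (i j : ι) : moveUnit ν i j j = ν j - 1 := by
  simp [moveUnit]

lemma sqNorm_lt_sqNorm_moveUnit {ν : ι → ℕ} {i j : ι} (hij : i ≠ j) (hj : ν j ≠ 0)
    (h : ν j ≤ ν i) : sqNorm ν < sqNorm (moveUnit ν i j) := by
  have split (μ : ι → ℕ) :
      sqNorm μ = μ i ^ 2 + (μ j ^ 2 + ∑ k ∈ (univ.erase i).erase j, μ k ^ 2) := by
    rw [add_sum_erase _ (μ · ^ 2) (mem_erase.2 ⟨hij.symm, mem_univ j⟩),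
      add_sum_erase _ (μ · ^ 2) (mem_univ i), sqNorm]
  have rest : ∑ k ∈ (univ.erase i).erase j, moveUnit ν i j k ^ 2 =
      ∑ k ∈ (univ.erase i).erase j, ν k ^ 2 := by
    refine sum_congr rfl fun k hk => ?_
    have hk' := mem_erase.1 hk
    rw [moveUnit, Function.update_of_ne hk'.1, Function.update_of_ne (ne_of_mem_erase hk'.2)]
  rw [split, split, rest, moveUnit_left ν hij, moveUnit_right]
  obtain ⟨m, hm⟩ := Nat.exists_eq_succ_of_ne_zero hj
  rw [hm] at h ⊢
  simp only [Nat.succ_eq_add_one, Nat.add_sub_cancel]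
  nlinarith

lemma coeffAt_of_X_mul_eq {f g : MvPolynomial ι R} {i j : ι} (h : X i * f = X j * g)
    (hij : i ≠ j) (ν : ι → ℕ) :
    coeffAt ν f = if ν j = 0 then 0 else coeffAt (moveUnit ν i j) g := by
  have key := congrArg (coeffAt (Function.update ν i (ν i + 1))) h
  simpa [coeffAt_X_mul, hij.symm, moveUnit] using key

omit [DecidableEq ι] in
/-- Comparing coefficients moves a unit of exponent from `j` to `i`; repeating this either empties
`ν j` or leaves the ball where `r` may be nonzero. -/
lemma coeffAt_eq_zero_of_X_mul_eq {f r : MvPolynomial ι R} {i j : ι}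
    (h : X i * f = X j * (f + r)) (hij : i ≠ j) {N : ℕ} (hr : r ∈ sqNormLE ι R N)
    (ν : ι → ℕ) (hN : N ≤ sqNorm ν) (hν : ν j ≤ ν i) : coeffAt ν f = 0 := by
  classical
  induction hm : ν j generalizing ν with
  | zero => rw [coeffAt_of_X_mul_eq h hij, if_pos hm]
  | succ m ih =>
    have hj : ν j ≠ 0 := by omega
    have hlt := hN.trans_lt (sqNorm_lt_sqNorm_moveUnit hij hj hν)
    have hi' := moveUnit_left ν hij
    have hj' := moveUnit_right ν i j
    rw [coeffAt_of_X_mul_eq h hij, if_neg hj, map_add, hr _ hlt, add_zero]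
    exact ih _ hlt.le (by omega) (by omega)

end Coefficients

section AdjacentTranspositions

variable {n k : ℕ} (hk : k + 1 < n)

/-- The left position moved by the adjacent transposition `sPerm n k`. -/
def leftIdx : Fin n := ⟨k, Nat.lt_of_succ_lt hk⟩

/-- The right position moved by the adjacent transposition `sPerm n k`. -/
def rightIdx : Fin n := ⟨k + 1, hk⟩

lemma leftIdx_lt_rightIdx : leftIdx hk < rightIdx hk := Nat.lt_succ_self k

lemma sPerm_eq_swap : sPerm n k = Equiv.swap (leftIdx hk) (rightIdx hk) := dif_pos hk

lemma sPerm_leftIdx : sPerm n k (leftIdx hk) = rightIdx hk := by simp [sPerm_eq_swap hk]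

lemma sPerm_rightIdx : sPerm n k (rightIdx hk) = leftIdx hk := by simp [sPerm_eq_swap hk]

lemma sPerm_of_ne {i : Fin n} (hl : (i : ℕ) ≠ k) (hr : (i : ℕ) ≠ k + 1) : sPerm n k i = i := by
  unfold sPerm
  split_ifs
  · exact Equiv.swap_apply_of_ne_of_ne (fun h => hl (by simp [h])) fun h => hr (by simp [h])
  · rfl

lemma sPerm_mul_self (n k : ℕ) : sPerm n k * sPerm n k = 1 := by
  unfold sPerm
  split_ifs
  · exact Equiv.swap_mul_self _ _
  · exact one_mul 1

lemma sPerm_apply_sPerm (n k : ℕ) (i : Fin n) : sPerm n k (sPerm n k i) = i := by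
  rw [← Equiv.Perm.mul_apply, sPerm_mul_self, Equiv.Perm.one_apply]

lemma sPerm_inv (n k : ℕ) : (sPerm n k)⁻¹ = sPerm n k :=
  inv_eq_of_mul_eq_one_right (sPerm_mul_self n k)

lemma sOp_eq_rename (n k : ℕ) (f : P n) : sOp n k f = rename (sPerm n k) f := by
  unfold sOp sPerm
  split_ifs
  · rfl
  · simp

end AdjacentTranspositions

section DemazureLustig

variable {n k : ℕ} {tv : K} {T : ℕ → P n →ₗ[K] P n}

lemma IsDL.sub_mul_apply (hT : IsDL n tv T) (hk : k + 1 < n) (f : P n) :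
    (X (leftIdx hk) - X (rightIdx hk)) * T k f =
      (C tv * X (leftIdx hk) - X (rightIdx hk)) * rename (sPerm n k) f +
        (1 - C tv) * X (rightIdx hk) * f := by
  have h := hT k hk f
  rw [sOp_eq_rename] at h
  simp only [leftIdx, rightIdx]
  linear_combination h

lemma IsDL.coeffAt_apply_of_le (hT : IsDL n tv T) (hk : k + 1 < n) {f : P n} {ν : Fin n → ℕ}
    (hf : f ∈ sqNormLE (Fin n) K (sqNorm ν)) (hν : ν (rightIdx hk) ≤ ν (leftIdx hk)) :
    coeffAt ν (T k f) = tv * coeffAt (ν ∘ sPerm n k) f := by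
  have key : X (leftIdx hk) * (T k f - tv • rename (sPerm n k) f) =
      X (rightIdx hk) * (T k f - tv • rename (sPerm n k) f +
        ((tv - 1) • rename (sPerm n k) f + (1 - tv) • f)) := by
    have h := hT.sub_mul_apply hk f
    simp only [smul_eq_C_mul, map_sub, map_one]
    linear_combination h
  have hr := add_mem (Submodule.smul_mem _ (tv - 1) (rename_mem_sqNormLE hf (sPerm n k)))
    (Submodule.smul_mem _ (1 - tv) hf)
  have h0 := coeffAt_eq_zero_of_X_mul_eq key (leftIdx_lt_rightIdx hk).ne hr ν le_rfl hν
  rwa [map_sub, map_smul, coeffAt_rename, sub_eq_zero, smul_eq_mul] at h0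

lemma IsDL.coeffAt_apply_of_ge (hT : IsDL n tv T) (hk : k + 1 < n) {f : P n} {ν : Fin n → ℕ}
    (hf : f ∈ sqNormLE (Fin n) K (sqNorm ν)) (hν : ν (leftIdx hk) ≤ ν (rightIdx hk)) :
    coeffAt ν (T k f) = coeffAt (ν ∘ sPerm n k) f + (tv - 1) * coeffAt ν f := by
  have key : X (rightIdx hk) * (T k f - rename (sPerm n k) f - (tv - 1) • f) =
      X (leftIdx hk) * (T k f - rename (sPerm n k) f - (tv - 1) • f +
        ((1 - tv) • rename (sPerm n k) f + (tv - 1) • f)) := by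
    have h := hT.sub_mul_apply hk f
    simp only [smul_eq_C_mul, map_sub, map_one]
    linear_combination -h
  have hr := add_mem (Submodule.smul_mem _ (1 - tv) (rename_mem_sqNormLE hf (sPerm n k)))
    (Submodule.smul_mem _ (tv - 1) hf)
  have h0 := coeffAt_eq_zero_of_X_mul_eq key (leftIdx_lt_rightIdx hk).ne' hr ν le_rfl hν
  rwa [sub_sub, map_sub, map_add, map_smul, coeffAt_rename, sub_eq_zero, smul_eq_mul] at h0

lemma IsDL.apply_mem_sqNormLE (hT : IsDL n tv T) (hk : k + 1 < n) {f : P n} {N : ℕ}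
    (hf : f ∈ sqNormLE (Fin n) K N) : T k f ∈ sqNormLE (Fin n) K N := fun ν hν => by
  have hf' : f ∈ sqNormLE (Fin n) K (sqNorm ν) := fun μ hμ => hf μ (hν.trans hμ)
  have hs : coeffAt (ν ∘ sPerm n k) f = 0 := hf _ (by rwa [sqNorm_comp_perm])
  rcases le_total (ν (rightIdx hk)) (ν (leftIdx hk)) with h | h
  · rw [hT.coeffAt_apply_of_le hk hf' h, hs, mul_zero]
  · rw [hT.coeffAt_apply_of_ge hk hf' h, hs, hf ν hν, mul_zero, add_zero]

lemma Tinv_apply (tv : K) (k : ℕ) (f : P n) :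
    Tinv n tv T k f = tv⁻¹ • T k f + (tv⁻¹ - 1) • f := by
  simp only [Tinv, LinearMap.add_apply, LinearMap.sub_apply, LinearMap.smul_apply,
    LinearMap.id_apply, sub_smul, one_smul]
  abel

lemma IsDL.Tinv_mem_sqNormLE (hT : IsDL n tv T) (hk : k + 1 < n) {f : P n} {N : ℕ}
    (hf : f ∈ sqNormLE (Fin n) K N) : Tinv n tv T k f ∈ sqNormLE (Fin n) K N := by
  rw [Tinv_apply]
  exact add_mem (Submodule.smul_mem _ _ (hT.apply_mem_sqNormLE hk hf)) (Submodule.smul_mem _ _ hf)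

lemma IsDL.coeffAt_Tinv_of_le (hT : IsDL n tv T) (htv : tv ≠ 0) (hk : k + 1 < n) {f : P n}
    {ν : Fin n → ℕ} (hf : f ∈ sqNormLE (Fin n) K (sqNorm ν))
    (hν : ν (rightIdx hk) ≤ ν (leftIdx hk)) :
    coeffAt ν (Tinv n tv T k f) =
      coeffAt (ν ∘ sPerm n k) f + (tv⁻¹ - 1) * coeffAt ν f := by
  rw [Tinv_apply, map_add, map_smul, map_smul, hT.coeffAt_apply_of_le hk hf hν, smul_eq_mul,
    smul_eq_mul, inv_mul_cancel_left₀ htv]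

lemma IsDL.coeffAt_Tinv_of_ge (hT : IsDL n tv T) (htv : tv ≠ 0) (hk : k + 1 < n) {f : P n}
    {ν : Fin n → ℕ} (hf : f ∈ sqNormLE (Fin n) K (sqNorm ν))
    (hν : ν (leftIdx hk) ≤ ν (rightIdx hk)) :
    coeffAt ν (Tinv n tv T k f) = tv⁻¹ * coeffAt (ν ∘ sPerm n k) f := by
  rw [Tinv_apply, map_add, map_smul, map_smul, hT.coeffAt_apply_of_ge hk hf hν, smul_eq_mul,
    smul_eq_mul]
  linear_combination coeffAt ν f * inv_mul_cancel₀ htv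

end DemazureLustig

section HeckeRelations

variable {n : ℕ}

lemma X_sub_X_ne_zero {ι R : Type*} [CommRing R] [Nontrivial R] {i j : ι} (h : i ≠ j) :
    (X i - X j : MvPolynomial ι R) ≠ 0 :=
  sub_ne_zero.2 fun h' => h (X_injective h')

/-- The polynomial `f` with its variables permuted by `σ`, in the field of rational functions,
where Demazure–Lustig operators become explicit formulas. -/
noncomputable def permFrac (σ : Equiv.Perm (Fin n)) (f : P n) : FractionRing (P n) :=
  algebraMap (P n) (FractionRing (P n)) (rename σ f)

/-- The Demazure–Lustig operator with parameter `u` in the variables `x` and `y`, evaluated on a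
function with value `f` whose image under the exchange of `x` and `y` has value `g`. -/
def dlStep {F : Type*} [Field F] (u x y f g : F) : F := u * f + (u * x - y) / (x - y) * (g - f)

lemma permFrac_one_injective : Function.Injective (permFrac (1 : Equiv.Perm (Fin n))) :=
  fun f g h => by
    have h' := IsFractionRing.injective (P n) (FractionRing (P n)) h
    simpa only [Equiv.Perm.coe_one, rename_id_apply] using h'

/-- The variable `x_i` in the field of rational functions. -/
noncomputable def varFrac (i : Fin n) : FractionRing (P n) :=
  algebraMap (P n) (FractionRing (P n)) (X i)

lemma varFrac_sub_varFrac_ne_zero {i j : Fin n} (h : i ≠ j) :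
    varFrac i - varFrac j ≠ (0 : FractionRing (P n)) := by
  rw [varFrac, varFrac, ← map_sub, Ne, IsFractionRing.to_map_eq_zero_iff]
  exact X_sub_X_ne_zero h

variable {tv : K} {T : ℕ → P n →ₗ[K] P n} {k l : ℕ}

lemma IsDL.permFrac_apply (hT : IsDL n tv T) (hk : k + 1 < n) (σ : Equiv.Perm (Fin n)) (f : P n) :
    permFrac σ (T k f) =
      dlStep (algebraMap (P n) _ (C tv)) (varFrac (σ (leftIdx hk))) (varFrac (σ (rightIdx hk)))
        (permFrac σ f) (permFrac (σ * sPerm n k) f) := by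
  have hne := varFrac_sub_varFrac_ne_zero (σ.injective.ne (leftIdx_lt_rightIdx hk).ne)
  have h := congrArg (permFrac σ) (hT.sub_mul_apply hk f)
  simp only [permFrac, map_add, map_mul, map_sub, map_one, rename_X, rename_C, rename_rename] at h
  change _ = (_ * varFrac _ - varFrac _) * permFrac (σ * sPerm n k) f + _ at h
  rw [dlStep, ← mul_right_inj' hne]
  simp only [permFrac, varFrac] at h hne ⊢
  field_simp
  linear_combination h

lemma IsDL.apply_apply (hT : IsDL n tv T) (hk : k + 1 < n) (f : P n) :
    T k (T k f) = (tv - 1) • T k f + tv • f := by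
  apply permFrac_one_injective
  have h₁ := varFrac_sub_varFrac_ne_zero (leftIdx_lt_rightIdx hk).ne
  have h₂ := varFrac_sub_varFrac_ne_zero (leftIdx_lt_rightIdx hk).ne'
  have hlin : permFrac 1 ((tv - 1) • T k f + tv • f) =
      (algebraMap (P n) _ (C tv) - 1) * permFrac 1 (T k f) +
        algebraMap (P n) _ (C tv) * permFrac 1 f := by
    simp only [permFrac, smul_eq_C_mul, map_add, map_mul, map_sub, map_one, rename_C]
  simp only [hlin, hT.permFrac_apply hk, one_mul, sPerm_mul_self, sPerm_leftIdx, sPerm_rightIdx,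
    Equiv.Perm.one_apply, dlStep]
  field_simp
  ring

lemma IsDL.Tinv_apply_apply (hT : IsDL n tv T) (htv : tv ≠ 0) (hk : k + 1 < n) (f : P n) :
    Tinv n tv T k (T k f) = f := by
  rw [Tinv_apply, hT.apply_apply hk, smul_add, smul_smul, smul_smul, inv_mul_cancel₀ htv, mul_sub,
    inv_mul_cancel₀ htv, add_right_comm, ← add_smul, one_smul]
  simp

lemma IsDL.apply_Tinv_apply (hT : IsDL n tv T) (htv : tv ≠ 0) (hk : k + 1 < n) (f : P n) :
    T k (Tinv n tv T k f) = f := by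
  rw [Tinv_apply, map_add, map_smul, map_smul, ← Tinv_apply, hT.Tinv_apply_apply htv hk]

lemma sPerm_commute (n : ℕ) (hkl : k + 1 < l) : Commute (sPerm n k) (sPerm n l) := by
  refine Equiv.Perm.Disjoint.commute fun i => ?_
  by_cases hi : (i : ℕ) = k ∨ (i : ℕ) = k + 1
  · exact Or.inr (sPerm_of_ne (by omega) (by omega))
  · exact Or.inl (sPerm_of_ne (by omega) (by omega))

lemma sPerm_braid (hk : k + 1 + 1 < n) :
    sPerm n k * sPerm n (k + 1) * sPerm n k = sPerm n (k + 1) * sPerm n k * sPerm n (k + 1) := by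
  have hab : leftIdx (Nat.lt_of_succ_lt hk) ≠ leftIdx hk :=
    (leftIdx_lt_rightIdx (Nat.lt_of_succ_lt hk)).ne
  have hbc := (leftIdx_lt_rightIdx hk).ne
  have hac : leftIdx (Nat.lt_of_succ_lt hk) ≠ rightIdx hk :=
    ((leftIdx_lt_rightIdx (Nat.lt_of_succ_lt hk)).trans (leftIdx_lt_rightIdx hk)).ne
  have hs : sPerm n k = Equiv.swap (leftIdx (Nat.lt_of_succ_lt hk)) (leftIdx hk) :=
    sPerm_eq_swap (Nat.lt_of_succ_lt hk)
  rw [hs, sPerm_eq_swap hk, Equiv.swap_mul_swap_mul_swap hab hac,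
    Equiv.swap_comm _ (leftIdx hk), Equiv.swap_comm _ (rightIdx hk),
    Equiv.swap_mul_swap_mul_swap hbc.symm hac.symm, Equiv.swap_comm]

lemma IsDL.commute (hT : IsDL n tv T) (hkl : k + 1 < l) (hl : l + 1 < n) :
    Commute (T k) (T l) := by
  have hk : k + 1 < n := by omega
  refine LinearMap.ext fun f => permFrac_one_injective ?_
  have h₁ := varFrac_sub_varFrac_ne_zero (leftIdx_lt_rightIdx hk).ne
  have h₂ := varFrac_sub_varFrac_ne_zero (leftIdx_lt_rightIdx hl).ne
  have fix {a b : ℕ} (ha : a ≠ b) (ha' : a ≠ b + 1) (h : a < n) : sPerm n b ⟨a, h⟩ = ⟨a, h⟩ :=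
    sPerm_of_ne ha ha'
  simp only [Module.End.mul_apply, hT.permFrac_apply hk, hT.permFrac_apply hl, one_mul,
    Equiv.Perm.one_apply, dlStep, (sPerm_commute n hkl).eq]
  simp only [leftIdx, rightIdx] at h₁ h₂ ⊢
  rw [fix (by omega) (by omega), fix (by omega) (by omega), fix (by omega) (by omega),
    fix (by omega) (by omega)]
  field_simp
  ring

/-- The rational functions `(u x - y) / (x - y)`, `(u y - z) / (y - z)` and `(u x - z) / (x - z)`
satisfy one relation, and both sides differ by a multiple of it. -/
lemma dlStep_braid {F : Type*} [Field F] (u : F) {x y z : F} (hxy : x - y ≠ 0) (hyz : y - z ≠ 0)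
    (hxz : x - z ≠ 0) (f f₁ f₂ f₁₂ f₂₁ f₁₂₁ : F) :
    dlStep u x y (dlStep u y z (dlStep u x y f f₁) (dlStep u x z f₂ f₂₁))
      (dlStep u x z (dlStep u y x f₁ f) (dlStep u y z f₁₂ f₁₂₁)) =
    dlStep u y z (dlStep u x y (dlStep u y z f f₂) (dlStep u x z f₁ f₁₂))
      (dlStep u x z (dlStep u z y f₂ f) (dlStep u x y f₂₁ f₁₂₁)) := by
  have swap_ratio {v w : F} (h : v - w ≠ 0) :
      (u * w - v) / (w - v) = u + 1 - (u * v - w) / (v - w) := by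
    have h' : w - v ≠ 0 := fun h0 => h (by linear_combination -h0)
    field_simp
    ring
  have key : (u * x - z) / (x - z) * ((u * x - y) / (x - y) + (u * y - z) / (y - z) - (u + 1)) =
      (u * x - y) / (x - y) * ((u * y - z) / (y - z)) - u := by
    field_simp
    ring
  simp only [dlStep, swap_ratio hxy, swap_ratio hyz]
  linear_combination (f * ((u * x - y) / (x - y) - (u * y - z) / (y - z)) -
    (u * x - y) / (x - y) * f₁ + (u * y - z) / (y - z) * f₂) * key

lemma IsDL.braid (hT : IsDL n tv T) (hk : k + 1 + 1 < n) :
    T k * T (k + 1) * T k = T (k + 1) * T k * T (k + 1) := by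
  refine LinearMap.ext fun f => permFrac_one_injective ?_
  have hk' : k + 1 < n := Nat.lt_of_succ_lt hk
  have hab := (leftIdx_lt_rightIdx hk').ne
  have hbc := (leftIdx_lt_rightIdx hk).ne
  have hac : leftIdx hk' ≠ rightIdx hk :=
    ((leftIdx_lt_rightIdx hk').trans (leftIdx_lt_rightIdx hk)).ne
  have hmid : rightIdx hk' = leftIdx hk := rfl
  have hmid' : sPerm n k (leftIdx hk) = leftIdx hk' := sPerm_rightIdx hk'
  have hlast : sPerm n k (rightIdx hk) = rightIdx hk :=
    sPerm_of_ne (by simp [rightIdx]; omega) (by simp [rightIdx])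
  have hfirst : sPerm n (k + 1) (leftIdx hk') = leftIdx hk' :=
    sPerm_of_ne (by simp [leftIdx]) (by simp [leftIdx]; omega)
  simp only [Module.End.mul_apply, hT.permFrac_apply hk, hT.permFrac_apply hk', one_mul,
    Equiv.Perm.mul_apply, Equiv.Perm.one_apply, sPerm_mul_self, sPerm_leftIdx, sPerm_rightIdx, hmid,
    hmid', hlast, hfirst, sPerm_braid hk]
  exact dlStep_braid _ (varFrac_sub_varFrac_ne_zero hab) (varFrac_sub_varFrac_ne_zero hbc)
    (varFrac_sub_varFrac_ne_zero hac) _ _ _ _ _ _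

end HeckeRelations

section BraidRelations

variable {M : Type*} [Monoid M] {N a m k : ℕ} {g g' : ℕ → M}

/-- The relations of the braid group generators for `g 0, …, g (N - 1)`; the remaining values of
`g` are unconstrained. -/
structure IsBraidFamily (N : ℕ) (g : ℕ → M) : Prop where
  commute : ∀ {k l}, k + 1 < l → l < N → Commute (g k) (g l)
  braid : ∀ {k}, k + 1 < N → g k * g (k + 1) * g k = g (k + 1) * g k * g (k + 1)

/-- The product `g a * g (a + 1) * ⋯ * g (a + m - 1)`. -/
def ascProd (g : ℕ → M) (a m : ℕ) : M := ((List.range' a m).map g).prod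

lemma ascProd_zero (g : ℕ → M) (a : ℕ) : ascProd g a 0 = 1 := rfl

lemma ascProd_succ (g : ℕ → M) (a m : ℕ) :
    ascProd g a (m + 1) = g a * ascProd g (a + 1) m := by
  simp [ascProd, List.range'_succ]

lemma ascProd_mul_ascProd (g : ℕ → M) (a m p : ℕ) :
    ascProd g a m * ascProd g (a + m) p = ascProd g a (m + p) := by
  rw [ascProd, ascProd, ascProd, ← List.prod_append, ← List.map_append, List.range'_append_1]

lemma ascProd_succ' (g : ℕ → M) (a m : ℕ) :
    ascProd g a (m + 1) = ascProd g a m * g (a + m) := by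
  rw [← ascProd_mul_ascProd, ascProd_succ _ _ 0, ascProd_zero, mul_one]

lemma commute_ascProd {x : M} (h : ∀ j, a ≤ j → j < a + m → Commute x (g j)) :
    Commute x (ascProd g a m) :=
  Commute.list_prod_right _ _ fun y hy => by
    obtain ⟨j, hj, rfl⟩ := List.mem_map.1 hy
    have hj' := List.mem_range'_1.1 hj
    exact h j hj'.1 hj'.2

lemma IsBraidFamily.mul_ascProd (hg : IsBraidFamily N g) (hak : a ≤ k) (hkm : k + 1 < a + m)
    (hN : a + m ≤ N) : g (k + 1) * ascProd g a m = ascProd g a m * g k := by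
  obtain ⟨p, rfl⟩ := Nat.exists_eq_add_of_le hak
  obtain ⟨r, rfl⟩ : ∃ r, m = p + 1 + r + 1 := ⟨m - p - 2, by omega⟩
  have hsplit : ascProd g a (p + 1 + r + 1) =
      ascProd g a p * (g (a + p) * g (a + p + 1) * ascProd g (a + p + 2) r) := by
    rw [show p + 1 + r + 1 = p + (r + 1 + 1) by ring, ← ascProd_mul_ascProd, ascProd_succ,
      ascProd_succ, mul_assoc]
  have hleft : Commute (g (a + p + 1)) (ascProd g a p) :=
    commute_ascProd fun j _ hj => (hg.commute (by omega) (by omega)).symm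
  have hright : Commute (g (a + p)) (ascProd g (a + p + 2) r) :=
    commute_ascProd fun j hj hj' => hg.commute (by omega) (by omega)
  calc g (a + p + 1) * ascProd g a (p + 1 + r + 1)
      = ascProd g a p * (g (a + p + 1) * g (a + p) * g (a + p + 1)) *
          ascProd g (a + p + 2) r := by
        rw [hsplit, ← mul_assoc, hleft.eq]
        simp only [mul_assoc]
    _ = ascProd g a p * (g (a + p) * g (a + p + 1)) *
          (g (a + p) * ascProd g (a + p + 2) r) := by
        rw [← hg.braid (by omega)]
        simp only [mul_assoc]
    _ = ascProd g a (p + 1 + r + 1) * g (a + p) := by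
        rw [hright.eq, hsplit]
        simp only [mul_assoc]

lemma commute_of_inverse {x y y' : M} (hr : y * y' = 1) (hl : y' * y = 1) (h : Commute x y) :
    Commute x y' := by
  rw [commute_iff_eq]
  calc x * y' = y' * (y * x) * y' := by rw [← mul_assoc, hl, one_mul]
    _ = y' * x := by rw [← h.eq, mul_assoc, mul_assoc, hr, mul_one]

lemma IsBraidFamily.of_inverse (hg : IsBraidFamily N g) (hr : ∀ k < N, g k * g' k = 1)
    (hl : ∀ k < N, g' k * g k = 1) : IsBraidFamily N g' where
  commute {k l} hkl hlN :=
    commute_of_inverse (hr l hlN) (hl l hlN) (commute_of_inverse (hr k (by omega))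
      (hl k (by omega)) (hg.commute hkl hlN).symm).symm
  braid {k} hk := by
    have cancel {x y x' y' : M} (hx : x' * x = 1) (hy : y' * y = 1) :
        x' * y' * x' * (x * y * x) = 1 := by
      calc x' * y' * x' * (x * y * x) = x' * (y' * (x' * x) * y) * x := by simp only [mul_assoc]
        _ = 1 := by rw [hx, mul_one, hy, mul_one, hx]
    have hk₀ := Nat.lt_of_succ_lt hk
    refine left_inv_eq_right_inv (cancel (hl k hk₀) (hl _ hk)) ?_
    rw [hg.braid hk]
    exact cancel (hr _ hk) (hr k hk₀)

end BraidRelations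

section Cherednik

variable {n k a m : ℕ} {qv tv : K} {T : ℕ → P n →ₗ[K] P n}

lemma isBraidFamily_sPerm (n : ℕ) : IsBraidFamily (n - 1) (sPerm n) where
  commute hkl _ := sPerm_commute n hkl
  braid hk := sPerm_braid (by omega)

lemma IsDL.isBraidFamily (hT : IsDL n tv T) : IsBraidFamily (n - 1) T where
  commute hkl hl := hT.commute hkl (by omega)
  braid hk := hT.braid (by omega)

lemma IsDL.mul_Tinv (hT : IsDL n tv T) (htv : tv ≠ 0) (hk : k + 1 < n) :
    T k * Tinv n tv T k = 1 :=
  LinearMap.ext fun f => by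
    rw [Module.End.mul_apply, hT.apply_Tinv_apply htv hk, Module.End.one_apply]

lemma IsDL.Tinv_mul (hT : IsDL n tv T) (htv : tv ≠ 0) (hk : k + 1 < n) :
    Tinv n tv T k * T k = 1 :=
  LinearMap.ext fun f => by
    rw [Module.End.mul_apply, hT.Tinv_apply_apply htv hk, Module.End.one_apply]

lemma IsDL.isBraidFamily_Tinv (hT : IsDL n tv T) (htv : tv ≠ 0) :
    IsBraidFamily (n - 1) (Tinv n tv T) :=
  hT.isBraidFamily.of_inverse (fun _ hk => hT.mul_Tinv htv (by omega))
    fun _ hk => hT.Tinv_mul htv (by omega)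

lemma ascProd_sPerm_val (h : a + m < n) (i : Fin n) :
    (ascProd (sPerm n) a m i : ℕ) =
      if (i : ℕ) = a + m then a else if a ≤ i ∧ (i : ℕ) < a + m then (i : ℕ) + 1 else i := by
  induction m generalizing i with
  | zero =>
    rw [ascProd_zero, Equiv.Perm.one_apply]
    split_ifs <;> omega
  | succ m ih =>
    rw [ascProd_succ', Equiv.Perm.mul_apply, ih (by omega)]
    by_cases hl : i = leftIdx (k := a + m) h
    · rw [hl, sPerm_leftIdx]
      simp [leftIdx, rightIdx, add_assoc]
    by_cases hr : i = rightIdx (k := a + m) h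
    · rw [hr, sPerm_rightIdx]
      simp [leftIdx, rightIdx, add_assoc]
    have hl' : (i : ℕ) ≠ a + m := fun h' => hl (Fin.ext h')
    have hr' : (i : ℕ) ≠ a + m + 1 := fun h' => hr (Fin.ext h')
    rw [sPerm_of_ne hl' hr']
    split_ifs <;> omega

lemma ascProd_sPerm_of_eq {i j : Fin n} (hi : (i : ℕ) = a + m) (hj : (j : ℕ) = a) :
    ascProd (sPerm n) a m i = j :=
  Fin.ext (by rw [ascProd_sPerm_val (by omega), if_pos hi, hj])

lemma ascProd_sPerm_of_lt {i j : Fin n} (h : a + m < n) (hi : a ≤ i) (hi' : (i : ℕ) < a + m)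
    (hj : (j : ℕ) = i + 1) : ascProd (sPerm n) a m i = j :=
  Fin.ext (by rw [ascProd_sPerm_val h, if_neg hi'.ne, if_pos ⟨hi, hi'⟩, hj])

lemma tauOp_X (qv : K) (i : Fin n) :
    tauOp n qv (X i) = C (if (i : ℕ) = 0 then qv else 1) * X i := by
  rw [tauOp, AlgHom.toLinearMap_apply, aeval_X]
  split_ifs <;> simp

lemma tauOp_mul (qv : K) (f g : P n) : tauOp n qv (f * g) = tauOp n qv f * tauOp n qv g :=
  map_mul (aeval _) f g

lemma coeffAt_tauOp (qv : K) (ν : Fin n → ℕ) {i : Fin n} (hi : (i : ℕ) = 0) (f : P n) :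
    coeffAt ν (tauOp n qv f) = qv ^ ν i * coeffAt ν f := by
  induction f using MvPolynomial.induction_on generalizing ν with
  | C c =>
    have h : tauOp n qv (C c) = C c := by
      rw [tauOp, AlgHom.toLinearMap_apply, aeval_C, algebraMap_eq]
    rw [h, coeffAt_apply, coeff_C]
    split_ifs with hν
    · have h0 : ν i = 0 := by simpa using (DFunLike.congr_fun hν i).symm
      rw [h0, pow_zero, one_mul]
    · rw [mul_zero]
  | add f g hf hg => rw [map_add, map_add, map_add, hf, hg, mul_add]
  | mul_X f j hf =>
    rw [mul_comm, tauOp_mul, tauOp_X, mul_assoc, ← smul_eq_C_mul, map_smul, coeffAt_X_mul,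
      coeffAt_X_mul, smul_eq_mul]
    split_ifs with hj hν hν
    · simp
    · obtain rfl : j = i := Fin.ext (hj.trans hi.symm)
      rw [hf, Function.update_self, ← mul_assoc, mul_pow_sub_one hν]
    · simp
    · have hij : i ≠ j := fun h => hj (h ▸ hi)
      rw [hf, Function.update_of_ne hij, one_mul]

lemma omegaOp_apply (qv : K) (f : P n) :
    omegaOp n qv f =
      rename (⇑(ascProd (sPerm n) 0 (n - 1))⁻¹) (tauOp n qv f) := by
  unfold omegaOp
  induction n - 1 with
  | zero => simp [ascProd_zero]
  | succ m ih =>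
    rw [List.range_succ, List.foldl_append, List.foldl_cons, List.foldl_nil, LinearMap.comp_apply,
      ih, sOp_eq_rename, rename_rename, ascProd_succ', mul_inv_rev, sPerm_inv, zero_add]
    rfl

lemma omegaOp_mul (qv : K) (f g : P n) :
    omegaOp n qv (f * g) = omegaOp n qv f * omegaOp n qv g := by
  simp only [omegaOp_apply, tauOp_mul, map_mul]

lemma omegaOp_C (qv c : K) : omegaOp n qv (C c) = C c := by
  rw [omegaOp_apply, tauOp, AlgHom.toLinearMap_apply, aeval_C, algebraMap_eq, rename_C]

lemma omegaOp_X (qv : K) {i j : Fin n} (h : (i : ℕ) = j + 1) : omegaOp n qv (X i) = X j := by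
  have hc : ascProd (sPerm n) 0 (n - 1) j = i :=
    ascProd_sPerm_of_lt (by omega) (Nat.zero_le _) (by omega) h
  rw [omegaOp_apply, tauOp_X, if_neg (by omega), C_1, one_mul, rename_X,
    Equiv.Perm.inv_eq_iff_eq.2 hc.symm]

lemma tauOp_rename_sPerm_succ (qv : K) (k : ℕ) (f : P n) :
    tauOp n qv (rename (sPerm n (k + 1)) f) = rename (sPerm n (k + 1)) (tauOp n qv f) := by
  rcases Nat.eq_zero_or_pos n with rfl | hn
  · simp [Subsingleton.elim (sPerm 0 (k + 1)) 1]
  refine ext_coeffAt fun ν => ?_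
  have h0 : sPerm n (k + 1) ⟨0, hn⟩ = ⟨0, hn⟩ := sPerm_of_ne (by simp) (by simp)
  rw [coeffAt_rename, coeffAt_tauOp qv _ (i := ⟨0, hn⟩) rfl, coeffAt_tauOp qv _ (i := ⟨0, hn⟩) rfl,
    coeffAt_rename, Function.comp_apply, h0]

lemma omegaOp_rename_sPerm_succ (qv : K) (hk : k + 1 + 1 < n) (f : P n) :
    omegaOp n qv (rename (sPerm n (k + 1)) f) = rename (sPerm n k) (omegaOp n qv f) := by
  have h := (isBraidFamily_sPerm n).mul_ascProd (a := 0) (m := n - 1) (Nat.zero_le k) (by omega)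
    (by omega)
  have h' : (ascProd (sPerm n) 0 (n - 1))⁻¹ * sPerm n (k + 1) =
      sPerm n k * (ascProd (sPerm n) 0 (n - 1))⁻¹ := by
    rw [inv_mul_eq_iff_eq_mul, ← mul_assoc, eq_mul_inv_iff_mul_eq, h]
  rw [omegaOp_apply, omegaOp_apply, tauOp_rename_sPerm_succ, rename_rename, rename_rename,
    ← Equiv.Perm.coe_mul, ← Equiv.Perm.coe_mul, h']

lemma IsDL.apply_omegaOp (hT : IsDL n tv T) (hk : k + 1 + 1 < n) (f : P n) :
    T k (omegaOp n qv f) = omegaOp n qv (T (k + 1) f) := by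
  have hk' := Nat.lt_of_succ_lt hk
  have hl : omegaOp n qv (X (leftIdx hk)) = X (leftIdx hk') := omegaOp_X qv rfl
  have hr : omegaOp n qv (X (rightIdx hk)) = X (rightIdx hk') := omegaOp_X qv rfl
  have h₁ : omegaOp n qv 1 = 1 := by rw [← C_1, omegaOp_C]
  have h := congrArg (omegaOp n qv) (hT.sub_mul_apply hk f)
  simp only [omegaOp_mul, map_add, map_sub, omegaOp_C, hl, hr, h₁,
    omegaOp_rename_sPerm_succ qv hk] at h
  refine mul_left_cancel₀ (X_sub_X_ne_zero (leftIdx_lt_rightIdx hk').ne) ?_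
  rw [hT.sub_mul_apply hk', h]

end Cherednik

section CherednikRelations

variable {n k : ℕ} {qv tv : K} {T : ℕ → P n →ₗ[K] P n}

lemma foldr_range'_eq_ascProd (g : ℕ → P n →ₗ[K] P n) (a m : ℕ) :
    (List.range' a m).foldr (fun k acc => g k ∘ₗ acc) LinearMap.id = ascProd g a m := by
  rw [ascProd, List.prod, List.foldr_map]
  rfl

lemma Yop_eq (qv tv : K) (T : ℕ → P n →ₗ[K] P n) (i : Fin n) :
    Yop n qv tv T i = (tv ^ (n - 1 - (i : ℕ)))⁻¹ •
      (ascProd T i (n - 1 - i) * omegaOp n qv * ascProd (Tinv n tv T) 0 i) := by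
  rw [Yop, List.range_eq_range', foldr_range'_eq_ascProd, foldr_range'_eq_ascProd]
  rfl

lemma IsDL.mul_Yop_mul (hT : IsDL n tv T) (htv : tv ≠ 0) (hk : k + 1 < n) :
    T k * Yop n qv tv T (rightIdx hk) * T k = tv • Yop n qv tv T (leftIdx hk) := by
  have hA : ascProd T k (n - 1 - k) = T k * ascProd T (k + 1) (n - 1 - (k + 1)) := by
    rw [show n - 1 - k = n - 1 - (k + 1) + 1 by omega, ascProd_succ]
  have hB : ascProd (Tinv n tv T) 0 (k + 1) * T k = ascProd (Tinv n tv T) 0 k := by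
    rw [ascProd_succ', zero_add, mul_assoc, hT.Tinv_mul htv hk, mul_one]
  have hpow : tv * (tv ^ (n - 1 - k))⁻¹ = (tv ^ (n - 1 - (k + 1)))⁻¹ := by
    rw [show n - 1 - k = n - 1 - (k + 1) + 1 by omega, pow_succ', mul_inv, mul_inv_cancel_left₀ htv]
  rw [Yop_eq, Yop_eq, smul_smul]
  simp only [leftIdx, rightIdx]
  rw [hpow, hA, mul_smul_comm, smul_mul_assoc, ← hB]
  simp only [mul_assoc]

lemma IsDL.mul_omegaOp (hT : IsDL n tv T) (hk : k + 1 + 1 < n) :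
    T k * omegaOp n qv = omegaOp n qv * T (k + 1) :=
  LinearMap.ext fun f => hT.apply_omegaOp hk f

lemma IsDL.commute_Tinv (hT : IsDL n tv T) (htv : tv ≠ 0) {j : ℕ} (hk : k + 1 < n)
    (hjk : j + 1 < k) : Commute (T k) (Tinv n tv T j) :=
  commute_of_inverse (hT.mul_Tinv htv (by omega)) (hT.Tinv_mul htv (by omega))
    (hT.commute hjk hk).symm

lemma IsDL.mul_ascProd_Tinv (hT : IsDL n tv T) (htv : tv ≠ 0) {i : ℕ} (hki : k + 1 < i)
    (hi : i < n) :
    T (k + 1) * ascProd (Tinv n tv T) 0 i = ascProd (Tinv n tv T) 0 i * T k := by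
  have h := (hT.isBraidFamily_Tinv htv).mul_ascProd (Nat.zero_le k) (m := i) (by omega) (by omega)
  calc T (k + 1) * ascProd (Tinv n tv T) 0 i
      = T (k + 1) * (ascProd (Tinv n tv T) 0 i * Tinv n tv T k) * T k := by
        rw [mul_assoc, mul_assoc, hT.Tinv_mul htv (by omega), mul_one]
    _ = ascProd (Tinv n tv T) 0 i * T k := by
        rw [← h, ← mul_assoc, hT.mul_Tinv htv (by omega), one_mul]

lemma IsDL.commute_Yop (hT : IsDL n tv T) (htv : tv ≠ 0) (hk : k + 1 < n) {i : Fin n}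
    (hl : (i : ℕ) ≠ k) (hr : (i : ℕ) ≠ k + 1) : Commute (T k) (Yop n qv tv T i) := by
  rw [Yop_eq]
  refine Commute.smul_right ?_ _
  rw [commute_iff_eq]
  rcases lt_or_gt_of_ne hl with h | h
  · obtain ⟨j, rfl⟩ : ∃ j, k = j + 1 := ⟨k - 1, by omega⟩
    have hA : T (j + 1) * ascProd T i (n - 1 - i) = ascProd T i (n - 1 - i) * T j :=
      hT.isBraidFamily.mul_ascProd (by omega) (by omega) (by omega)
    have hB : Commute (T (j + 1)) (ascProd (Tinv n tv T) 0 i) :=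
      commute_ascProd fun l _ hl => hT.commute_Tinv htv hk (by omega)
    rw [mul_assoc, ← mul_assoc, hA, mul_assoc, ← mul_assoc (T j), hT.mul_omegaOp hk, mul_assoc,
      hB.eq]
    simp only [mul_assoc]
  · have hA : Commute (T k) (ascProd T i (n - 1 - i)) :=
      commute_ascProd fun l hl hl' => hT.commute (by omega) (by omega)
    rw [mul_assoc, ← mul_assoc, hA.eq, mul_assoc, ← mul_assoc (T k), hT.mul_omegaOp (by omega),
      mul_assoc, hT.mul_ascProd_Tinv htv (by omega) i.isLt]
    simp only [mul_assoc]

lemma IsDL.Yop_leftIdx_apply (hT : IsDL n tv T) (htv : tv ≠ 0) (hk : k + 1 < n) (f : P n) :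
    Yop n qv tv T (leftIdx hk) (T k f) =
      (tv - 1) • Yop n qv tv T (leftIdx hk) f + T k (Yop n qv tv T (rightIdx hk) f) := by
  have h (g : P n) : T k (Yop n qv tv T (rightIdx hk) (T k g)) =
      tv • Yop n qv tv T (leftIdx hk) g := LinearMap.congr_fun (hT.mul_Yop_mul htv hk) g
  have hTf := h (T k f)
  rw [hT.apply_apply hk, map_add, map_add, map_smul, map_smul, map_smul, map_smul, h f] at hTf
  refine smul_right_injective _ htv ?_
  simp only
  rw [← hTf, smul_add, smul_comm]

lemma IsDL.Yop_rightIdx_apply (hT : IsDL n tv T) (htv : tv ≠ 0) (hk : k + 1 < n) (f : P n) :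
    Yop n qv tv T (rightIdx hk) (T k f) =
      T k (Yop n qv tv T (leftIdx hk) f) - (tv - 1) • Yop n qv tv T (leftIdx hk) f := by
  have h : T k (Yop n qv tv T (rightIdx hk) (T k f)) = tv • Yop n qv tv T (leftIdx hk) f :=
    LinearMap.congr_fun (hT.mul_Yop_mul htv hk) f
  have h' := congrArg (Tinv n tv T k) h
  rw [hT.Tinv_apply_apply htv hk, map_smul, Tinv_apply, smul_add, smul_smul, smul_smul,
    mul_inv_cancel₀ htv, one_smul, mul_sub, mul_inv_cancel₀ htv, mul_one] at h'
  rw [h', ← neg_sub tv, neg_smul, ← sub_eq_add_neg]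

lemma IsDL.Yop_intertwine (hT : IsDL n tv T) (htv : tv ≠ 0) (hk : k + 1 < n) {f : P n} {α β c : K}
    (hα : Yop n qv tv T (leftIdx hk) f = α • f) (hβ : Yop n qv tv T (rightIdx hk) f = β • f)
    (hc : (β - α) * c = (tv - 1) * α) :
    Yop n qv tv T (leftIdx hk) (T k f + c • f) = β • (T k f + c • f) ∧
      Yop n qv tv T (rightIdx hk) (T k f + c • f) = α • (T k f + c • f) := by
  have hC : (C β - C α) * C c = (C tv - 1) * (C α : P n) := by
    simpa only [map_mul, map_sub, map_one] using congrArg (C : K →+* P n) hc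
  rw [map_add, map_add, map_smul, map_smul, hT.Yop_leftIdx_apply htv, hT.Yop_rightIdx_apply htv,
    hα, hβ, map_smul, map_smul]
  simp only [smul_eq_C_mul, map_sub, map_one]
  constructor
  · linear_combination -f * hC
  · linear_combination f * hC

end CherednikRelations

section Triangularity

variable {n k : ℕ} {qv tv : K} {T : ℕ → P n →ₗ[K] P n} {ν : Fin n → ℕ}

/-- The weight `∑ i, i * ν i` of an exponent. It decreases when larger entries move left, so among
rearrangements of one exponent it reverses the dominance order. -/
def indexWeight (ν : Fin n → ℕ) : ℕ := ∑ i : Fin n, (i : ℕ) * ν i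

lemma indexWeight_comp_swap_lt {ν : Fin n → ℕ} {i j : Fin n} (hij : i < j) (h : ν i < ν j) :
    indexWeight (ν ∘ Equiv.swap i j) < indexWeight ν := by
  have hdiff : ∑ k : Fin n, ((k : ℕ) * ν (Equiv.swap i j k) - (k : ℕ) * ν k : ℤ) =
      ((i : ℕ) - (j : ℕ)) * (ν j - ν i) := by
    rw [Fintype.sum_eq_add i j hij.ne]
    · rw [Equiv.swap_apply_left, Equiv.swap_apply_right]
      ring
    · rintro k ⟨hi, hj⟩
      rw [Equiv.swap_apply_of_ne_of_ne hi hj, sub_self]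
  have hneg : ((i : ℕ) - (j : ℕ) : ℤ) * (ν j - ν i) < 0 :=
    mul_neg_of_neg_of_pos (by have := Fin.lt_def.1 hij; omega) (by omega)
  rw [← hdiff, sum_sub_distrib, sub_neg] at hneg
  unfold indexWeight
  exact_mod_cast hneg

/-- `x ^ ν` dominates the exponents of `f`: they have smaller norm, or the same norm and at least
the weight of `ν`. -/
def IsToppedBy (ν : Fin n → ℕ) (f : P n) : Prop :=
  ∀ ρ, (sqNorm ν < sqNorm ρ ∨ sqNorm ρ = sqNorm ν ∧ indexWeight ρ < indexWeight ν) →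
    coeffAt ρ f = 0

lemma IsToppedBy.mem_sqNormLE {f : P n} (hf : IsToppedBy ν f) :
    f ∈ sqNormLE (Fin n) K (sqNorm ν) := fun ρ hρ => hf ρ (Or.inl hρ)

/-- One step of the passage through a Cherednik operator: moving larger entries of an exponent to
the left leaves the dominated region, so it does not affect the coefficient of `x ^ ν`. -/
lemma IsToppedBy.of_transposition {f g : P n} (hf : IsToppedBy ν f) {i j : Fin n} (hij : i < j)
    {c d : K} (hg : g ∈ sqNormLE (Fin n) K (sqNorm ν))
    (hle : ∀ ρ, sqNorm ρ = sqNorm ν → ρ j ≤ ρ i → coeffAt ρ g = c * coeffAt ρ f)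
    (hlt : ∀ ρ, sqNorm ρ = sqNorm ν → ρ i < ρ j →
      coeffAt ρ g = coeffAt ρ f + d * coeffAt (ρ ∘ Equiv.swap i j) f) :
    IsToppedBy ν g ∧ coeffAt ν g = (if ν j ≤ ν i then c else 1) * coeffAt ν f := by
  have hswap {ρ : Fin n → ℕ} (h : sqNorm ρ = sqNorm ν) (hw : indexWeight ρ ≤ indexWeight ν)
      (hρ : ρ i < ρ j) : coeffAt (ρ ∘ Equiv.swap i j) f = 0 :=
    hf _ (Or.inr ⟨by rw [sqNorm_comp_perm, h], (indexWeight_comp_swap_lt hij hρ).trans_le hw⟩)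
  constructor
  · rintro ρ (h | ⟨h, hw⟩)
    · exact hg ρ h
    · have h0 := hf ρ (Or.inr ⟨h, hw⟩)
      rcases le_or_gt (ρ j) (ρ i) with hρ | hρ
      · rw [hle ρ h hρ, h0, mul_zero]
      · rw [hlt ρ h hρ, h0, hswap h hw.le hρ, mul_zero, add_zero]
  · split_ifs with hν
    · exact hle ν rfl hν
    · rw [hlt ν rfl (not_le.1 hν), hswap rfl le_rfl (not_le.1 hν), mul_zero, add_zero, one_mul]

lemma mem_sqNormLE_of_rename {N : ℕ} {π : Equiv.Perm (Fin n)} {f : P n}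
    (h : rename π f ∈ sqNormLE (Fin n) K N) : f ∈ sqNormLE (Fin n) K N := by
  have h' := rename_mem_sqNormLE h π⁻¹
  rwa [rename_rename, ← Equiv.Perm.coe_mul, inv_mul_cancel, Equiv.Perm.coe_one,
    rename_id_apply] at h'

lemma comp_perm_sPerm (hk : k + 1 < n) (ρ : Fin n → ℕ) (π : Equiv.Perm (Fin n)) :
    ρ ∘ (π * sPerm n k) = (ρ ∘ Equiv.swap (π (leftIdx hk)) (π (rightIdx hk))) ∘ π := by
  rw [sPerm_eq_swap hk, Equiv.mul_swap_eq_swap_mul]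
  rfl

lemma comp_perm_sPerm_comp_sPerm (ρ : Fin n → ℕ) (π : Equiv.Perm (Fin n)) :
    (ρ ∘ (π * sPerm n k)) ∘ sPerm n k = ρ ∘ π := by
  rw [Function.comp_assoc, ← Equiv.Perm.coe_mul, mul_assoc, sPerm_mul_self, mul_one]

lemma IsDL.isToppedBy_rename_apply (hT : IsDL n tv T) (hk : k + 1 < n) {π : Equiv.Perm (Fin n)}
    (hπ : π (rightIdx hk) < π (leftIdx hk)) {f : P n} (hf : IsToppedBy ν (rename π f)) :
    IsToppedBy ν (rename (π * sPerm n k) (T k f)) ∧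
      coeffAt ν (rename (π * sPerm n k) (T k f)) =
        (if ν (π (leftIdx hk)) ≤ ν (π (rightIdx hk)) then tv else 1) *
          coeffAt ν (rename π f) := by
  have hmem := mem_sqNormLE_of_rename hf.mem_sqNormLE
  have hmem' {ρ : Fin n → ℕ} (h : sqNorm ρ = sqNorm ν) :
      f ∈ sqNormLE (Fin n) K (sqNorm (ρ ∘ (π * sPerm n k))) := by
    rwa [sqNorm_comp_perm, h]
  refine hf.of_transposition hπ (d := tv - 1)
    (rename_mem_sqNormLE (hT.apply_mem_sqNormLE hk hmem) _) (fun ρ h hρ => ?_) fun ρ h hρ => ?_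
  · rw [coeffAt_rename, hT.coeffAt_apply_of_le hk (hmem' h), comp_perm_sPerm_comp_sPerm,
      coeffAt_rename]
    simpa [sPerm_leftIdx, sPerm_rightIdx] using hρ
  · rw [coeffAt_rename, hT.coeffAt_apply_of_ge hk (hmem' h), comp_perm_sPerm_comp_sPerm,
      comp_perm_sPerm hk, coeffAt_rename, coeffAt_rename, Equiv.swap_comm]
    simpa [sPerm_leftIdx, sPerm_rightIdx] using hρ.le

lemma IsDL.isToppedBy_rename_Tinv (hT : IsDL n tv T) (htv : tv ≠ 0) (hk : k + 1 < n)
    {π : Equiv.Perm (Fin n)} (hπ : π (leftIdx hk) < π (rightIdx hk)) {f : P n}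
    (hf : IsToppedBy ν (rename π f)) :
    IsToppedBy ν (rename (π * sPerm n k) (Tinv n tv T k f)) ∧
      coeffAt ν (rename (π * sPerm n k) (Tinv n tv T k f)) =
        (if ν (π (rightIdx hk)) ≤ ν (π (leftIdx hk)) then tv⁻¹ else 1) *
          coeffAt ν (rename π f) := by
  have hmem := mem_sqNormLE_of_rename hf.mem_sqNormLE
  have hmem' {ρ : Fin n → ℕ} (h : sqNorm ρ = sqNorm ν) :
      f ∈ sqNormLE (Fin n) K (sqNorm (ρ ∘ (π * sPerm n k))) := by
    rwa [sqNorm_comp_perm, h]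
  refine hf.of_transposition hπ (d := tv⁻¹ - 1)
    (rename_mem_sqNormLE (hT.Tinv_mem_sqNormLE hk hmem) _) (fun ρ h hρ => ?_) fun ρ h hρ => ?_
  · rw [coeffAt_rename, hT.coeffAt_Tinv_of_ge htv hk (hmem' h), comp_perm_sPerm_comp_sPerm,
      coeffAt_rename]
    simpa [sPerm_leftIdx, sPerm_rightIdx] using hρ
  · rw [coeffAt_rename, hT.coeffAt_Tinv_of_le htv hk (hmem' h), comp_perm_sPerm_comp_sPerm,
      comp_perm_sPerm hk, coeffAt_rename, coeffAt_rename]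
    simpa [sPerm_leftIdx, sPerm_rightIdx] using hρ.le

lemma IsDL.isToppedBy_ascProd_Tinv (hT : IsDL n tv T) (htv : tv ≠ 0) (i : Fin n) {p m : ℕ}
    (hpm : p + m = i) {f : P n} (hf : IsToppedBy ν f) :
    IsToppedBy ν (rename (⇑(ascProd (sPerm n) p m)⁻¹) (ascProd (Tinv n tv T) p m f)) ∧
      coeffAt ν (rename (⇑(ascProd (sPerm n) p m)⁻¹) (ascProd (Tinv n tv T) p m f)) =
        (∏ j ∈ univ.filter fun j : Fin n => p ≤ (j : ℕ) ∧ (j : ℕ) < i,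
          if ν i ≤ ν j then tv⁻¹ else 1) * coeffAt ν f := by
  induction m generalizing p with
  | zero =>
    have hempty : (univ.filter fun j : Fin n => p ≤ (j : ℕ) ∧ (j : ℕ) < i) = ∅ :=
      filter_eq_empty_iff.2 fun j _ h => by omega
    rw [ascProd_zero, ascProd_zero, Module.End.one_apply, inv_one, Equiv.Perm.coe_one,
      rename_id_apply, hempty, prod_empty, one_mul]
    exact ⟨hf, rfl⟩
  | succ m ih =>
    obtain ⟨htop, hcoeff⟩ := ih (p := p + 1) (by omega)
    have hp : p + 1 < n := by omega
    have hl : (ascProd (sPerm n) (p + 1) m)⁻¹ (leftIdx hp) = leftIdx hp := by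
      rw [Equiv.Perm.inv_eq_iff_eq]
      refine Fin.ext ?_
      rw [ascProd_sPerm_val (by omega)]
      simp [leftIdx]
      omega
    have hr : (ascProd (sPerm n) (p + 1) m)⁻¹ (rightIdx hp) = i := by
      rw [Equiv.Perm.inv_eq_iff_eq, ascProd_sPerm_of_eq (by omega)]
      rfl
    have hinsert : (univ.filter fun j : Fin n => p ≤ (j : ℕ) ∧ (j : ℕ) < i) =
        insert (leftIdx hp) (univ.filter fun j : Fin n => p + 1 ≤ (j : ℕ) ∧ (j : ℕ) < i) := by
      ext j
      simp only [mem_filter, mem_univ, true_and, mem_insert, leftIdx, Fin.ext_iff]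
      omega
    have hlt : leftIdx hp < i := Fin.lt_def.2 (by simp only [leftIdx]; omega)
    have step := hT.isToppedBy_rename_Tinv htv hp (by rwa [hl, hr]) htop
    rw [ascProd_succ, mul_inv_rev, sPerm_inv, ascProd_succ, Module.End.mul_apply, hinsert,
      prod_insert (by simp [leftIdx]), mul_assoc, ← hcoeff]
    rwa [hl, hr] at step

lemma IsDL.isToppedBy_ascProd (hT : IsDL n tv T) (i : Fin n) {m : ℕ} (hm : i + m < n) {f : P n}
    (hf : IsToppedBy ν (rename (⇑(ascProd (sPerm n) i m)) f)) :
    IsToppedBy ν (ascProd T i m f) ∧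
      coeffAt ν (ascProd T i m f) =
        (∏ j ∈ univ.filter fun j : Fin n => (i : ℕ) < j ∧ (j : ℕ) ≤ i + m,
          if ν j ≤ ν i then tv else 1) * coeffAt ν (rename (⇑(ascProd (sPerm n) i m)) f) := by
  induction m generalizing f with
  | zero =>
    have hempty : (univ.filter fun j : Fin n => (i : ℕ) < j ∧ (j : ℕ) ≤ i + 0) = ∅ :=
      filter_eq_empty_iff.2 fun j _ h => by omega
    rw [ascProd_zero (sPerm n), Equiv.Perm.coe_one, rename_id_apply] at hf ⊢
    rw [ascProd_zero T, Module.End.one_apply, hempty, prod_empty, one_mul]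
    exact ⟨hf, rfl⟩
  | succ m ih =>
    have hl : ascProd (sPerm n) i (m + 1) (leftIdx (k := i + m) hm) = rightIdx (k := i + m) hm :=
      ascProd_sPerm_of_lt hm (by simp [leftIdx]) (by simp [leftIdx]) rfl
    have hr : ascProd (sPerm n) i (m + 1) (rightIdx (k := i + m) hm) = i :=
      ascProd_sPerm_of_eq rfl rfl
    have hinsert : (univ.filter fun j : Fin n => (i : ℕ) < j ∧ (j : ℕ) ≤ i + (m + 1)) =
        insert (rightIdx (k := i + m) hm)
          (univ.filter fun j : Fin n => (i : ℕ) < j ∧ (j : ℕ) ≤ i + m) := by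
      ext j
      simp only [mem_filter, mem_univ, true_and, mem_insert, rightIdx, Fin.ext_iff]
      omega
    have hlt : i < rightIdx (k := i + m) hm := Fin.lt_def.2 (by simp only [rightIdx]; omega)
    have hπ : ascProd (sPerm n) i (m + 1) * sPerm n (i + m) = ascProd (sPerm n) i m := by
      rw [ascProd_succ', mul_assoc, sPerm_mul_self, mul_one]
    obtain ⟨htop, hcoeff⟩ := hT.isToppedBy_rename_apply (k := i + m) hm (by rwa [hl, hr]) hf
    rw [hπ] at htop hcoeff
    rw [hl, hr] at hcoeff
    obtain ⟨htop', hcoeff'⟩ := ih (by omega) htop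
    rw [ascProd_succ' T, Module.End.mul_apply, hinsert, prod_insert (by simp [rightIdx]), hcoeff',
      hcoeff]
    exact ⟨htop', by ring⟩

lemma isToppedBy_rename_tauOp {π : Equiv.Perm (Fin n)} {i j : Fin n} (hi : (i : ℕ) = 0)
    (hπ : π i = j) {f : P n} (hf : IsToppedBy ν (rename π f)) (qv : K) :
    IsToppedBy ν (rename π (tauOp n qv f)) ∧
      coeffAt ν (rename π (tauOp n qv f)) = qv ^ ν j * coeffAt ν (rename π f) := by
  have h (ρ : Fin n → ℕ) :
      coeffAt ρ (rename π (tauOp n qv f)) = qv ^ ρ j * coeffAt ρ (rename π f) := by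
    rw [coeffAt_rename, coeffAt_tauOp qv _ hi, Function.comp_apply, hπ, coeffAt_rename]
  exact ⟨fun ρ hρ => by rw [h, hf ρ hρ, mul_zero], h ν⟩

lemma prod_left_eq_pow_legCo (tv : K) (ν : Fin n → ℕ) (i : Fin n) (htv : tv ≠ 0) :
    (tv ^ (n - 1 - (i : ℕ)))⁻¹ *
      (∏ j ∈ univ.filter fun j : Fin n => (i : ℕ) < j ∧ (j : ℕ) ≤ i + (n - 1 - i),
        if ν j ≤ ν i then tv else 1) *
      (∏ j ∈ univ.filter fun j : Fin n => 0 ≤ (j : ℕ) ∧ (j : ℕ) < i,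
        if ν i ≤ ν j then tv⁻¹ else 1) = (tv ^ legCo n ν i)⁻¹ := by
  have hright : (univ.filter fun j : Fin n => (i : ℕ) < j ∧ (j : ℕ) ≤ i + (n - 1 - i)) = Ioi i := by
    ext j
    simp only [mem_filter, mem_univ, true_and, mem_Ioi, Fin.lt_def]
    omega
  have hleft : (univ.filter fun j : Fin n => 0 ≤ (j : ℕ) ∧ (j : ℕ) < i) = Iio i := by
    ext j
    simp
  have hcard : ((Ioi i).filter fun j => ν j ≤ ν i).card +
      ((Ioi i).filter fun j => ¬ν j ≤ ν i).card = n - 1 - i := by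
    rw [card_filter_add_card_filter_not, Fin.card_Ioi]
  have hlegCo : legCo n ν i = ((Iio i).filter fun j => ν i ≤ ν j).card +
      ((Ioi i).filter fun j => ¬ν j ≤ ν i).card := by
    unfold legCo
    congr 2 <;> ext j <;> simp
  rw [hright, hleft, hlegCo, ← hcard]
  simp only [prod_ite, prod_const, one_pow, mul_one, inv_pow]
  field_simp
  ring

lemma IsDL.coeffAt_Yop (hT : IsDL n tv T) (htv : tv ≠ 0) (i : Fin n) {f : P n}
    (hf : IsToppedBy ν f) (qv : K) :
    coeffAt ν (Yop n qv tv T i f) = qv ^ ν i / tv ^ legCo n ν i * coeffAt ν f := by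
  obtain ⟨h₁, hc₁⟩ := hT.isToppedBy_ascProd_Tinv htv i (zero_add _) hf
  have hn : 0 < n := i.pos
  have hπ : (ascProd (sPerm n) 0 i)⁻¹ ⟨0, hn⟩ = i := by
    rw [Equiv.Perm.inv_eq_iff_eq]
    exact (ascProd_sPerm_of_eq (zero_add _).symm rfl).symm
  obtain ⟨h₂, hc₂⟩ := isToppedBy_rename_tauOp rfl hπ h₁ qv
  have homega (g : P n) : rename (⇑(ascProd (sPerm n) i (n - 1 - i))) (omegaOp n qv g) =
      rename (⇑(ascProd (sPerm n) 0 i)⁻¹) (tauOp n qv g) := by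
    have hsplit := ascProd_mul_ascProd (sPerm n) 0 i (n - 1 - i)
    rw [zero_add, show (i : ℕ) + (n - 1 - i) = n - 1 by omega] at hsplit
    rw [omegaOp_apply, rename_rename, ← Equiv.Perm.coe_mul, ← hsplit, mul_inv_rev,
      mul_inv_cancel_left]
  rw [← homega] at h₂ hc₂
  obtain ⟨-, hc₃⟩ := hT.isToppedBy_ascProd i (by omega) h₂
  rw [Yop_eq, LinearMap.smul_apply, Module.End.mul_apply, Module.End.mul_apply, map_smul,
    smul_eq_mul, hc₃, hc₂, hc₁, div_eq_mul_inv, ← prod_left_eq_pow_legCo tv ν i htv]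
  ring

end Triangularity

section Spectrum

/-- The exponent of the monomial `q ^ a * t ^ b` in the polynomial ring underlying `K`. -/
noncomputable def qtExponent (a b : ℕ) : Fin 2 →₀ ℕ := Finsupp.single 0 a + Finsupp.single 1 b

lemma qtExponent_inj {a b c d : ℕ} : qtExponent a b = qtExponent c d ↔ a = c ∧ b = d := by
  refine ⟨fun h => ?_, fun ⟨ha, hb⟩ => by rw [ha, hb]⟩
  exact ⟨by simpa [qtExponent] using DFunLike.congr_fun h 0,
    by simpa [qtExponent] using DFunLike.congr_fun h 1⟩

lemma q_pow_mul_t_pow_eq (a b : ℕ) :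
    q ^ a * t ^ b = algebraMap (MvPolynomial (Fin 2) ℚ) K (monomial (qtExponent a b) 1) := by
  simp [q, t, qtExponent, monomial_eq, Finsupp.prod_add_index', pow_add]

lemma algebraMap_K_injective : Function.Injective (algebraMap (MvPolynomial (Fin 2) ℚ) K) :=
  IsFractionRing.injective (MvPolynomial (Fin 2) ℚ) K

lemma q_pow_mul_t_pow_inj {a b c d : ℕ} : q ^ a * t ^ b = q ^ c * t ^ d ↔ a = c ∧ b = d := by
  rw [q_pow_mul_t_pow_eq, q_pow_mul_t_pow_eq, algebraMap_K_injective.eq_iff,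
    (monomial_left_injective one_ne_zero).eq_iff, qtExponent_inj]

lemma t_ne_zero : t ≠ 0 := fun h => by
  have := (q_pow_mul_t_pow_inj (a := 0) (b := 1) (c := 0) (d := 2)).1 (by simp [h])
  omega

lemma t_add_one_ne_zero : t + 1 ≠ 0 := fun h => by
  have := (q_pow_mul_t_pow_inj (a := 0) (b := 2) (c := 0) (d := 0)).1
    (by linear_combination (t - 1) * h)
  omega

lemma one_sub_q_pow_mul_t_pow_ne_zero {a b : ℕ} (ha : a ≠ 0) : 1 - q ^ a * t ^ b ≠ 0 := fun h =>
  ha (q_pow_mul_t_pow_inj (b := b) (c := 0) (d := 0) |>.1 (by linear_combination -h)).1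

lemma q_pow_div_t_pow_inj {a b c d : ℕ} : q ^ a / t ^ b = q ^ c / t ^ d ↔ a = c ∧ b = d := by
  rw [div_eq_div_iff (pow_ne_zero _ t_ne_zero) (pow_ne_zero _ t_ne_zero), q_pow_mul_t_pow_inj]
  omega

variable {n k : ℕ} {T : ℕ → P n →ₗ[K] P n}

lemma sum_q_pow_div_t_pow_injective :
    Function.Injective fun ν : Fin n → ℕ => ∑ i : Fin n, q ^ ν i / t ^ (i : ℕ) := by
  intro ν κ h
  let g (μ : Fin n → ℕ) : MvPolynomial (Fin 2) ℚ :=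
    ∑ i : Fin n, monomial (qtExponent (μ i) (n - i)) 1
  have hg (μ : Fin n → ℕ) :
      algebraMap _ K (g μ) = t ^ n * ∑ i : Fin n, q ^ μ i / t ^ (i : ℕ) := by
    rw [map_sum, mul_sum]
    refine sum_congr rfl fun i _ => ?_
    rw [← q_pow_mul_t_pow_eq, pow_sub₀ t t_ne_zero i.isLt.le]
    ring
  have hνκ : g ν = g κ := algebraMap_K_injective (by rw [hg, hg]; exact congrArg _ h)
  funext i
  have hcoeff (μ : Fin n → ℕ) :
      coeff (qtExponent (κ i) (n - i)) (g μ) = if μ i = κ i then 1 else 0 := by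
    simp only [g, coeff_sum, coeff_monomial, qtExponent_inj]
    rw [sum_eq_single i (fun j _ hj => if_neg fun h => hj (Fin.ext (by omega))) (by simp)]
    simp
  have hone := (hcoeff ν).symm.trans (hνκ ▸ hcoeff κ)
  by_contra hne
  simp [hne] at hone

lemma exists_isToppedBy {f : P n} (hf : f ≠ 0) : ∃ ν, coeffAt ν f ≠ 0 ∧ IsToppedBy ν f := by
  obtain ⟨m, hm, hmin⟩ := f.support.exists_min_image
    (fun m : Fin n →₀ ℕ => toLex (OrderDual.toDual (sqNorm m), indexWeight m))
    (support_nonempty.2 hf)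
  refine ⟨m, by simpa [coeffAt_apply] using hm, fun ρ hρ => ?_⟩
  by_contra h
  have hle := hmin (Finsupp.equivFunOnFinite.symm ρ) (mem_support_iff.2 h)
  rw [Prod.Lex.toLex_le_toLex, OrderDual.toDual_lt_toDual, OrderDual.toDual_inj,
    Finsupp.coe_equivFunOnFinite_symm] at hle
  omega

lemma IsDL.eq_zero_of_Yop_eq_smul (hT : IsDL n t T) {η : Fin n → ℕ} {f : P n}
    (hf : ∀ i, Yop n q t T i f = (q ^ η i / t ^ legCo n η i) • f) (h0 : coeffAt η f = 0) :
    f = 0 := by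
  by_contra hne
  obtain ⟨ν, hν, htop⟩ := exists_isToppedBy hne
  have hνη : ν = η := by
    funext i
    have h := hT.coeffAt_Yop t_ne_zero i htop q
    rw [hf i, map_smul, smul_eq_mul] at h
    exact (q_pow_div_t_pow_inj.1 (mul_right_cancel₀ hν h)).1.symm
  exact hν (hνη ▸ h0)

lemma legCo_of_strictAnti {ν : Fin n → ℕ} (hν : StrictAnti ν) (i : Fin n) : legCo n ν i = i := by
  have hleft : (univ.filter fun k => k < i ∧ ν i ≤ ν k) = Iio i := by
    ext k
    simpa using fun hk : k < i => (hν hk).le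
  have hright : (univ.filter fun k => i < k ∧ ν i < ν k) = ∅ :=
    filter_eq_empty_iff.2 fun k _ hk => (hν hk.1).not_gt hk.2
  rw [legCo, hleft, hright, Fin.card_Iio, card_empty, add_zero]

lemma strictAnti_iff_rightIdx_lt_leftIdx {α : Type*} [Preorder α] {ν : Fin n → α} :
    StrictAnti ν ↔ ∀ k, ∀ hk : k + 1 < n, ν (rightIdx hk) < ν (leftIdx hk) := by
  refine ⟨fun h k hk => h (leftIdx_lt_rightIdx hk), fun h => ?_⟩
  obtain _ | n := n
  · exact fun i => i.elim0
  · exact Fin.strictAnti_iff_succ_lt.2 fun i => h i (by omega)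

lemma IsDL.strictAnti_of_isToppedBy (hT : IsDL n t T) {f : P n} {ν : Fin n → ℕ}
    (hf : ∀ k, k + 1 < n → T k f = -f) (hν : coeffAt ν f ≠ 0) (htop : IsToppedBy ν f) :
    StrictAnti ν := by
  refine strictAnti_iff_rightIdx_lt_leftIdx.2 fun k hk => ?_
  by_contra! hle
  have h := hT.coeffAt_apply_of_ge hk htop.mem_sqNormLE hle
  rw [hf k hk, map_neg, sPerm_eq_swap hk] at h
  rcases hle.lt_or_eq with hlt | heq
  · rw [htop _ (Or.inr ⟨sqNorm_comp_perm _ _,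
      indexWeight_comp_swap_lt (leftIdx_lt_rightIdx hk) hlt⟩)] at h
    exact mul_ne_zero t_ne_zero hν (by linear_combination -h)
  · have hswap : ν ∘ Equiv.swap (leftIdx hk) (rightIdx hk) = ν := by
      rw [Equiv.comp_swap_eq_update, heq, Function.update_eq_self, ← heq, Function.update_eq_self]
    rw [hswap] at h
    exact mul_ne_zero t_add_one_ne_zero hν (by linear_combination -h)

lemma IsDL.eq_zero_of_antisymmetric (hT : IsDL n t T) {κ : Fin n → ℕ} {f : P n}
    (hanti : ∀ k, k + 1 < n → T k f = -f)
    (heig : (∑ i : Fin n, Yop n q t T i) f = (∑ i : Fin n, q ^ κ i / t ^ (i : ℕ)) • f)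
    (h0 : coeffAt κ f = 0) : f = 0 := by
  by_contra hne
  obtain ⟨ν, hν, htop⟩ := exists_isToppedBy hne
  have hY : coeffAt ν ((∑ i : Fin n, Yop n q t T i) f) =
      (∑ i : Fin n, q ^ ν i / t ^ (i : ℕ)) * coeffAt ν f := by
    rw [LinearMap.sum_apply, map_sum, sum_mul]
    refine sum_congr rfl fun i _ => ?_
    rw [hT.coeffAt_Yop t_ne_zero i htop,
      legCo_of_strictAnti (hT.strictAnti_of_isToppedBy hanti hν htop)]
  rw [heig, map_smul, smul_eq_mul] at hY
  have hκν : κ = ν := sum_q_pow_div_t_pow_injective (mul_right_cancel₀ hν hY)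
  exact hν (hκν ▸ h0)

end Spectrum

section Length

variable {n k : ℕ} {T : ℕ → P n →ₗ[K] P n} {Tw : Equiv.Perm (Fin n) → P n →ₗ[K] P n}

lemma sPerm_val (hk : k + 1 < n) (i : Fin n) :
    (sPerm n k i : ℕ) = if (i : ℕ) = k then k + 1 else if (i : ℕ) = k + 1 then k else i := by
  split_ifs with hl hr
  · obtain rfl : i = leftIdx hk := Fin.ext hl
    rw [sPerm_leftIdx, rightIdx]
  · obtain rfl : i = rightIdx hk := Fin.ext hr
    rw [sPerm_rightIdx, leftIdx]
  · rw [sPerm_of_ne hl hr]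

lemma sPerm_lt_sPerm (hk : k + 1 < n) {i j : Fin n} (hij : i < j)
    (hne : (i, j) ≠ (leftIdx hk, rightIdx hk)) : sPerm n k i < sPerm n k j := by
  have hne' : ¬((i : ℕ) = k ∧ (j : ℕ) = k + 1) := fun h =>
    hne (Prod.ext (Fin.ext h.1) (Fin.ext h.2))
  rw [Fin.lt_def] at hij ⊢
  rw [sPerm_val hk, sPerm_val hk]
  split_ifs <;> omega

lemma inversions_mul_sPerm (hk : k + 1 < n) {σ : Equiv.Perm (Fin n)}
    (hσ : σ (leftIdx hk) < σ (rightIdx hk)) :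
    inversions (σ * sPerm n k) = inversions σ + 1 := by
  have hlr := leftIdx_lt_rightIdx hk
  have hmem : (leftIdx hk, rightIdx hk) ∈ univ.filter fun p : Fin n × Fin n =>
      p.1 < p.2 ∧ (σ * sPerm n k) p.2 < (σ * sPerm n k) p.1 := by
    rw [mem_filter_univ]
    simp [sPerm_leftIdx, sPerm_rightIdx, hlr, hσ]
  rw [inversions, inversions, ← card_erase_add_one hmem]
  congr 1
  refine card_equiv ((sPerm n k).prodCongr (sPerm n k)) fun p => ?_
  simp only [mem_erase, mem_filter_univ, Equiv.prodCongr_apply, Prod.map]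
  simp only [Equiv.Perm.mul_apply]
  constructor
  · rintro ⟨hne, hlt, hinv⟩
    exact ⟨sPerm_lt_sPerm hk hlt hne, hinv⟩
  · rintro ⟨hlt, hinv⟩
    have hne : (sPerm n k p.1, sPerm n k p.2) ≠ (leftIdx hk, rightIdx hk) := fun h => by
      rw [Prod.mk.injEq] at h
      exact (h.1 ▸ h.2 ▸ hinv).not_gt hσ
    have hlt' := sPerm_lt_sPerm hk hlt hne
    rw [sPerm_apply_sPerm, sPerm_apply_sPerm] at hlt'
    refine ⟨?_, hlt', hinv⟩
    rintro rfl
    rw [sPerm_leftIdx, sPerm_rightIdx] at hlt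
    exact hlt.not_gt hlr

lemma inversions_inv (σ : Equiv.Perm (Fin n)) : inversions σ⁻¹ = inversions σ := by
  refine card_equiv ((Equiv.prodComm _ _).trans (σ⁻¹.prodCongr σ⁻¹)) fun p => ?_
  simp [and_comm]

lemma inversions_one : inversions (1 : Equiv.Perm (Fin n)) = 0 :=
  card_eq_zero.2 (filter_eq_empty_iff.2 fun _ _ h => lt_asymm h.1 h.2)

lemma exists_descent {σ : Equiv.Perm (Fin n)} (hσ : σ ≠ 1) :
    ∃ k, ∃ hk : k + 1 < n, σ (rightIdx hk) < σ (leftIdx hk) := by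
  by_contra! h
  have hanti : StrictAnti (OrderDual.toDual ∘ σ) :=
    strictAnti_iff_rightIdx_lt_leftIdx.2 fun k hk =>
      (h k hk).lt_of_ne (σ.injective.ne (leftIdx_lt_rightIdx hk).ne)
  exact hσ ((Equiv.Perm.monotone_iff σ).1 (StrictMono.monotone fun i j hij => hanti hij))

@[elab_as_elim]
lemma perm_induction_ascent {p : Equiv.Perm (Fin n) → Prop} (one : p 1)
    (mul : ∀ σ k, ∀ hk : k + 1 < n, σ (leftIdx hk) < σ (rightIdx hk) → p σ →
      p (σ * sPerm n k)) (σ : Equiv.Perm (Fin n)) : p σ := by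
  induction hm : inversions σ using Nat.strong_induction_on generalizing σ with
  | _ m ih =>
    by_cases hσ : σ = 1
    · rwa [hσ]
    · obtain ⟨k, hk, h⟩ := exists_descent hσ
      have hcancel : σ * sPerm n k * sPerm n k = σ := by rw [mul_assoc, sPerm_mul_self, mul_one]
      have hlt : (σ * sPerm n k) (leftIdx hk) < (σ * sPerm n k) (rightIdx hk) := by
        rwa [Equiv.Perm.mul_apply, Equiv.Perm.mul_apply, sPerm_leftIdx, sPerm_rightIdx]
      have hinv := inversions_mul_sPerm hk hlt
      rw [hcancel] at hinv
      rw [← hcancel]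
      exact mul _ k hk hlt (ih _ (by omega) _ rfl)

lemma IsTsigma.coeffAt_apply (hTw : IsTsigma n T Tw) (hT : IsDL n t T) {κ : Fin n → ℕ}
    (hκ : StrictAnti κ) (σ : Equiv.Perm (Fin n)) {f : P n}
    (hf : f ∈ sqNormLE (Fin n) K (sqNorm κ)) :
    coeffAt κ (Tw σ f) = t ^ inversions σ * coeffAt (κ ∘ σ) f := by
  induction σ using perm_induction_ascent generalizing f with
  | one => simp [hTw.1, inversions_one]
  | mul σ k hk hσ ih =>
    have hinv := inversions_mul_sPerm hk hσ
    rw [hTw.2 σ k hk hinv, LinearMap.comp_apply, ih (hT.apply_mem_sqNormLE hk hf),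
      hT.coeffAt_apply_of_le hk (by rwa [sqNorm_comp_perm]) (hκ hσ).le, hinv, pow_succ, mul_assoc]
    rfl

lemma coeffAt_xmon (ν μ : Fin n → ℕ) : coeffAt ν (xmon n μ) = if μ = ν then 1 else 0 := by
  simp [coeffAt_apply, xmon]

lemma IsTsigma.coeffAt_Uminus (hTw : IsTsigma n T Tw) (hT : IsDL n t T) {κ : Fin n → ℕ}
    (hκ : StrictAnti κ) {μ : Fin n → ℕ} (hμ : sqNorm μ ≤ sqNorm κ) :
    coeffAt κ (Uminus n t Tw (xmon n μ)) = ∑ σ : Equiv.Perm (Fin n),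
      ((-t) ^ inversions σ)⁻¹ * (t ^ inversions σ * if μ = κ ∘ σ then 1 else 0) := by
  have hmem : xmon n μ ∈ sqNormLE (Fin n) K (sqNorm κ) := fun ρ hρ => by
    rw [coeffAt_xmon, if_neg (by rintro rfl; omega)]
  rw [Uminus, LinearMap.sum_apply, map_sum]
  refine sum_congr rfl fun σ _ => ?_
  rw [LinearMap.smul_apply, map_smul, smul_eq_mul, hTw.coeffAt_apply hT hκ σ hmem, coeffAt_xmon]

lemma IsTsigma.coeffAt_Uminus_self (hTw : IsTsigma n T Tw) (hT : IsDL n t T) {κ : Fin n → ℕ}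
    (hκ : StrictAnti κ) : coeffAt κ (Uminus n t Tw (xmon n κ)) = 1 := by
  rw [hTw.coeffAt_Uminus hT hκ le_rfl, sum_eq_single 1]
  · simp [inversions_one]
  · intro σ _ hσ
    have hne : κ ≠ κ ∘ σ := fun h => hσ (Equiv.ext fun i => (hκ.injective (congrFun h i)).symm)
    rw [if_neg hne, mul_zero, mul_zero]
  · simp

lemma IsTsigma.coeffAt_Uminus_of_lt (hTw : IsTsigma n T Tw) (hT : IsDL n t T) {κ : Fin n → ℕ}
    (hκ : StrictAnti κ) {μ : Fin n → ℕ} (hμ : sqNorm μ < sqNorm κ) :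
    coeffAt κ (Uminus n t Tw (xmon n μ)) = 0 := by
  rw [hTw.coeffAt_Uminus hT hκ hμ.le]
  refine sum_eq_zero fun σ _ => ?_
  have hne : μ ≠ κ ∘ σ := by
    rintro rfl
    exact hμ.ne (sqNorm_comp_perm κ σ)
  rw [if_neg hne, mul_zero, mul_zero]

end Length

section Dominance

variable {n k : ℕ}

lemma sum_mul_eq_sum_Icc_sum_filter {ι : Type*} [Fintype ι] (μ ν : ι → ℕ) {M : ℕ}
    (hM : ∀ i, μ i ≤ M) :
    ∑ i, ν i * μ i = ∑ c ∈ Icc 1 M, ∑ i ∈ univ.filter fun i => c ≤ μ i, ν i := by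
  simp only [sum_filter]
  rw [sum_comm]
  refine sum_congr rfl fun i _ => ?_
  have hIcc : (Icc 1 M).filter (fun c => c ≤ μ i) = Icc 1 (μ i) := by
    ext c
    have := hM i
    simp only [mem_filter, mem_Icc]
    omega
  rw [← sum_filter, hIcc, sum_const, Nat.card_Icc, smul_eq_mul, Nat.add_sub_cancel, mul_comm]

/-- Abel summation: the level sets of a decreasing `μ` are initial segments. -/
lemma domLE.sum_mul_le_sum_mul {μ ν ρ : Fin n → ℕ} (h : domLE n ν ρ) (hμ : Antitone μ) :
    ∑ i, ν i * μ i ≤ ∑ i, ρ i * μ i := by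
  have hM (i : Fin n) : μ i ≤ ∑ j, μ j := single_le_sum (fun _ _ => Nat.zero_le _) (mem_univ i)
  rw [sum_mul_eq_sum_Icc_sum_filter μ ν hM, sum_mul_eq_sum_Icc_sum_filter μ ρ hM]
  refine sum_le_sum fun c _ => ?_
  rcases (univ.filter fun i => c ≤ μ i).eq_empty_or_nonempty with hempty | hne
  · rw [hempty, sum_empty, sum_empty]
  · have hp := max'_mem _ hne
    have hsegment : (univ.filter fun i => c ≤ μ i) = univ.filter (· ≤ max' _ hne) := by
      ext i
      refine ⟨fun hi => (mem_filter_univ i).2 (le_max' _ _ hi), fun hi => ?_⟩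
      exact (mem_filter_univ i).2
        (((mem_filter_univ _).1 hp).trans (hμ ((mem_filter_univ i).1 hi)))
    rw [hsegment]
    exact h.2 _

lemma domLT.sqNorm_lt {μ ν : Fin n → ℕ} (h : domLT n μ ν) (hμ : Antitone μ) :
    sqNorm μ < sqNorm ν := by
  have hdot := h.1.sum_mul_le_sum_mul hμ
  obtain ⟨i, hi⟩ := Function.ne_iff.1 h.2
  have hpos : 0 < ∑ i, ((ν i : ℤ) - μ i) ^ 2 :=
    sum_pos' (fun i _ => sq_nonneg _)
      ⟨i, mem_univ i, sq_pos_of_ne_zero (sub_ne_zero.2 (by exact_mod_cast hi.symm))⟩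
  have hexpand : ∑ i, ((ν i : ℤ) - μ i) ^ 2 =
      sqNorm ν + sqNorm μ - 2 * (∑ i, ν i * μ i : ℕ) := by
    unfold sqNorm
    push_cast
    rw [mul_sum, ← sum_add_distrib, ← sum_sub_distrib]
    exact sum_congr rfl fun i _ => by ring
  have hself : ∑ i, μ i * μ i = sqNorm μ := sum_congr rfl fun i _ => (sq _).symm
  rw [hself] at hdot
  omega

lemma sqNorm_sortDesc (η : Fin n → ℕ) : sqNorm (sortDesc n η) = sqNorm η :=
  sqNorm_comp_perm η (Fin.revPerm.trans (Tuple.sort η))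

lemma sortDesc_antitone (η : Fin n → ℕ) : Antitone (sortDesc n η) := fun _ _ hij =>
  Tuple.monotone_sort η (Fin.rev_le_rev.2 hij)

lemma prec.sqNorm_lt_or_domLT {ν η : Fin n → ℕ} (h : prec n ν η) :
    sqNorm ν < sqNorm η ∨ sqNorm ν = sqNorm η ∧ domLT n ν η := by
  rcases h with h | ⟨hsort, h⟩
  · have hlt := h.sqNorm_lt (sortDesc_antitone ν)
    rw [sqNorm_sortDesc, sqNorm_sortDesc] at hlt
    exact Or.inl hlt
  · exact Or.inr ⟨by rw [← sqNorm_sortDesc ν, hsort, sqNorm_sortDesc], h⟩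

lemma not_domLE_comp_sPerm (hk : k + 1 < n) {η : Fin n → ℕ}
    (h : η (rightIdx hk) < η (leftIdx hk)) : ¬domLE n η (η ∘ sPerm n k) := fun hdom => by
  refine (hdom.2 (leftIdx hk)).not_gt (sum_lt_sum (fun i hi => ?_)
    ⟨leftIdx hk, by simp, by simpa [sPerm_leftIdx] using h⟩)
  rcases eq_or_ne i (leftIdx hk) with rfl | hne
  · simpa [sPerm_leftIdx] using h.le
  · have hlt : (i : ℕ) < k := Fin.lt_def.1 (((mem_filter_univ i).1 hi).lt_of_ne hne)
    rw [Function.comp_apply, sPerm_of_ne hlt.ne (by omega)]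

variable {qv tv : K} {T : ℕ → P n →ₗ[K] P n} {η : Fin n → ℕ} {E : P n}

lemma IsNSMac.coeffAt_self (hE : IsNSMac n qv tv T η E) : coeffAt η E = 1 := hE.1

lemma IsNSMac.coeffAt_eq_zero (hE : IsNSMac n qv tv T η E) {ν : Fin n → ℕ} (hne : ν ≠ η)
    (hprec : ¬prec n ν η) : coeffAt ν E = 0 := by
  by_contra h
  exact (hE.2.1 _ h).elim hne hprec

lemma IsNSMac.mem_sqNormLE (hE : IsNSMac n qv tv T η E) :
    E ∈ sqNormLE (Fin n) K (sqNorm η) := fun ν hν =>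
  hE.coeffAt_eq_zero (by rintro rfl; omega) fun h => by
    rcases h.sqNorm_lt_or_domLT with h | ⟨h, -⟩ <;> omega

lemma IsNSMac.coeffAt_eq_zero_of_not_domLT (hE : IsNSMac n qv tv T η E) {ν : Fin n → ℕ}
    (hnorm : sqNorm ν = sqNorm η) (hne : ν ≠ η) (hdom : ¬domLT n ν η) : coeffAt ν E = 0 :=
  hE.coeffAt_eq_zero hne fun h => by
    rcases h.sqNorm_lt_or_domLT with h | ⟨-, h⟩
    · exact h.ne hnorm
    · exact hdom h

end Dominance

section Diagram

variable {n k : ℕ} {η : Fin n → ℕ}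

lemma legCo_of_injective (hη : Function.Injective η) (i : Fin n) :
    legCo n η i = #{l | η i < η l} := by
  have hdisj : Disjoint (univ.filter fun l => l < i ∧ η i ≤ η l)
      (univ.filter fun l => i < l ∧ η i < η l) :=
    disjoint_filter.2 fun l _ hl hl' => lt_asymm hl.1 hl'.1
  rw [legCo, ← card_union_of_disjoint hdisj, ← filter_or]
  congr 1
  ext l
  rw [mem_filter_univ, mem_filter_univ]
  rcases lt_trichotomy l i with hlt | rfl | hlt
  · have hne : η l ≠ η i := hη.ne hlt.ne
    omega
  · omega
  · omega

lemma legCo_comp_perm (hη : Function.Injective η) (π : Equiv.Perm (Fin n)) (i : Fin n) :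
    legCo n (η ∘ π) i = legCo n η (π i) := by
  rw [legCo_of_injective hη, legCo_of_injective (hη.comp π.injective)]
  exact card_equiv π fun l => by simp

/-- The contribution, `0` or `1`, of row `l` to the leg length of the node `(i, j)`. -/
def legRow (η : Fin n → ℕ) (i : Fin n) (j : ℕ) (l : Fin n) : ℕ :=
  (if i < l ∧ j ≤ η l ∧ η l ≤ η i then 1 else 0) +
  (if l < i ∧ j ≤ η l + 1 ∧ η l + 1 ≤ η i then 1 else 0)

lemma leg_eq_sum_legRow (η : Fin n → ℕ) (i : Fin n) (j : ℕ) :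
    leg n η i j = ∑ l, legRow η i j l := by
  simp only [leg, legRow, sum_add_distrib, card_filter]

variable (hk : k + 1 < n)

lemma sPerm_lt_sPerm_iff {i j : Fin n} (hij : (i, j) ≠ (leftIdx hk, rightIdx hk))
    (hji : (i, j) ≠ (rightIdx hk, leftIdx hk)) : sPerm n k i < sPerm n k j ↔ i < j := by
  refine ⟨fun h => ?_, fun h => sPerm_lt_sPerm hk h hij⟩
  have hne : (sPerm n k i, sPerm n k j) ≠ (leftIdx hk, rightIdx hk) := fun h' => by
    rw [Prod.mk.injEq] at h'
    refine hji (Prod.ext ?_ ?_)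
    · rw [← sPerm_apply_sPerm n k i, h'.1, sPerm_leftIdx]
    · rw [← sPerm_apply_sPerm n k j, h'.2, sPerm_rightIdx]
  simpa only [sPerm_apply_sPerm] using sPerm_lt_sPerm hk h hne

-- Swapping the rows `k` and `k + 1` changes the leg of a single node, the one just past the end
-- of the shorter row.
lemma legRow_comp_sPerm (h : η (rightIdx hk) < η (leftIdx hk)) (i l : Fin n) (j : ℕ) :
    legRow (η ∘ sPerm n k) (sPerm n k i) j (sPerm n k l) = legRow η i j l +
      if (i, j) = (leftIdx hk, η (rightIdx hk) + 1) ∧ l = rightIdx hk then 1 else 0 := by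
  have hlt := leftIdx_lt_rightIdx hk
  simp only [legRow, Function.comp_apply, sPerm_apply_sPerm, Prod.mk.injEq]
  by_cases hlr : (i, l) = (leftIdx hk, rightIdx hk)
  · obtain ⟨rfl, rfl⟩ := Prod.mk.inj hlr
    simp only [sPerm_leftIdx, sPerm_rightIdx, hlt, hlt.not_gt, false_and, true_and, and_true,
      if_false]
    split_ifs <;> omega
  have hextra : ¬((i = leftIdx hk ∧ j = η (rightIdx hk) + 1) ∧ l = rightIdx hk) := fun hc =>
    hlr (Prod.ext hc.1.1 hc.2)
  rw [if_neg hextra]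
  by_cases hrl : (i, l) = (rightIdx hk, leftIdx hk)
  · obtain ⟨rfl, rfl⟩ := Prod.mk.inj hrl
    simp only [sPerm_leftIdx, sPerm_rightIdx, hlt, hlt.not_gt, false_and, true_and, if_false]
    split_ifs <;> omega
  · have hlr' : (l, i) ≠ (rightIdx hk, leftIdx hk) := fun hc => hlr (congrArg Prod.swap hc)
    have hrl' : (l, i) ≠ (leftIdx hk, rightIdx hk) := fun hc => hrl (congrArg Prod.swap hc)
    simp only [sPerm_lt_sPerm_iff hk hlr hrl, sPerm_lt_sPerm_iff hk hrl' hlr', add_zero]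

lemma leg_comp_sPerm (h : η (rightIdx hk) < η (leftIdx hk)) (i : Fin n) (j : ℕ) :
    leg n (η ∘ sPerm n k) (sPerm n k i) j =
      leg n η i j + if (i, j) = (leftIdx hk, η (rightIdx hk) + 1) then 1 else 0 := by
  rw [leg_eq_sum_legRow, leg_eq_sum_legRow, ← Equiv.sum_comp (sPerm n k)]
  simp only [legRow_comp_sPerm hk h, sum_add_distrib, ite_and, sum_ite_irrel, sum_ite_eq',
    mem_univ, if_true, sum_const_zero]

lemma legCo_rightIdx (hη : Function.Injective η) (h : η (rightIdx hk) < η (leftIdx hk)) :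
    legCo n η (rightIdx hk) =
      legCo n η (leftIdx hk) + leg n η (leftIdx hk) (η (rightIdx hk) + 1) + 1 := by
  have hrow (l : Fin n) : (if η (rightIdx hk) < η l then 1 else 0) =
      (if η (leftIdx hk) < η l then 1 else 0) + legRow η (leftIdx hk) (η (rightIdx hk) + 1) l +
        if l = leftIdx hk then 1 else 0 := by
    unfold legRow
    rcases lt_trichotomy l (leftIdx hk) with hlt | rfl | hlt
    · have hl : η l ≠ η (leftIdx hk) := hη.ne hlt.ne
      have hr : η l ≠ η (rightIdx hk) := hη.ne (hlt.trans (leftIdx_lt_rightIdx hk)).ne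
      simp only [hlt, hlt.not_gt, hlt.ne, false_and, true_and, if_false]
      split_ifs <;> omega
    · simp [h]
    · have : η l ≠ η (leftIdx hk) := hη.ne hlt.ne'
      simp only [hlt, hlt.not_gt, hlt.ne', false_and, true_and, if_false]
      split_ifs <;> omega
  rw [legCo_of_injective hη, legCo_of_injective hη, leg_eq_sum_legRow, card_filter, card_filter,
    sum_congr rfl fun l _ => hrow l, sum_add_distrib, sum_add_distrib, sum_ite_eq',
    if_pos (mem_univ _)]

lemma dP_ne_zero (η : Fin n → ℕ) : dP n η ≠ 0 :=
  prod_ne_zero_iff.2 fun _ _ => prod_ne_zero_iff.2 fun _ _ =>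
    one_sub_q_pow_mul_t_pow_ne_zero (Nat.succ_ne_zero _)

/-- The ratio of the eigenvalues on `E_η` of the Cherednik operators at the positions `k` and
`k + 1`, written in terms of the node of row `k` just past the end of row `k + 1`
(see `eigenvalue_leftIdx`). It is meant for `η_{k+1} < η_k`. -/
noncomputable def eigenvalueRatio (η : Fin n → ℕ) : K :=
  q ^ (η (leftIdx hk) - η (rightIdx hk)) * t ^ (leg n η (leftIdx hk) (η (rightIdx hk) + 1) + 1)

lemma eigenvalue_leftIdx (hη : Function.Injective η) (h : η (rightIdx hk) < η (leftIdx hk)) :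
    q ^ η (leftIdx hk) / t ^ legCo n η (leftIdx hk) =
      eigenvalueRatio hk η * (q ^ η (rightIdx hk) / t ^ legCo n η (rightIdx hk)) := by
  have hq : q ^ η (leftIdx hk) =
      q ^ (η (leftIdx hk) - η (rightIdx hk)) * q ^ η (rightIdx hk) := by
    rw [← pow_add, Nat.sub_add_cancel h.le]
  have ht := t_ne_zero
  rw [legCo_rightIdx hk hη h, eigenvalueRatio, hq]
  field_simp
  ring

lemma eigenvalueRatio_sub_one_ne_zero (h : η (rightIdx hk) < η (leftIdx hk)) :
    eigenvalueRatio hk η - 1 ≠ 0 := by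
  rw [← neg_ne_zero, neg_sub]
  exact one_sub_q_pow_mul_t_pow_ne_zero (by omega)

lemma dP_comp_sPerm (h : η (rightIdx hk) < η (leftIdx hk)) :
    dP n (η ∘ sPerm n k) * (1 - eigenvalueRatio hk η) =
      dP n η * (1 - t * eigenvalueRatio hk η) := by
  let critical : Σ _ : Fin n, ℕ := ⟨leftIdx hk, η (rightIdx hk) + 1⟩
  have hmem : critical ∈ univ.sigma fun i : Fin n => Icc 1 (η i) := by simpa [critical] using h
  have harm : η (leftIdx hk) - (η (rightIdx hk) + 1) + 1 =
      η (leftIdx hk) - η (rightIdx hk) := by omega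
  have hcongr : ∀ s ∈ (univ.sigma fun i : Fin n => Icc 1 (η i)).erase critical,
      1 - q ^ (η s.1 - s.2 + 1) * t ^ (leg n (η ∘ sPerm n k) (sPerm n k s.1) s.2 + 1) =
        1 - q ^ (η s.1 - s.2 + 1) * t ^ (leg n η s.1 s.2 + 1) := by
    rintro ⟨i, j⟩ hs
    have hne : (i, j) ≠ (leftIdx hk, η (rightIdx hk) + 1) := fun hc =>
      ne_of_mem_erase hs (by rw [(Prod.mk.inj hc).1, (Prod.mk.inj hc).2])
    rw [leg_comp_sPerm hk h, if_neg hne, add_zero]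
  rw [dP, dP, ← Equiv.prod_comp (sPerm n k)]
  simp only [Function.comp_apply, sPerm_apply_sPerm]
  rw [prod_sigma', prod_sigma', ← mul_prod_erase _ _ hmem, ← mul_prod_erase _ _ hmem,
    prod_congr rfl hcongr, leg_comp_sPerm hk h, if_pos rfl, harm, eigenvalueRatio]
  ring

end Diagram

section Intertwiner

variable {n k : ℕ} {T : ℕ → P n →ₗ[K] P n} {η : Fin n → ℕ} {E E' : P n}

lemma IsNSMac.Yop_apply_of_comp_sPerm (hE' : IsNSMac n q t T (η ∘ sPerm n k) E')
    (hη : Function.Injective η) (i : Fin n) : Yop n q t T (sPerm n k i) E' =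
      (q ^ η i / t ^ legCo n η i) • E' := by
  rw [hE'.2.2, legCo_comp_perm hη, Function.comp_apply, sPerm_apply_sPerm]

lemma IsNSMac.Yop_apply_add_smul (hT : IsDL n t T) (hk : k + 1 < n) (hη : Function.Injective η)
    (h : η (rightIdx hk) < η (leftIdx hk)) (hE' : IsNSMac n q t T (η ∘ sPerm n k) E') (i : Fin n) :
    Yop n q t T i (T k E' + ((t - 1) / (eigenvalueRatio hk η - 1)) • E') =
      (q ^ η i / t ^ legCo n η i) •
        (T k E' + ((t - 1) / (eigenvalueRatio hk η - 1)) • E') := by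
  have hz := eigenvalueRatio_sub_one_ne_zero hk h
  have hleft := hE'.Yop_apply_of_comp_sPerm hη (rightIdx hk)
  have hright := hE'.Yop_apply_of_comp_sPerm hη (leftIdx hk)
  rw [sPerm_rightIdx] at hleft
  rw [sPerm_leftIdx] at hright
  have hc : (q ^ η (leftIdx hk) / t ^ legCo n η (leftIdx hk) -
      q ^ η (rightIdx hk) / t ^ legCo n η (rightIdx hk)) *
        ((t - 1) / (eigenvalueRatio hk η - 1)) =
      (t - 1) * (q ^ η (rightIdx hk) / t ^ legCo n η (rightIdx hk)) := by
    rw [eigenvalue_leftIdx hk hη h, ← sub_one_mul, mul_comm, ← mul_assoc, div_mul_cancel₀ _ hz]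
  obtain ⟨hYleft, hYright⟩ := hT.Yop_intertwine t_ne_zero hk hleft hright hc
  by_cases hl : (i : ℕ) = k
  · obtain rfl : i = leftIdx hk := Fin.ext hl
    exact hYleft
  by_cases hr : (i : ℕ) = k + 1
  · obtain rfl : i = rightIdx hk := Fin.ext hr
    exact hYright
  have hYE' := hE'.Yop_apply_of_comp_sPerm hη i
  rw [sPerm_of_ne hl hr] at hYE'
  have hcomm : Yop n q t T i (T k E') = T k (Yop n q t T i E') := by
    rw [← Module.End.mul_apply, ← (hT.commute_Yop t_ne_zero hk hl hr).eq, Module.End.mul_apply]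
  rw [map_add, hcomm, map_smul, hYE', map_smul, smul_comm _ (q ^ η i / _), smul_add]

lemma IsNSMac.coeffAt_apply_add_smul (hT : IsDL n t T) (hk : k + 1 < n)
    (h : η (rightIdx hk) < η (leftIdx hk)) (hE' : IsNSMac n q t T (η ∘ sPerm n k) E') (c : K) :
    coeffAt η (T k E' + c • E') = t := by
  have hnot := not_domLE_comp_sPerm hk h
  have hzero : coeffAt η E' = 0 :=
    hE'.coeffAt_eq_zero_of_not_domLT (sqNorm_comp_perm η (sPerm n k)).symm
      (fun hη => hnot (hη ▸ ⟨rfl, fun _ => le_rfl⟩)) fun hdom => hnot hdom.1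
  have hmem : E' ∈ sqNormLE (Fin n) K (sqNorm η) := by
    simpa only [sqNorm_comp_perm] using hE'.mem_sqNormLE
  rw [map_add, map_smul, hzero, hT.coeffAt_apply_of_le hk hmem h.le, hE'.coeffAt_self, smul_zero,
    add_zero, mul_one]

lemma IsNSMac.apply_add_smul (hT : IsDL n t T) (hk : k + 1 < n) (hη : Function.Injective η)
    (h : η (rightIdx hk) < η (leftIdx hk)) (hE : IsNSMac n q t T η E)
    (hE' : IsNSMac n q t T (η ∘ sPerm n k) E') :
    T k E' + ((t - 1) / (eigenvalueRatio hk η - 1)) • E' = t • E := by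
  refine sub_eq_zero.1 (hT.eq_zero_of_Yop_eq_smul (η := η) (fun i => ?_) ?_)
  · rw [map_sub, hE'.Yop_apply_add_smul hT hk hη h, map_smul, hE.2.2, smul_comm t, smul_sub]
  · rw [map_sub, hE'.coeffAt_apply_add_smul hT hk h, map_smul, hE.coeffAt_self, smul_eq_mul,
      mul_one, sub_self]

lemma IsDL.apply_apply_sub_smul {tv : K} (hT : IsDL n tv T) (hk : k + 1 < n) (f : P n) :
    T k (T k f - tv • f) = -(T k f - tv • f) := by
  rw [map_sub, hT.apply_apply hk, map_smul, sub_smul, one_smul]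
  abel

lemma IsNSMac.apply_smul_sub_smul (hT : IsDL n t T) (hk : k + 1 < n)
    (hη : Function.Injective η) (h : η (rightIdx hk) < η (leftIdx hk))
    (hE : IsNSMac n q t T η E) (hE' : IsNSMac n q t T (η ∘ sPerm n k) E') :
    T k (t • E - (dP n (η ∘ sPerm n k) / dP n η) • E') =
      -(t • E - (dP n (η ∘ sPerm n k) / dP n η) • E') := by
  have hz := eigenvalueRatio_sub_one_ne_zero hk h
  have hratio : dP n (η ∘ sPerm n k) / dP n η = (t - 1) / (eigenvalueRatio hk η - 1) + t := by
    rw [div_eq_iff (dP_ne_zero η), div_add' _ _ _ hz, div_mul_eq_mul_div, eq_div_iff hz]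
    linear_combination -dP_comp_sPerm hk h
  have hE_sub : t • E - (dP n (η ∘ sPerm n k) / dP n η) • E' = T k E' - t • E' := by
    rw [← hE.apply_add_smul hT hk hη h hE', hratio, add_smul]
    abel
  rw [hE_sub, hT.apply_apply_sub_smul hk]

end Intertwiner

section Antisymmetrization

variable {n k : ℕ} {T : ℕ → P n →ₗ[K] P n} {Tw : Equiv.Perm (Fin n) → P n →ₗ[K] P n}
  {κ : Fin n → ℕ} {E : Equiv.Perm (Fin n) → P n} {S : P n}

/-- The coefficient of `E_{σκ}` in the expansion of the `q`-antisymmetric Macdonald polynomial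
`S_κ`. -/
noncomputable def antisymCoeff (κ : Fin n → ℕ) (σ : Equiv.Perm (Fin n)) : K :=
  ((-t) ^ inversions σ)⁻¹ * (dP n (κ ∘ ⇑σ⁻¹) / dP n κ)

/-- The `q`-antisymmetric combination of the polynomials `E σ`, which stand for `E_{σκ}`. -/
noncomputable def antisymSum (κ : Fin n → ℕ) (E : Equiv.Perm (Fin n) → P n) : P n :=
  ∑ σ : Equiv.Perm (Fin n), antisymCoeff κ σ • E σ

lemma antisymCoeff_one (κ : Fin n → ℕ) : antisymCoeff κ 1 = 1 := by
  simpa [antisymCoeff, inversions_one] using div_self (dP_ne_zero κ)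

lemma comp_sPerm_mul_inv (κ : Fin n → ℕ) (k : ℕ) (σ : Equiv.Perm (Fin n)) :
    κ ∘ ⇑(sPerm n k * σ)⁻¹ = (κ ∘ ⇑σ⁻¹) ∘ sPerm n k := by
  rw [mul_inv_rev, sPerm_inv]
  rfl

lemma inversions_sPerm_mul (hk : k + 1 < n) {σ : Equiv.Perm (Fin n)}
    (hσ : σ⁻¹ (leftIdx hk) < σ⁻¹ (rightIdx hk)) :
    inversions (sPerm n k * σ) = inversions σ + 1 := by
  rw [← inversions_inv, mul_inv_rev, sPerm_inv, inversions_mul_sPerm hk hσ, inversions_inv]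

lemma t_mul_antisymCoeff_sPerm_mul (hk : k + 1 < n) {σ : Equiv.Perm (Fin n)}
    (hσ : σ⁻¹ (leftIdx hk) < σ⁻¹ (rightIdx hk)) :
    t * antisymCoeff κ (sPerm n k * σ) = -(antisymCoeff κ σ *
      (dP n ((κ ∘ ⇑σ⁻¹) ∘ sPerm n k) / dP n (κ ∘ ⇑σ⁻¹))) := by
  have ht := t_ne_zero
  have hσκ := dP_ne_zero (κ ∘ ⇑σ⁻¹)
  rw [antisymCoeff, antisymCoeff, comp_sPerm_mul_inv, inversions_sPerm_mul hk hσ, pow_succ]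
  field_simp

lemma apply_antisymCoeff_smul_pair (hκ : StrictAnti κ) (hT : IsDL n t T)
    (hE : ∀ σ : Equiv.Perm (Fin n), IsNSMac n q t T (κ ∘ ⇑σ⁻¹) (E σ)) (hk : k + 1 < n)
    {σ : Equiv.Perm (Fin n)} (hσ : σ⁻¹ (leftIdx hk) < σ⁻¹ (rightIdx hk)) :
    T k (antisymCoeff κ σ • E σ + antisymCoeff κ (sPerm n k * σ) • E (sPerm n k * σ)) =
      -(antisymCoeff κ σ • E σ + antisymCoeff κ (sPerm n k * σ) • E (sPerm n k * σ)) := by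
  have hE' := hE (sPerm n k * σ)
  rw [comp_sPerm_mul_inv] at hE'
  have hpair := (hE σ).apply_smul_sub_smul hT hk (hκ.injective.comp σ⁻¹.injective) (hκ hσ) hE'
  have hfactor : t • (antisymCoeff κ σ • E σ +
      antisymCoeff κ (sPerm n k * σ) • E (sPerm n k * σ)) =
      antisymCoeff κ σ • (t • E σ - (dP n ((κ ∘ ⇑σ⁻¹) ∘ sPerm n k) /
        dP n (κ ∘ ⇑σ⁻¹)) • E (sPerm n k * σ)) := by
    rw [smul_add, smul_smul t (antisymCoeff κ (_ * _)), t_mul_antisymCoeff_sPerm_mul hk hσ,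
      neg_smul, smul_sub, smul_comm t, mul_smul, sub_eq_add_neg]
  apply smul_right_injective _ t_ne_zero
  dsimp only
  rw [← map_smul, smul_neg, hfactor, map_smul, hpair, smul_neg]

lemma apply_antisymSum (hκ : StrictAnti κ) (hT : IsDL n t T)
    (hE : ∀ σ : Equiv.Perm (Fin n), IsNSMac n q t T (κ ∘ ⇑σ⁻¹) (E σ)) (k : ℕ)
    (hk : k + 1 < n) : T k (antisymSum κ E) = -antisymSum κ E := by
  have hpair {σ : Equiv.Perm (Fin n)} (hσ : σ⁻¹ (leftIdx hk) < σ⁻¹ (rightIdx hk)) :=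
    apply_antisymCoeff_smul_pair hκ hT hE hk hσ
  have hcancel (σ : Equiv.Perm (Fin n)) : sPerm n k * (sPerm n k * σ) = σ := by
    rw [← mul_assoc, sPerm_mul_self, one_mul]
  have hsum : ∑ σ, (T k (antisymCoeff κ σ • E σ) + antisymCoeff κ σ • E σ) = 0 := by
    refine sum_involution (fun σ _ => sPerm n k * σ) (fun σ _ => ?_) (fun σ _ _ hfix => ?_)
      (fun _ _ => mem_univ _) fun σ _ => hcancel σ
    · rw [add_add_add_comm, ← map_add]
      refine add_eq_zero_iff_eq_neg.2 ?_
      rcases lt_trichotomy (σ⁻¹ (leftIdx hk)) (σ⁻¹ (rightIdx hk)) with h | h | h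
      · exact hpair h
      · exact absurd (σ⁻¹.injective h) (leftIdx_lt_rightIdx hk).ne
      · have h' : (sPerm n k * σ)⁻¹ (leftIdx hk) < (sPerm n k * σ)⁻¹ (rightIdx hk) := by
          rwa [mul_inv_rev, sPerm_inv, Equiv.Perm.mul_apply, Equiv.Perm.mul_apply, sPerm_leftIdx,
            sPerm_rightIdx]
        simpa only [hcancel, add_comm] using hpair h'
    · have hone : sPerm n k = 1 := mul_eq_right.1 hfix
      exact (leftIdx_lt_rightIdx hk).ne' (by rw [← sPerm_leftIdx hk, hone, Equiv.Perm.one_apply])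
  rw [sum_add_distrib, ← map_sum] at hsum
  exact add_eq_zero_iff_eq_neg.1 hsum

lemma sum_Yop_antisymSum (hκ : StrictAnti κ)
    (hE : ∀ σ : Equiv.Perm (Fin n), IsNSMac n q t T (κ ∘ ⇑σ⁻¹) (E σ)) :
    (∑ i : Fin n, Yop n q t T i) (antisymSum κ E) =
      (∑ i : Fin n, q ^ κ i / t ^ (i : ℕ)) • antisymSum κ E := by
  rw [antisymSum, map_sum, smul_sum]
  refine sum_congr rfl fun σ _ => ?_
  have hlegCo (i : Fin n) : legCo n (κ ∘ ⇑σ⁻¹) i = (σ⁻¹ i : Fin n) :=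
    (legCo_comp_perm hκ.injective σ⁻¹ i).trans (legCo_of_strictAnti hκ _)
  rw [map_smul, smul_comm, LinearMap.sum_apply]
  simp only [(hE σ).2.2, hlegCo, Function.comp_apply]
  rw [← sum_smul, Equiv.sum_comp σ⁻¹ fun i : Fin n => q ^ κ i / t ^ (i : ℕ)]

lemma coeffAt_antisymSum (hκ : StrictAnti κ)
    (hE : ∀ σ : Equiv.Perm (Fin n), IsNSMac n q t T (κ ∘ ⇑σ⁻¹) (E σ)) :
    coeffAt κ (antisymSum κ E) = 1 := by
  rw [antisymSum, map_sum, sum_eq_single 1]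
  · rw [map_smul, antisymCoeff_one, one_smul]
    exact (hE 1).coeffAt_self
  · intro σ _ hσ
    have hnorm : sqNorm κ = sqNorm (κ ∘ ⇑σ⁻¹) := (sqNorm_comp_perm κ σ⁻¹).symm
    have hne : κ ≠ κ ∘ ⇑σ⁻¹ := fun h =>
      hσ (inv_eq_one.1 (Equiv.ext fun i => (hκ.injective (congrFun h i)).symm))
    have hE0 : coeffAt κ (E σ) = 0 := (hE σ).coeffAt_eq_zero_of_not_domLT hnorm hne
      fun hdom => (hdom.sqNorm_lt hκ.antitone).ne hnorm
    rw [map_smul, hE0, smul_zero]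
  · simp

lemma IsQASMac.coeffAt_self {qv : K} (hκ : StrictAnti κ) (hT : IsDL n t T) (hTw : IsTsigma n T Tw)
    (hS : IsQASMac n qv t T Tw κ S) : coeffAt κ S = 1 := by
  obtain ⟨-, ⟨v, rfl⟩, -⟩ := hS
  have hlower : coeffAt κ (∑ᶠ μ ∈ {μ : Fin n → ℕ | StrictAnti μ ∧ domLT n μ κ},
      v μ • Uminus n t Tw (xmon n μ)) = 0 := by
    refine finsum_mem_induction (fun f => coeffAt κ f = 0) (map_zero _) (fun f g hf hg => ?_)
      fun μ hμ => ?_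
    · rw [map_add, hf, hg, add_zero]
    · rw [map_smul, hTw.coeffAt_Uminus_of_lt hT hκ (hμ.2.sqNorm_lt hμ.1.antitone), smul_zero]
  rw [map_add, hTw.coeffAt_Uminus_self hT hκ, hlower, add_zero]

end Antisymmetrization

end Stmt8

theorem stmt_8 (n : ℕ) (κ : Fin n → ℕ) (hκ : StrictAnti κ)
    (T : ℕ → P n →ₗ[K] P n) (hT : IsDL n t T)
    (Tw : Equiv.Perm (Fin n) → P n →ₗ[K] P n) (hTw : IsTsigma n T Tw)
    (E : Equiv.Perm (Fin n) → P n)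
    (hE : ∀ σ : Equiv.Perm (Fin n), IsNSMac n q t T (fun i => κ (σ⁻¹ i)) (E σ))
    (S : P n) (hS : IsQASMac n q t T Tw κ S) :
    S = ∑ σ : Equiv.Perm (Fin n),
      (((-t) ^ inversions σ)⁻¹ * (dP n (fun i => κ (σ⁻¹ i)) / dP n κ)) • E σ := by
  have hR := apply_antisymSum hκ hT hE
  refine sub_eq_zero.1 (hT.eq_zero_of_antisymmetric (κ := κ) (f := S - antisymSum κ E) ?_ ?_ ?_)
  · intro k hk
    rw [map_sub, hS.1 k hk, hR k hk, neg_sub_neg, neg_sub]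
  · rw [map_sub, hS.2.2, sum_Yop_antisymSum hκ hE, smul_sub]
    simp only [div_eq_mul_inv]
  · rw [map_sub, hS.coeffAt_self hκ hT hTw, coeffAt_antisymSum hκ hE, sub_self]
end

section
/- Let κ be a partition with at most n parts. Let P_κ^{(q,t)} be the symmetric Macdonald polynomial with parameters (q,t), and let P_κ^{(q^{−1},t^{−1})} be the polynomial defined by the same conditions with q and t replaced by q^{−1} and t^{−1} throughout (in particular using the Cherednik operators built from q^{−1},t^{−1}, and eigenvalue Σ_i q^{−κ_i}t^{i−1}); assume both exist and are unique. Then P_κ^{(q^{−1},t^{−1})} = P_κ^{(q,t)}. -/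
/- STATEMENT 9: the symmetric Macdonald polynomial satisfies
P_κ^{(q⁻¹,t⁻¹)} = P_κ^{(q,t)}. -/

open Finset MvPolynomial

namespace Stmt9

/-- leg colength l'_η(i) -/
def legCo (n : ℕ) (η : Fin n → ℕ) (i : Fin n) : ℕ :=
  (univ.filter fun k => k < i ∧ η i ≤ η k).card +
  (univ.filter fun k => i < k ∧ η i < η k).card

/-- leg length l(s) of the node s = (i,j) -/
def leg (n : ℕ) (η : Fin n → ℕ) (i : Fin n) (j : ℕ) : ℕ :=
  (univ.filter fun k => i < k ∧ j ≤ η k ∧ η k ≤ η i).card +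
  (univ.filter fun k => k < i ∧ j ≤ η k + 1 ∧ η k + 1 ≤ η i).card

/-- The field K = ℚ(q,t). -/
abbrev K : Type := FractionRing (MvPolynomial (Fin 2) ℚ)

noncomputable def q : K := algebraMap (MvPolynomial (Fin 2) ℚ) K (X 0)
noncomputable def t : K := algebraMap (MvPolynomial (Fin 2) ℚ) K (X 1)

/-- The polynomial ring K[x_1,…,x_n]. -/
abbrev P (n : ℕ) : Type := MvPolynomial (Fin n) K

/-- the automorphism s_k exchanging x_k and x_{k+1} (0-indexed; identity out of range) -/
noncomputable def sOp (n : ℕ) (k : ℕ) : P n →ₗ[K] P n :=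
  if h : k + 1 < n then
    (rename (Equiv.swap (⟨k, Nat.lt_of_succ_lt h⟩ : Fin n) ⟨k + 1, h⟩)).toLinearMap
  else LinearMap.id

/-- τ_1 : x_1 ↦ qv·x_1 (the first variable is 0-indexed) -/
noncomputable def tauOp (n : ℕ) (qv : K) : P n →ₗ[K] P n :=
  (aeval (fun j : Fin n => if (j : ℕ) = 0 then C qv * X j else X j)).toLinearMap

/-- ω := s_{n−1}⋯s_2 s_1 τ_1 -/
noncomputable def omegaOp (n : ℕ) (qv : K) : P n →ₗ[K] P n :=
  (List.range (n - 1)).foldl (fun acc k => sOp n k ∘ₗ acc) (tauOp n qv)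

/-- The defining property of the Demazure–Lustig operators T_k (0-indexed), for the
parameter value tv: (x_k − x_{k+1})·(T_k f) = (x_k − x_{k+1})·tv·f
+ (tv·x_k − x_{k+1})·(s_k f − f), i.e. T_k f is the polynomial quotient from the usual
definition. -/
def IsDL (n : ℕ) (tv : K) (T : ℕ → P n →ₗ[K] P n) : Prop :=
  ∀ k, ∀ hk : k + 1 < n, ∀ f : P n,
    (X (⟨k, Nat.lt_of_succ_lt hk⟩ : Fin n) - X ⟨k + 1, hk⟩) * T k f =
      (X (⟨k, Nat.lt_of_succ_lt hk⟩ : Fin n) - X ⟨k + 1, hk⟩) * (C tv * f) +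
      (C tv * X (⟨k, Nat.lt_of_succ_lt hk⟩ : Fin n) - X ⟨k + 1, hk⟩) * (sOp n k f - f)

/-- T_k⁻¹ = tv⁻¹ − 1 + tv⁻¹ T_k -/
noncomputable def Tinv (n : ℕ) (tv : K) (T : ℕ → P n →ₗ[K] P n) (k : ℕ) : P n →ₗ[K] P n :=
  tv⁻¹ • LinearMap.id - LinearMap.id + tv⁻¹ • T k

/-- The Cherednik operator Y_i (0-indexed i):
Y_i = tv^{i+1−n}·T_i⋯T_{n−2}·ω·T_0⁻¹⋯T_{i−1}⁻¹. -/
noncomputable def Yop (n : ℕ) (qv tv : K) (T : ℕ → P n →ₗ[K] P n) (i : Fin n) :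
    P n →ₗ[K] P n :=
  (tv ^ (n - 1 - (i : ℕ)))⁻¹ •
    (((List.range' (i : ℕ) (n - 1 - (i : ℕ))).foldr (fun k acc => T k ∘ₗ acc) LinearMap.id) ∘ₗ
      omegaOp n qv ∘ₗ
      ((List.range (i : ℕ)).foldr (fun k acc => Tinv n tv T k ∘ₗ acc) LinearMap.id))

/-- the decreasing rearrangement η⁺ of η -/
noncomputable def sortDesc (n : ℕ) (η : Fin n → ℕ) : Fin n → ℕ :=
  fun i => η (Tuple.sort η i.rev)

/-- dominance order on n-tuples (of equal sum) -/
def domLE (n : ℕ) (ν μ : Fin n → ℕ) : Prop :=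
  (∑ i, ν i = ∑ i, μ i) ∧
  ∀ p : Fin n, ∑ i ∈ univ.filter (· ≤ p), ν i ≤ ∑ i ∈ univ.filter (· ≤ p), μ i

def domLT (n : ℕ) (ν μ : Fin n → ℕ) : Prop := domLE n ν μ ∧ ν ≠ μ

/-- the order ≺ : ν ≺ η iff ν⁺ < η⁺, or ν⁺ = η⁺ and ν < η (dominance order) -/
noncomputable def prec (n : ℕ) (ν η : Fin n → ℕ) : Prop :=
  domLT n (sortDesc n ν) (sortDesc n η) ∨ (sortDesc n ν = sortDesc n η ∧ domLT n ν η)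

/-- E is the non-symmetric Macdonald polynomial for the composition η (with parameters
qv, tv and Demazure–Lustig operators T): it has the triangular form
E = x^η + Σ_{ν≺η} b_{ην} x^ν and satisfies Y_i E = qv^{η_i}·tv^{−l'_η(i)}·E for all i. -/
noncomputable def IsNSMac (n : ℕ) (qv tv : K) (T : ℕ → P n →ₗ[K] P n)
    (η : Fin n → ℕ) (E : P n) : Prop :=
  coeff (Finsupp.equivFunOnFinite.symm η) E = 1 ∧
  (∀ ν : Fin n →₀ ℕ, coeff ν E ≠ 0 → (ν : Fin n → ℕ) = η ∨ prec n (ν : Fin n → ℕ) η) ∧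
  ∀ i : Fin n, Yop n qv tv T i E = (qv ^ η i / tv ^ legCo n η i) • E

/-- Pp is the symmetric Macdonald polynomial for the partition κ (with parameters qv, tv
and Demazure–Lustig operators T): it is symmetric, of the triangular form
m_κ + Σ_{μ<κ} u_{κμ} m_μ, and satisfies (Σ_i Y_i) Pp = (Σ_i qv^{κ_i}·tv^{1−i}) Pp. -/
noncomputable def IsSymMac (n : ℕ) (qv tv : K) (T : ℕ → P n →ₗ[K] P n)
    (κ : Fin n → ℕ) (Pp : P n) : Prop :=
  Pp.IsSymmetric ∧
  coeff (Finsupp.equivFunOnFinite.symm κ) Pp = 1 ∧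
  (∀ ν : Fin n →₀ ℕ, coeff ν Pp ≠ 0 →
    sortDesc n (ν : Fin n → ℕ) = κ ∨ domLT n (sortDesc n (ν : Fin n → ℕ)) κ) ∧
  (∑ i : Fin n, Yop n qv tv T i) Pp = (∑ i : Fin n, qv ^ κ i * (tv ^ (i : ℕ))⁻¹) • Pp

end Stmt9

open Stmt9

/-!
Each `Y i` acts on symmetric polynomials as a scalar multiple of `T i ⋯ T (n-2) ω`, and these
operators are consecutive differences of partial sums of Macdonald's `q`-difference operator
`∑ i, (∏ j ≠ i, (t xᵢ - xⱼ) / (xᵢ - xⱼ)) T_{q,i}`. The sum of the `Y i` thus telescopes to that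
operator, up to a power of `t`. By Lagrange interpolation it commutes with the operator with
parameters `q⁻¹`, `t⁻¹`. The eigenvalue of an eigenvector is read off its lexicographically leading
monomial, after multiplication by the Vandermonde product; so eigenspaces are lines, and commuting
operators with simple spectrum have the same eigenvectors.
-/

namespace Macdonald

section DifferenceOperator

/-- The point `x` with its `i`-th coordinate multiplied by `c`. -/
def scaleAt {ι R : Type*} [DecidableEq ι] [Mul R] (c : R) (x : ι → R) (i : ι) : ι → R :=
  Function.update x i (c * x i)

section Scale

variable {ι R : Type*} [DecidableEq ι]

lemma scaleAt_self [Mul R] (c : R) (x : ι → R) (i : ι) : scaleAt c x i i = c * x i :=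
  Function.update_self ..

lemma scaleAt_of_ne [Mul R] (c : R) (x : ι → R) {i j : ι} (h : j ≠ i) : scaleAt c x i j = x j :=
  Function.update_of_ne h ..

lemma scaleAt_apply [Monoid R] (c : R) (x : ι → R) (i j : ι) :
    scaleAt c x i j = (if j = i then c else 1) * x j := by
  rcases eq_or_ne j i with rfl | h
  · rw [scaleAt_self, if_pos rfl]
  · rw [scaleAt_of_ne c x h, if_neg h, one_mul]

lemma scaleAt_comp_perm [Mul R] (c : R) (x : ι → R) (σ : Equiv.Perm ι) (i : ι) :
    scaleAt c (x ∘ σ) i = scaleAt c x (σ i) ∘ σ := by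
  unfold scaleAt
  rw [Function.update_comp_equiv, Equiv.symm_apply_apply, Function.comp_apply]

lemma scaleAt_scaleAt_comm [CommMonoid R] (a b : R) (x : ι → R) (i j : ι) :
    scaleAt a (scaleAt b x i) j = scaleAt b (scaleAt a x j) i := by
  funext k
  simp only [scaleAt_apply]
  exact mul_left_comm ..

lemma scaleAt_inv_scaleAt [GroupWithZero R] {c : R} (hc : c ≠ 0) (x : ι → R) (i : ι) :
    scaleAt c⁻¹ (scaleAt c x i) i = x := by
  simp [scaleAt, hc]

lemma scaleAt_injective [Mul R] {c : R} {x : ι → R} (hx : Function.Injective x)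
    (h : ∀ i j, i ≠ j → c * x i ≠ x j) (i : ι) : Function.Injective (scaleAt c x i) := by
  intro j k hjk
  by_contra hne
  rcases eq_or_ne j i with rfl | hj
  · rw [scaleAt_self, scaleAt_of_ne c x (Ne.symm hne)] at hjk
    exact h _ _ hne hjk
  rcases eq_or_ne k i with rfl | hk
  · rw [scaleAt_self, scaleAt_of_ne c x hne] at hjk
    exact h _ _ (Ne.symm hne) hjk.symm
  · rw [scaleAt_of_ne c x hj, scaleAt_of_ne c x hk] at hjk
    exact hne (hx hjk)

end Scale

variable {ι L : Type*} [Field L]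

/-- The factor `(τ a - b) / (a - b)` of the coefficients of Macdonald's operator. As
`x / 0 = 0`, this expression has the value `1` at `a = b`, so that products of such factors may
run over all indices. -/
def ratio (τ a b : L) : L := 1 + (τ - 1) * a / (a - b)

lemma ratio_self (τ a : L) : ratio τ a a = 1 := by
  simp [ratio]

lemma ratio_of_ne (τ : L) {a b : L} (h : a ≠ b) : ratio τ a b = (τ * a - b) / (a - b) := by
  have := sub_ne_zero.2 h
  unfold ratio
  field_simp
  ring

lemma ratio_add_ratio (τ : L) {a b : L} (h : a ≠ b) : ratio τ a b + ratio τ b a = τ + 1 := by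
  have hab := sub_ne_zero.2 h
  have hba := sub_ne_zero.2 h.symm
  unfold ratio
  field_simp
  ring

/-- The sum `∑ i, (∏ j, (τ xᵢ - xⱼ) / (xᵢ - xⱼ)) * G i` defining Macdonald's operator,
with all indices restricted to `S`. -/
def macdonaldSum (τ : L) (x G : ι → L) (S : Finset ι) : L :=
  ∑ i ∈ S, (∏ j ∈ S, ratio τ (x i) (x j)) * G i

lemma macdonaldSum_insert [DecidableEq ι] (τ : L) (x G : ι → L) {S : Finset ι} {a : ι}
    (ha : a ∉ S) :
    macdonaldSum τ x G (insert a S) = (∏ j ∈ S, ratio τ (x a) (x j)) * G a +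
      ∑ i ∈ S, ratio τ (x i) (x a) * (∏ j ∈ S, ratio τ (x i) (x j)) * G i := by
  simp only [macdonaldSum, sum_insert ha, prod_insert ha, ratio_self, one_mul]

lemma macdonaldSum_comp_perm (τ : L) (x G : ι → L) (σ : Equiv.Perm ι) (S : Finset ι) :
    macdonaldSum τ (x ∘ σ) (G ∘ σ) S = macdonaldSum τ x G (S.map σ.toEmbedding) := by
  simp [macdonaldSum]

/-- The Demazure–Lustig operator exchanging `a` and `b` takes the increment of the sum at `b`
to its increment at `a`. -/
lemma macdonaldSum_insert_insert_sub [DecidableEq ι] (τ : L) (x G : ι → L)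
    (hx : Function.Injective x) {S : Finset ι} {a b : ι} (ha : a ∉ S) (hb : b ∉ S) (hab : a ≠ b) :
    macdonaldSum τ x G (insert a (insert b S)) - macdonaldSum τ x G (insert b S) =
      τ * (macdonaldSum τ x G (insert b S) - macdonaldSum τ x G S) +
      ratio τ (x a) (x b) *
        (macdonaldSum τ x G (insert a S) - macdonaldSum τ x G (insert b S)) := by
  have hS : ∑ i ∈ S, ratio τ (x i) (x a) * (ratio τ (x i) (x b) *
        ∏ j ∈ S, ratio τ (x i) (x j)) * G i -
      ∑ i ∈ S, ratio τ (x i) (x b) * (∏ j ∈ S, ratio τ (x i) (x j)) * G i =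
      τ * (∑ i ∈ S, ratio τ (x i) (x b) * (∏ j ∈ S, ratio τ (x i) (x j)) * G i -
        ∑ i ∈ S, (∏ j ∈ S, ratio τ (x i) (x j)) * G i) +
      ratio τ (x a) (x b) *
        (∑ i ∈ S, ratio τ (x i) (x a) * (∏ j ∈ S, ratio τ (x i) (x j)) * G i -
        ∑ i ∈ S, ratio τ (x i) (x b) * (∏ j ∈ S, ratio τ (x i) (x j)) * G i) := by
    simp only [← sum_sub_distrib, mul_sum, ← sum_add_distrib]
    refine sum_congr rfl fun i hi => ?_
    have hia := sub_ne_zero.2 (hx.ne (ne_of_mem_of_not_mem hi ha))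
    have hib := sub_ne_zero.2 (hx.ne (ne_of_mem_of_not_mem hi hb))
    have hab := sub_ne_zero.2 (hx.ne hab)
    unfold ratio
    field_simp
    ring
  have hab' : a ∉ insert b S := by simp [hab, ha]
  rw [macdonaldSum_insert τ x G hab', macdonaldSum_insert τ x G ha, macdonaldSum_insert τ x G hb,
    macdonaldSum]
  simp only [prod_insert hb, sum_insert hb, ratio_self, one_mul]
  linear_combination hS + (∏ j ∈ S, ratio τ (x b) (x j)) * G b * ratio_add_ratio τ (hx.ne hab)

variable [Fintype ι]

/-- The coefficient `Aᵢ(x) = ∏ j ≠ i, (τ xᵢ - xⱼ) / (xᵢ - xⱼ)` of Macdonald's operator. -/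
def macdonaldCoeff (τ : L) (x : ι → L) (i : ι) : L := ∏ j, ratio τ (x i) (x j)

lemma macdonaldCoeff_comp_perm (τ : L) (x : ι → L) (σ : Equiv.Perm ι) (i : ι) :
    macdonaldCoeff τ (x ∘ σ) i = macdonaldCoeff τ x (σ i) :=
  Equiv.prod_comp σ fun j => ratio τ (x (σ i)) (x j)

variable [DecidableEq ι]

lemma macdonaldCoeff_eq_prod_erase (τ : L) (x : ι → L) (i : ι) :
    macdonaldCoeff τ x i = ∏ j ∈ univ.erase i, ratio τ (x i) (x j) := by
  rw [macdonaldCoeff, ← mul_prod_erase univ _ (mem_univ i), ratio_self, one_mul]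

lemma macdonaldCoeff_scaleAt_self (c τ : L) (x : ι → L) (i : ι) :
    macdonaldCoeff τ (scaleAt c x i) i = ∏ j ∈ univ.erase i, ratio τ (c * x i) (x j) := by
  rw [macdonaldCoeff_eq_prod_erase]
  refine prod_congr rfl fun j hj => ?_
  rw [scaleAt_self, scaleAt_of_ne c x (ne_of_mem_erase hj)]

lemma macdonaldCoeff_scaleAt_of_ne (c τ : L) (x : ι → L) {i j : ι} (h : j ≠ i) :
    macdonaldCoeff τ (scaleAt c x i) j =
      ratio τ (x j) (c * x i) * ∏ k ∈ univ.erase i, ratio τ (x j) (x k) := by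
  rw [macdonaldCoeff, ← mul_prod_erase univ _ (mem_univ i), scaleAt_self, scaleAt_of_ne c x h]
  congr 1
  refine prod_congr rfl fun k hk => ?_
  rw [scaleAt_of_ne c x (ne_of_mem_erase hk)]

/-- Macdonald's `q`-difference operator `∑ i, Aᵢ(x) T_{c,i}`, with shift parameter `c` and
unnormalized as in Macdonald's book, acting on arbitrary functions of the point `x`. -/
def macdonaldOp (c τ : L) (F : (ι → L) → L) (x : ι → L) : L :=
  ∑ i, macdonaldCoeff τ x i * F (scaleAt c x i)

lemma macdonaldOp_comp_perm (c τ : L) {F : (ι → L) → L}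
    (hF : ∀ x, ∀ σ : Equiv.Perm ι, F (x ∘ σ) = F x) (x : ι → L) (σ : Equiv.Perm ι) :
    macdonaldOp c τ F (x ∘ σ) = macdonaldOp c τ F x := by
  simp only [macdonaldOp, macdonaldCoeff_comp_perm, scaleAt_comp_perm, hF]
  exact Equiv.sum_comp σ fun i => macdonaldCoeff τ x i * F (scaleAt c x i)

open Lagrange in
/-- With `f = ∏ (T - zᵢ)` and `g = ∏ (T - yᵢ)`, this is Lagrange interpolation of `(f - g) / T` at
the nodes `yᵢ`, read off at its vanishing top coefficient. -/
lemma sum_mul_prod_erase_sub_div_sub_eq_zero (y z : ι → L) (hy : Function.Injective y)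
    (hy0 : ∀ i, y i ≠ 0) (hprod : ∏ i, z i = ∏ i, y i) :
    ∑ i, (y i - z i) / y i * ∏ j ∈ univ.erase i, (y i - z j) / (y i - y j) = 0 := by
  rcases isEmpty_or_nonempty ι with _ | _
  · exact Fintype.sum_empty _
  set f := nodal univ z - nodal univ y
  have hdeg : f.degree < Fintype.card ι := by
    simpa [nodal_monic.leadingCoeff] using Polynomial.degree_sub_lt_left
      ((degree_nodal (s := univ) (v := z)).trans degree_nodal.symm) nodal_ne_zero
  have hf0 : f.coeff 0 = 0 := by
    simp [f, Polynomial.coeff_zero_eq_eval_zero, eval_nodal, prod_neg, hprod]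
  have heval (i : ι) : f.divX.eval (y i) = (∏ j, (y i - z j)) / y i := by
    have h := congrArg (Polynomial.eval (y i)) f.divX_mul_X_add
    simp only [hf0, map_zero, add_zero, Polynomial.eval_mul, Polynomial.eval_X, f,
      Polynomial.eval_sub, eval_nodal_at_node (mem_univ i), sub_zero, eval_nodal] at h
    exact eq_div_of_mul_eq (hy0 i) h
  have hdiv : f.divX.degree < Fintype.card ι := by
    refine (Polynomial.degree_lt_iff_coeff_zero ..).2 fun m hm => ?_
    rw [Polynomial.coeff_divX]
    exact Polynomial.coeff_eq_zero_of_degree_lt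
      (hdeg.trans_le (by exact_mod_cast hm.trans m.le_succ))
  have hsum := coeff_eq_sum (s := univ) hy.injOn hdiv
  rw [Polynomial.coeff_divX, card_univ, Nat.sub_add_cancel Fintype.card_pos,
    Polynomial.coeff_eq_zero_of_degree_lt hdeg] at hsum
  rw [hsum]
  refine sum_congr rfl fun i _ => ?_
  rw [heval, ← mul_prod_erase univ _ (mem_univ i), prod_div_distrib]
  exact div_mul_div_comm .. |>.trans (div_div ..).symm

/-- The summands of the Lagrange identity at the nodes `a xᵢ`. -/
lemma prod_sub_div_sub_eq_macdonaldCoeff_mul (a τ : L) (hτ : τ ≠ 0) {x : ι → L}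
    (hx : Function.Injective x) (i : ι) (hi : x i ≠ 0) (hxa : ∀ j, a * x i ≠ x j) :
    (1 - τ⁻¹) * ((∏ j ∈ univ.erase i, (x i - τ⁻¹ * x j) / (x i - x j)) *
        ∏ j, (a * x i - τ * x j) / (a * x i - x j)) =
      (1 - τ⁻¹) * ((a - τ) / (a - 1)) *
        (macdonaldCoeff τ x i * macdonaldCoeff τ⁻¹ (scaleAt a x i) i) := by
  have hfac (j : ι) (hj : j ∈ univ.erase i) :
      (x i - τ⁻¹ * x j) / (x i - x j) * ((a * x i - τ * x j) / (a * x i - x j)) =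
      ratio τ (x i) (x j) * ratio τ⁻¹ (a * x i) (x j) := by
    have hij : x i ≠ x j := hx.ne (ne_of_mem_erase hj).symm
    rw [ratio_of_ne _ hij, ratio_of_ne _ (hxa j)]
    have := sub_ne_zero.2 hij
    have := sub_ne_zero.2 (hxa j)
    field_simp
  have hdiag : (a * x i - τ * x i) / (a * x i - x i) = (a - τ) / (a - 1) := by
    rw [← sub_mul, ← sub_one_mul, mul_div_mul_right _ _ hi]
  rw [macdonaldCoeff_eq_prod_erase, macdonaldCoeff_scaleAt_self, ← prod_mul_distrib,
    ← prod_congr rfl hfac, prod_mul_distrib, ← mul_prod_erase univ _ (mem_univ i), hdiag]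
  ring

lemma univ_erase_inl {α β : Type*} [Fintype α] [Fintype β] [DecidableEq α] [DecidableEq β] (a : α) :
    (univ : Finset (α ⊕ β)).erase (Sum.inl a) = (univ.erase a).disjSum univ := by
  ext (b | b) <;> simp

lemma univ_erase_inr {α β : Type*} [Fintype α] [Fintype β] [DecidableEq α] [DecidableEq β] (b : β) :
    (univ : Finset (α ⊕ β)).erase (Sum.inr b) = univ.disjSum (univ.erase b) := by
  ext (a | a) <;> simp

/-- The Lagrange identity at the nodes `a xᵢ` and `xᵢ`, with the points `τ⁻¹ a xᵢ` and `τ xᵢ`. -/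
lemma sum_prod_sub_div_sub_add_sum_eq_zero {a τ : L} (ha : a ≠ 0) (hτ : τ ≠ 0) {x : ι → L}
    (hx : Function.Injective x) (hx0 : ∀ i, x i ≠ 0) (hxa : ∀ i j, a * x i ≠ x j) :
    ∑ i, (1 - τ⁻¹) * ((∏ j ∈ univ.erase i, (x i - τ⁻¹ * x j) / (x i - x j)) *
        ∏ j, (a * x i - τ * x j) / (a * x i - x j)) +
      ∑ i, (1 - τ) * ((∏ j ∈ univ.erase i, (x i - τ * x j) / (x i - x j)) *
        ∏ j, (a⁻¹ * x i - τ⁻¹ * x j) / (a⁻¹ * x i - x j)) = 0 := by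
  have lagrange := sum_mul_prod_erase_sub_div_sub_eq_zero (Sum.elim (fun i => a * x i) x)
    (Sum.elim (fun i => τ⁻¹ * (a * x i)) (fun i => τ * x i))
    ((mul_right_injective₀ ha |>.comp hx).sumElim hx hxa)
    (by rintro (i | i) <;> simp [ha, hx0])
    (by simp only [Fintype.prod_sumElim, ← prod_mul_distrib]
        exact prod_congr rfl fun i _ => by field_simp)
  have hinr (i j : ι) : (x i - τ⁻¹ * (a * x j)) / (x i - a * x j) =
      (a⁻¹ * x i - τ⁻¹ * x j) / (a⁻¹ * x i - x j) := by
    rw [← mul_div_mul_left _ _ (inv_ne_zero ha)]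
    congr 1 <;> field_simp
  have hinl (i j : ι) : (a * x i - τ⁻¹ * (a * x j)) / (a * x i - a * x j) =
      (x i - τ⁻¹ * x j) / (x i - x j) := by
    rw [mul_left_comm, ← mul_sub, ← mul_sub, mul_div_mul_left _ _ ha]
  have hdiag (c : L) {y : L} (hy : y ≠ 0) : (y - c * y) / y = 1 - c := by
    rw [← one_sub_mul, mul_div_cancel_right₀ _ hy]
  simpa only [Fintype.sum_sum_type, univ_erase_inl, univ_erase_inr, prod_disjSum, Sum.elim_inl,
    Sum.elim_inr, hinl, hinr, hdiag, hx0, mul_ne_zero ha, ne_eq, not_false_eq_true,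
    mul_comm (Finset.prod univ _)] using lagrange

lemma sum_macdonaldCoeff_mul_scaleAt_self {a τ : L} (ha : a ≠ 0) (hτ : τ ≠ 0) (ha1 : a ≠ 1)
    (hτ1 : τ ≠ 1) (haτ : a ≠ τ) {x : ι → L} (hx : Function.Injective x) (hx0 : ∀ i, x i ≠ 0)
    (hxa : ∀ i j, i ≠ j → a * x i ≠ x j) :
    ∑ i, macdonaldCoeff τ x i * macdonaldCoeff τ⁻¹ (scaleAt a x i) i =
      ∑ i, macdonaldCoeff τ⁻¹ x i * macdonaldCoeff τ (scaleAt a⁻¹ x i) i := by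
  have hxa' (i j) : a * x i ≠ x j := by
    rcases eq_or_ne i j with rfl | hij
    · simpa [hx0 i] using ha1
    · exact hxa i j hij
  have hxa_inv (i j) : a⁻¹ * x i ≠ x j := fun h => hxa' j i (by simp [← h, ha])
  have ha1' := sub_ne_zero.2 ha1
  have hconst : (1 - τ) * ((a⁻¹ - τ⁻¹) / (a⁻¹ - 1)) = -((1 - τ⁻¹) * ((a - τ) / (a - 1))) := by
    have hinv : a⁻¹ - 1 = -((a - 1) / a) := by field_simp; ring
    rw [hinv]
    field_simp
    ring
  have hconst0 : (1 - τ⁻¹) * ((a - τ) / (a - 1)) ≠ 0 :=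
    mul_ne_zero (sub_ne_zero.2 (inv_ne_one.2 hτ1).symm) (div_ne_zero (sub_ne_zero.2 haτ) ha1')
  have lagrange := sum_prod_sub_div_sub_add_sum_eq_zero ha hτ hx hx0 hxa'
  have hright (i : ι) := prod_sub_div_sub_eq_macdonaldCoeff_mul a⁻¹ τ⁻¹ (inv_ne_zero hτ) hx i
    (hx0 i) (hxa_inv i)
  simp only [inv_inv] at hright
  simp only [prod_sub_div_sub_eq_macdonaldCoeff_mul a τ hτ hx _ (hx0 _) (hxa' _), hright, hconst,
    ← mul_sum, neg_mul, sum_neg_distrib, ← sub_eq_add_neg, ← mul_sub] at lagrange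
  exact sub_eq_zero.1 ((mul_eq_zero.1 lagrange).resolve_left hconst0)

lemma macdonaldCoeff_mul_scaleAt_of_ne {a : L} (τ : L) (ha : a ≠ 0) (hτ : τ ≠ 0)
    {x : ι → L} (hx : Function.Injective x) {i j : ι} (hij : i ≠ j) (hxa : a * x i ≠ x j) :
    macdonaldCoeff τ x i * macdonaldCoeff τ⁻¹ (scaleAt a x i) j =
      macdonaldCoeff τ⁻¹ x j * macdonaldCoeff τ (scaleAt a⁻¹ x j) i := by
  have hpair : ratio τ (x i) (x j) * ratio τ⁻¹ (x j) (a * x i) =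
      ratio τ⁻¹ (x j) (x i) * ratio τ (x i) (a⁻¹ * x j) := by
    have hinv : x i - a⁻¹ * x j = (a * x i - x j) / a := by field_simp
    have h₁ := sub_ne_zero.2 (hx.ne hij)
    have h₂ := sub_ne_zero.2 hxa
    have h₃ : x i ≠ a⁻¹ * x j := sub_ne_zero.1 (hinv ▸ div_ne_zero h₂ ha)
    rw [ratio_of_ne _ (hx.ne hij), ratio_of_ne _ hxa.symm, ratio_of_ne _ (hx.ne hij).symm,
      ratio_of_ne _ h₃, hinv, ← neg_sub (x i) (x j), ← neg_sub (a * x i) (x j)]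
    field_simp
    ring
  rw [macdonaldCoeff_scaleAt_of_ne _ _ _ hij.symm, macdonaldCoeff_scaleAt_of_ne _ _ _ hij,
    macdonaldCoeff, macdonaldCoeff, ← mul_prod_erase univ _ (mem_univ j),
    ← mul_prod_erase univ (fun k => ratio τ⁻¹ (x j) (x k)) (mem_univ i)]
  linear_combination (∏ k ∈ univ.erase j, ratio τ (x i) (x k)) *
    (∏ k ∈ univ.erase i, ratio τ⁻¹ (x j) (x k)) * hpair

theorem macdonaldOp_comm {a τ : L} (ha : a ≠ 0) (hτ : τ ≠ 0) (ha1 : a ≠ 1) (hτ1 : τ ≠ 1)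
    (haτ : a ≠ τ) {x : ι → L} (hx : Function.Injective x) (hx0 : ∀ i, x i ≠ 0)
    (hxa : ∀ i j, i ≠ j → a * x i ≠ x j) (F : (ι → L) → L) :
    macdonaldOp a τ (macdonaldOp a⁻¹ τ⁻¹ F) x = macdonaldOp a⁻¹ τ⁻¹ (macdonaldOp a τ F) x := by
  have hterm (i j : ι) : macdonaldCoeff τ x i * (macdonaldCoeff τ⁻¹ (scaleAt a x i) j *
        F (scaleAt a⁻¹ (scaleAt a x i) j)) -
      macdonaldCoeff τ⁻¹ x j * (macdonaldCoeff τ (scaleAt a⁻¹ x j) i *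
        F (scaleAt a (scaleAt a⁻¹ x j) i)) =
      if i = j then (macdonaldCoeff τ x i * macdonaldCoeff τ⁻¹ (scaleAt a x i) i -
        macdonaldCoeff τ⁻¹ x i * macdonaldCoeff τ (scaleAt a⁻¹ x i) i) * F x else 0 := by
    rw [scaleAt_scaleAt_comm a a⁻¹]
    split_ifs with hij
    · subst hij
      rw [scaleAt_inv_scaleAt ha]
      ring
    · rw [← mul_assoc, ← mul_assoc, macdonaldCoeff_mul_scaleAt_of_ne τ ha hτ hx hij (hxa i j hij),
        sub_self]
  simp only [macdonaldOp, mul_sum]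
  rw [sum_comm (f := fun j i => macdonaldCoeff τ⁻¹ x j * _), ← sub_eq_zero]
  simp only [← sum_sub_distrib, hterm, sum_ite_eq, mem_univ, if_true]
  rw [← sum_mul, sum_sub_distrib,
    sum_macdonaldCoeff_mul_scaleAt_self ha hτ ha1 hτ1 haτ hx hx0 hxa, sub_self, zero_mul]

end DifferenceOperator

section Polynomial

variable {ι k : Type*} [Field k]

lemma aeval_comp_perm {R A : Type*} [CommSemiring R] [CommSemiring A] [Algebra R A]
    {f : MvPolynomial ι R} (hf : f.IsSymmetric) (x : ι → A) (σ : Equiv.Perm ι) :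
    aeval (x ∘ σ) f = aeval x f := by
  rw [← aeval_rename, hf σ]

/-- The tuple of the variables, as a point over the field of rational functions. A polynomial is
determined by its value at this point. -/
noncomputable def genericPoint (ι k : Type*) [Field k] (i : ι) : FractionRing (MvPolynomial ι k) :=
  algebraMap (MvPolynomial ι k) _ (X i)

lemma aeval_genericPoint_injective :
    Function.Injective
      (aeval (genericPoint ι k) : MvPolynomial ι k → FractionRing (MvPolynomial ι k)) := by
  have haeval (f : MvPolynomial ι k) :
      aeval (genericPoint ι k) f = algebraMap _ (FractionRing (MvPolynomial ι k)) f := by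
    change aeval (algebraMap (MvPolynomial ι k) (FractionRing (MvPolynomial ι k)) ∘ X) f = _
    rw [aeval_algebraMap_apply, aeval_X_left_apply]
  intro f g h
  rw [haeval, haeval] at h
  exact IsFractionRing.injective _ _ h

lemma genericPoint_ne_zero (i : ι) : genericPoint ι k i ≠ 0 := by
  simp [genericPoint]

lemma algebraMap_mul_genericPoint_ne {i j : ι} (h : i ≠ j) (c : k) :
    algebraMap k (FractionRing (MvPolynomial ι k)) c * genericPoint ι k i ≠ genericPoint ι k j := by
  classical
  intro heq
  have heq' : C c * X i = (X j : MvPolynomial ι k) :=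
    aeval_genericPoint_injective (by simpa using heq)
  simpa [coeff_C_mul, coeff_X, Finsupp.single_left_inj, h] using
    congrArg (coeff (Finsupp.single j 1)) heq'

lemma genericPoint_injective : Function.Injective (genericPoint ι k) := by
  intro i j h
  by_contra hij
  exact algebraMap_mul_genericPoint_ne hij (1 : k) (by simpa using h)

variable [Fintype ι] [DecidableEq ι]

/-- A linear operator which acts on symmetric polynomials as Macdonald's `q`-difference operator
with parameters `c`, `τ`. The identity is required at points with distinct coordinates over the
field of rational functions, where the denominators do not vanish. -/
def IsMacdonaldOp (c τ : k) (D : MvPolynomial ι k →ₗ[k] MvPolynomial ι k) : Prop :=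
  ∀ f, f.IsSymmetric → ∀ x : ι → FractionRing (MvPolynomial ι k), Function.Injective x →
    aeval x (D f) = macdonaldOp (algebraMap k _ c) (algebraMap k _ τ) (fun y => aeval y f) x

namespace IsMacdonaldOp

variable {c τ : k} {D D' : MvPolynomial ι k →ₗ[k] MvPolynomial ι k}

lemma isSymmetric (hD : IsMacdonaldOp c τ D) {f : MvPolynomial ι k} (hf : f.IsSymmetric) :
    (D f).IsSymmetric := by
  intro σ
  apply aeval_genericPoint_injective
  rw [aeval_rename, hD f hf _ (genericPoint_injective.comp σ.injective),
    hD f hf _ genericPoint_injective, macdonaldOp_comp_perm _ _ (aeval_comp_perm hf)]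

lemma aeval_genericPoint_comp {c' τ' : k} (hD : IsMacdonaldOp c τ D) (hD' : IsMacdonaldOp c' τ' D')
    {f : MvPolynomial ι k} (hf : f.IsSymmetric) :
    aeval (genericPoint ι k) (D (D' f)) =
      macdonaldOp (algebraMap k _ c) (algebraMap k _ τ)
        (macdonaldOp (algebraMap k _ c') (algebraMap k _ τ') fun y => aeval y f)
        (genericPoint ι k) := by
  rw [hD _ (hD'.isSymmetric hf) _ genericPoint_injective, macdonaldOp, macdonaldOp]
  refine sum_congr rfl fun i _ => ?_
  rw [hD' f hf _ (scaleAt_injective genericPoint_injective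
    (fun _ _ h => algebraMap_mul_genericPoint_ne h c) i)]

theorem comm (hc : c ≠ 0) (hτ : τ ≠ 0) (hc1 : c ≠ 1) (hτ1 : τ ≠ 1) (hcτ : c ≠ τ)
    (hD : IsMacdonaldOp c τ D) (hD' : IsMacdonaldOp c⁻¹ τ⁻¹ D') {f : MvPolynomial ι k}
    (hf : f.IsSymmetric) : D (D' f) = D' (D f) := by
  have hinj := FaithfulSMul.algebraMap_injective k (FractionRing (MvPolynomial ι k))
  apply aeval_genericPoint_injective
  rw [aeval_genericPoint_comp hD hD' hf, aeval_genericPoint_comp hD' hD hf, map_inv₀, map_inv₀]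
  exact macdonaldOp_comm (by simpa using hc) (by simpa using hτ) (by simpa using hinj.ne hc1)
    (by simpa using hinj.ne hτ1) (hinj.ne hcτ) genericPoint_injective genericPoint_ne_zero
    (fun _ _ h => algebraMap_mul_genericPoint_ne h c) _

end IsMacdonaldOp

end Polynomial

section Spectrum

/-- The substitution `X i ↦ c * X i` of the `i`-th variable. -/
noncomputable def scaleVar {ι R : Type*} [DecidableEq ι] [CommSemiring R] (c : R) (i : ι) :
    MvPolynomial ι R →ₐ[R] MvPolynomial ι R :=
  aeval (scaleAt (C c) X i)

lemma aeval_scaleVar {ι R A : Type*} [DecidableEq ι] [CommSemiring R] [CommSemiring A] [Algebra R A]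
    (c : R) (i : ι) (x : ι → A) (f : MvPolynomial ι R) :
    aeval x (scaleVar c i f) = aeval (scaleAt (algebraMap R A c) x i) f := by
  have h : (aeval x).comp (scaleVar c i) = aeval (scaleAt (algebraMap R A c) x i) := by
    ext j
    simp only [scaleVar, AlgHom.comp_apply, aeval_X, scaleAt_apply]
    split_ifs <;> simp
  exact DFunLike.congr_fun h f

lemma coeff_scaleVar {ι R : Type*} [DecidableEq ι] [CommSemiring R] (c : R) (i : ι) (ν : ι →₀ ℕ)
    (f : MvPolynomial ι R) : coeff ν (scaleVar c i f) = c ^ ν i * coeff ν f := by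
  induction f using MvPolynomial.induction_on' with
  | monomial u a =>
    have hmon : scaleVar c i (monomial u a) = monomial u (c ^ u i * a) := by
      have hprod : (u.prod fun j e => (if j = i then C c else 1 : MvPolynomial ι R) ^ e) =
          C (c ^ u i) := by
        simp only [ite_pow, one_pow]
        rw [Finsupp.prod_ite_eq']
        split_ifs with hi
        · rw [C_pow]
        · rw [Finsupp.notMem_support_iff.1 hi, pow_zero, C_1]
      simp only [scaleVar, aeval_monomial, scaleAt_apply, mul_pow, Finsupp.prod_mul, hprod,
        algebraMap_eq]
      rw [monomial_eq, C_mul, mul_left_comm, mul_assoc]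
    rw [hmon, coeff_monomial, coeff_monomial]
    split_ifs with h <;> simp [h]
  | add f g hf hg => rw [map_add, coeff_add, coeff_add, hf, hg, mul_add]

lemma degree_scaleVar_le {ι R : Type*} [DecidableEq ι] [CommSemiring R] (m : MonomialOrder ι)
    (c : R) (i : ι) (f : MvPolynomial ι R) :
    m.toSyn (m.degree (scaleVar c i f)) ≤ m.toSyn (m.degree f) := by
  refine m.degree_le_iff.2 fun ν hν => m.le_degree ?_
  rw [mem_support_iff, coeff_scaleVar] at hν
  exact mem_support_iff.2 (right_ne_zero_of_mul hν)

/-- The Vandermonde product `∏ i < j, (X i - X j)`, a common denominator of the coefficients of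
Macdonald's operator. -/
noncomputable def vandermonde (n : ℕ) (R : Type*) [CommRing R] : MvPolynomial (Fin n) R :=
  ∏ i, ∏ j ∈ Ioi i, (X i - X j)

lemma aeval_scaleAt_vandermonde {n : ℕ} {R L : Type*} [CommRing R] [Field L] [Algebra R L] (τ : L)
    {x : Fin n → L} (hx : Function.Injective x) (i : Fin n) :
    aeval (scaleAt τ x i) (vandermonde n R) =
      macdonaldCoeff τ x i * aeval x (vandermonde n R) := by
  set φ : Fin n → Fin n → L := fun a b => if b = i then ratio τ (x b) (x a) else 1
  have hφ (a b : Fin n) (hab : a < b) :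
      scaleAt τ x i a - scaleAt τ x i b = φ b a * φ a b * (x a - x b) := by
    have hne := sub_ne_zero.2 (hx.ne hab.ne)
    rcases eq_or_ne a i with rfl | ha
    · rw [scaleAt_self, scaleAt_of_ne τ x hab.ne']
      simp [φ, hab.ne', ratio_of_ne τ (hx.ne hab.ne), hne]
    rcases eq_or_ne b i with rfl | hb
    · rw [scaleAt_self, scaleAt_of_ne τ x hab.ne]
      simp only [φ, if_neg ha, if_true, one_mul, ratio_of_ne τ (hx.ne hab.ne')]
      rw [← neg_sub (x b) (x a), mul_neg, div_mul_cancel₀ _ (sub_ne_zero.2 (hx.ne hab.ne')),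
        neg_sub]
    · rw [scaleAt_of_ne τ x ha, scaleAt_of_ne τ x hb]
      simp [φ, ha, hb]
  have hcoeff : macdonaldCoeff τ x i = ∏ a, ∏ b ∈ Ioi a, φ b a * φ a b := by
    rw [prod_prod_Ioi_mul_eq_prod_prod_off_diag, macdonaldCoeff_eq_prod_erase,
      prod_eq_single i (fun a _ ha => prod_eq_one fun b _ => if_neg ha) (by simp),
      ← compl_singleton]
    simp
  rw [hcoeff, vandermonde]
  simp only [map_prod, map_sub, aeval_X, ← prod_mul_distrib]
  exact prod_congr rfl fun a _ => prod_congr rfl fun b hb => hφ a b (mem_Ioi.1 hb)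

lemma X_sub_X_ne_zero {ι R : Type*} [CommRing R] [Nontrivial R] {i j : ι} (h : i ≠ j) :
    (X i - X j : MvPolynomial ι R) ≠ 0 :=
  sub_ne_zero.2 fun hX => h (X_injective hX)

section Degree

variable {n : ℕ} {R : Type*} [CommRing R] [IsDomain R]

lemma vandermonde_ne_zero : vandermonde n R ≠ 0 :=
  prod_ne_zero_iff.2 fun _ _ => prod_ne_zero_iff.2 fun _ hj => X_sub_X_ne_zero (mem_Ioi.1 hj).ne

lemma lex_degree_vandermonde (i : Fin n) :
    MonomialOrder.lex.degree (vandermonde n R) i = i.rev := by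
  have hfactor (a b : Fin n) (hab : b ∈ Ioi a) :
      MonomialOrder.lex.degree (X a - X b : MvPolynomial (Fin n) R) = Finsupp.single a 1 := by
    rw [MonomialOrder.degree_sub_of_lt, MonomialOrder.degree_X]
    rw [MonomialOrder.degree_X, MonomialOrder.degree_X, MonomialOrder.lex_lt_iff]
    exact Finsupp.Lex.single_lt_iff.2 (mem_Ioi.1 hab)
  have hne (a b : Fin n) (hab : b ∈ Ioi a) : (X a - X b : MvPolynomial (Fin n) R) ≠ 0 :=
    X_sub_X_ne_zero (mem_Ioi.1 hab).ne
  rw [vandermonde, MonomialOrder.degree_prod fun a _ => prod_ne_zero_iff.2 (hne a)]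
  simp only [MonomialOrder.degree_prod (hne _), sum_congr rfl (hfactor _), sum_const, Fin.card_Ioi,
    Finsupp.smul_single_one, Finsupp.finsetSum_apply, Finsupp.single_apply, sum_ite_eq', mem_univ,
    if_true, Fin.val_rev]
  omega

end Degree

variable {n : ℕ} {k : Type*} [Field k]

/-- The eigenvalue of the unnormalized Macdonald operator at the composition `κ`. -/
def eigenvalue (c τ : k) (κ : Fin n → ℕ) : k := ∑ i, c ^ κ i * τ ^ (i.rev : ℕ)

namespace IsMacdonaldOp

variable {c τ : k} {D D' : MvPolynomial (Fin n) k →ₗ[k] MvPolynomial (Fin n) k}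
  {f g : MvPolynomial (Fin n) k}

lemma vandermonde_mul (hD : IsMacdonaldOp c τ D) (hf : f.IsSymmetric) :
    vandermonde n k * D f = ∑ i, scaleVar τ i (vandermonde n k) * scaleVar c i f := by
  apply aeval_genericPoint_injective
  rw [map_mul, map_sum, hD f hf _ genericPoint_injective, macdonaldOp, mul_sum]
  refine sum_congr rfl fun i _ => ?_
  rw [map_mul, aeval_scaleVar, aeval_scaleVar, aeval_scaleAt_vandermonde _ genericPoint_injective]
  ring

/-- Compare the lexicographically leading coefficients on both sides of `vandermonde_mul`. -/
lemma eq_eigenvalue_degree (hD : IsMacdonaldOp c τ D) (hf : f.IsSymmetric) (hf0 : f ≠ 0) {e : k}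
    (he : D f = e • f) : e = eigenvalue c τ (MonomialOrder.lex.degree f) := by
  have hlead := congrArg
    (coeff (MonomialOrder.lex.degree (vandermonde n k) + MonomialOrder.lex.degree f))
    (hD.vandermonde_mul hf)
  have hterm (i : Fin n) :
      coeff (MonomialOrder.lex.degree (vandermonde n k) + MonomialOrder.lex.degree f)
        (scaleVar τ i (vandermonde n k) * scaleVar c i f) =
      c ^ MonomialOrder.lex.degree f i * τ ^ (i.rev : ℕ) *
        (MonomialOrder.lex.leadingCoeff (vandermonde n k) * MonomialOrder.lex.leadingCoeff f) := by
    rw [MonomialOrder.lex.coeff_mul_of_add_of_degree_le (degree_scaleVar_le ..)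
      (degree_scaleVar_le ..), coeff_scaleVar, coeff_scaleVar, lex_degree_vandermonde,
      MonomialOrder.leadingCoeff, MonomialOrder.leadingCoeff]
    ring
  simp only [he, mul_smul_comm, coeff_smul, MonomialOrder.coeff_mul_of_degree_add, coeff_sum,
    hterm, ← sum_mul, smul_eq_mul] at hlead
  exact mul_right_cancel₀
    (mul_ne_zero (MonomialOrder.leadingCoeff_ne_zero_iff.2 vandermonde_ne_zero)
      (MonomialOrder.leadingCoeff_ne_zero_iff.2 hf0)) hlead

lemma eq_coeff_smul (hD : IsMacdonaldOp c τ D)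
    (hsep : Function.Injective (eigenvalue c τ : (Fin n → ℕ) → k)) {κ : Fin n →₀ ℕ}
    (hf : f.IsSymmetric) (hDf : D f = eigenvalue c τ κ • f) (hκ : coeff κ f = 1)
    (hg : g.IsSymmetric) (hDg : D g = eigenvalue c τ κ • g) : g = coeff κ g • f := by
  rw [← sub_eq_zero]
  set h := g - coeff κ g • f with hh
  by_contra h0
  have hDh : D h = eigenvalue c τ κ • h := by
    rw [hh, map_sub, map_smul, hDg, hDf, smul_sub, smul_comm]
  have hdeg : κ = MonomialOrder.lex.degree h :=
    DFunLike.coe_injective (hsep (hD.eq_eigenvalue_degree (hg.sub (hf.smul _)) h0 hDh))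
  have hcoeff : coeff κ h = 0 := by simp [hh, hκ]
  rw [hdeg] at hcoeff
  exact h0 (MonomialOrder.leadingCoeff_eq_zero_iff.1 hcoeff)

end IsMacdonaldOp

lemma eigenvalue_inv_mul {c τ : k} (hc : c ≠ 0) (hτ : τ ≠ 0) {N : ℕ} {κ : Fin n → ℕ}
    (hκ : ∀ i, κ i ≤ N) :
    eigenvalue c⁻¹ τ⁻¹ κ * (c ^ N * τ ^ (n - 1)) = eigenvalue c τ fun i => N - κ i.rev := by
  have hterm (i : Fin n) : c⁻¹ ^ κ i * τ⁻¹ ^ (i.rev : ℕ) * (c ^ N * τ ^ (n - 1)) =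
      c ^ (N - κ i) * τ ^ (i : ℕ) := by
    have hn : n - 1 = i + i.rev := by rw [Fin.val_rev]; omega
    nth_rw 1 [← Nat.sub_add_cancel (hκ i)]
    rw [hn, pow_add, pow_add, inv_pow, inv_pow]
    field_simp
  rw [eigenvalue, sum_mul, sum_congr rfl fun i _ => hterm i, eigenvalue,
    ← Equiv.sum_comp Fin.revPerm]
  simp

lemma eigenvalue_inv_injective {c τ : k} (hc : c ≠ 0) (hτ : τ ≠ 0)
    (hsep : Function.Injective (eigenvalue c τ : (Fin n → ℕ) → k)) :
    Function.Injective (eigenvalue c⁻¹ τ⁻¹ : (Fin n → ℕ) → k) := by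
  intro κ l h
  have hκ (i) : κ i ≤ ∑ i, (κ i + l i) :=
    (Nat.le_add_right ..).trans (single_le_sum (f := κ + l) (by simp) (mem_univ i))
  have hl (i) : l i ≤ ∑ i, (κ i + l i) :=
    (Nat.le_add_left ..).trans (single_le_sum (f := κ + l) (by simp) (mem_univ i))
  have hrev := hsep ((eigenvalue_inv_mul hc hτ hκ).symm.trans
    ((congrArg (· * _) h).trans (eigenvalue_inv_mul hc hτ hl)))
  funext i
  have hi := congrFun hrev i.rev
  simp only [Fin.rev_rev] at hi
  have := hκ i
  have := hl i
  omega

/-- The second operator preserves the eigenspace of the first one through `f`, which is a line, so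
`f` is an eigenvector of both. -/
theorem IsMacdonaldOp.eq_of_eigenvalue_inv {c τ : k}
    {D D' : MvPolynomial (Fin n) k →ₗ[k] MvPolynomial (Fin n) k} {f g : MvPolynomial (Fin n) k}
    (hc : c ≠ 0) (hτ : τ ≠ 0) (hc1 : c ≠ 1) (hτ1 : τ ≠ 1)
    (hcτ : c ≠ τ) (hsep : Function.Injective (eigenvalue c τ : (Fin n → ℕ) → k))
    (hD : IsMacdonaldOp c τ D) (hD' : IsMacdonaldOp c⁻¹ τ⁻¹ D') {κ : Fin n →₀ ℕ}
    (hf : f.IsSymmetric) (hfκ : coeff κ f = 1) (hDf : D f = eigenvalue c τ κ • f)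
    (hg : g.IsSymmetric) (hgκ : coeff κ g = 1) (hDg : D' g = eigenvalue c⁻¹ τ⁻¹ κ • g) :
    g = f := by
  have hf0 : f ≠ 0 := by
    rintro rfl
    simp at hfκ
  have hdeg : κ = MonomialOrder.lex.degree f :=
    DFunLike.coe_injective (hsep (hD.eq_eigenvalue_degree hf hf0 hDf))
  have hDD'f : D (D' f) = eigenvalue c τ κ • D' f := by
    rw [hD.comm hc hτ hc1 hτ1 hcτ hD' hf, hDf, map_smul]
  have hD'f := hD.eq_coeff_smul hsep hf hDf hfκ (hD'.isSymmetric hf) hDD'f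
  rw [hD'.eq_eigenvalue_degree hf hf0 hD'f, ← hdeg] at hD'f
  have hsep' := eigenvalue_inv_injective hc hτ hsep
  rw [hD'.eq_coeff_smul hsep' hf hD'f hfκ hg hDg, hgκ, one_smul]

end Spectrum

section Tail

variable {n : ℕ} {k L : Type*} [Field k] [Field L] [Algebra k L] {f : MvPolynomial (Fin n) k}

/-- Macdonald's operator at `f`, with all indices restricted to `i, …, n - 1`. Up to a power of
`τ`, the Cherednik operator `Y i` is the difference of two consecutive tails. -/
noncomputable def macdonaldTail (c τ : k) (f : MvPolynomial (Fin n) k) (x : Fin n → L) (i : ℕ) :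
    L :=
  macdonaldSum (algebraMap k L τ) x (fun j => aeval (scaleAt (algebraMap k L c) x j) f)
    (univ.filter fun j : Fin n => i ≤ j)

lemma macdonaldTail_zero (c τ : k) (f : MvPolynomial (Fin n) k) (x : Fin n → L) :
    macdonaldTail c τ f x 0 =
      macdonaldOp (algebraMap k L c) (algebraMap k L τ) (fun y => aeval y f) x := by
  simp [macdonaldTail, macdonaldSum, macdonaldOp, macdonaldCoeff]

lemma macdonaldTail_self (c τ : k) (f : MvPolynomial (Fin n) k) (x : Fin n → L) :
    macdonaldTail c τ f x n = 0 := by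
  have hempty : (univ.filter fun j : Fin n => n ≤ j) = ∅ := by
    ext j
    simp
  rw [macdonaldTail, hempty, macdonaldSum, sum_empty]

lemma filter_le_val_eq_insert {i : ℕ} (hi : i < n) :
    (univ.filter fun j : Fin n => i ≤ j) =
      insert ⟨i, hi⟩ (univ.filter fun j : Fin n => i + 1 ≤ j) := by
  ext j
  simp only [mem_filter, mem_univ, true_and, mem_insert, Fin.ext_iff]
  omega

lemma macdonaldTail_last (c τ : k) (f : MvPolynomial (Fin n) k) (x : Fin n → L)
    {i : ℕ} (hi : i < n) (hn : i + 1 = n) :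
    macdonaldTail c τ f x i = aeval (scaleAt (algebraMap k L c) x ⟨i, hi⟩) f := by
  have hlast : (univ.filter fun j : Fin n => i ≤ j) = {⟨i, hi⟩} := by
    ext j
    simp only [mem_filter, mem_univ, true_and, mem_singleton, Fin.ext_iff]
    omega
  rw [macdonaldTail, hlast, macdonaldSum, sum_singleton, prod_singleton, ratio_self, one_mul]

lemma macdonaldTail_comp_perm (c τ : k) (hf : f.IsSymmetric) (x : Fin n → L)
    (σ : Equiv.Perm (Fin n)) (i : ℕ) :
    macdonaldTail c τ f (x ∘ σ) i =
      macdonaldSum (algebraMap k L τ) x (fun j => aeval (scaleAt (algebraMap k L c) x j) f)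
        ((univ.filter fun j : Fin n => i ≤ j).map σ.toEmbedding) := by
  rw [← macdonaldSum_comp_perm, macdonaldTail]
  simp only [scaleAt_comp_perm, aeval_comp_perm hf]
  rfl

lemma macdonaldTail_sub_succ (c τ : k) (hf : f.IsSymmetric) {x : Fin n → L}
    (hx : Function.Injective x) {i : ℕ} (hi : i + 1 < n) :
    macdonaldTail c τ f x i - macdonaldTail c τ f x (i + 1) =
      algebraMap k L τ * (macdonaldTail c τ f x (i + 1) - macdonaldTail c τ f x (i + 2)) +
      ratio (algebraMap k L τ) (x ⟨i, Nat.lt_of_succ_lt hi⟩) (x ⟨i + 1, hi⟩) *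
        ((macdonaldTail c τ f (x ∘ Equiv.swap ⟨i, Nat.lt_of_succ_lt hi⟩ ⟨i + 1, hi⟩) (i + 1) -
          macdonaldTail c τ f (x ∘ Equiv.swap ⟨i, Nat.lt_of_succ_lt hi⟩ ⟨i + 1, hi⟩) (i + 2)) -
        (macdonaldTail c τ f x (i + 1) - macdonaldTail c τ f x (i + 2))) := by
  set a : Fin n := ⟨i, Nat.lt_of_succ_lt hi⟩ with ha
  set b : Fin n := ⟨i + 1, hi⟩ with hb
  set S : Finset (Fin n) := univ.filter fun j : Fin n => i + 2 ≤ j with hS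
  have hab : a ≠ b := by simp [ha, hb]
  have haS : a ∉ S := by simp [ha, hS]
  have hbS : b ∉ S := by simp [hb, hS]
  have hbS_eq : (univ.filter fun j : Fin n => i + 1 ≤ j) = insert b S :=
    filter_le_val_eq_insert hi
  have habS_eq : (univ.filter fun j : Fin n => i ≤ j) = insert a (insert b S) := by
    rw [filter_le_val_eq_insert (Nat.lt_of_succ_lt hi), hbS_eq]
  have hswapS : S.map (Equiv.swap a b).toEmbedding = S := by
    rw [map_eq_image]
    refine (image_congr fun j hj => ?_).trans image_id
    exact Equiv.swap_apply_of_ne_of_ne (ne_of_mem_of_not_mem hj haS) (ne_of_mem_of_not_mem hj hbS)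
  rw [macdonaldTail_comp_perm c τ hf, macdonaldTail_comp_perm c τ hf, hbS_eq, map_insert, hswapS,
    Equiv.coe_toEmbedding, Equiv.swap_apply_right]
  simp only [macdonaldTail, hbS_eq, habS_eq, ← hS]
  rw [macdonaldSum_insert_insert_sub _ _ _ hx haS hbS hab, sub_sub_sub_cancel_right]

end Tail

section Cherednik

variable {n : ℕ} {L : Type*} [Field L] [Algebra K L] {c τ : K} {T : ℕ → P n →ₗ[K] P n} {f : P n}

lemma aeval_sOp {k : ℕ} (hk : k + 1 < n) (x : Fin n → L) (f : P n) :
    aeval x (sOp n k f) = aeval (x ∘ Equiv.swap ⟨k, Nat.lt_of_succ_lt hk⟩ ⟨k + 1, hk⟩) f := by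
  simp [sOp, hk, aeval_rename]

lemma sOp_eq_self (hf : f.IsSymmetric) (k : ℕ) : sOp n k f = f := by
  unfold sOp
  split_ifs
  · exact hf _
  · rfl

lemma tauOp_eq_scaleVar (hn : 0 < n) (c : K) : tauOp n c = (scaleVar c ⟨0, hn⟩).toLinearMap := by
  unfold tauOp scaleVar
  congr 2
  funext j
  simp [scaleAt_apply, Fin.ext_iff]

lemma aeval_omegaOp (hn : 0 < n) (c : K) (hf : f.IsSymmetric) (x : Fin n → L) :
    aeval x (omegaOp n c f) =
      aeval (scaleAt (algebraMap K L c) x ⟨n - 1, Nat.sub_one_lt_of_lt hn⟩) f := by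
  have hpartial (m : ℕ) (hm : m < n) (x : Fin n → L) :
      aeval x ((List.range m).foldl (fun acc k => sOp n k ∘ₗ acc) (tauOp n c) f) =
        aeval (scaleAt (algebraMap K L c) x ⟨m, hm⟩) f := by
    induction m generalizing x with
    | zero =>
      rw [List.range_zero, List.foldl_nil, tauOp_eq_scaleVar hm]
      exact aeval_scaleVar ..
    | succ m ih =>
      rw [List.range_succ, List.foldl_append, List.foldl_cons, List.foldl_nil,
        LinearMap.comp_apply, aeval_sOp hm, ih (Nat.lt_of_succ_lt hm), scaleAt_comp_perm,
        aeval_comp_perm hf, Equiv.swap_apply_left]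
  exact hpartial (n - 1) _ x

lemma apply_eq_smul_of_isDL (hT : IsDL n τ T) (hf : f.IsSymmetric) {k : ℕ} (hk : k + 1 < n) :
    T k f = τ • f := by
  have h := hT k hk f
  rw [sOp_eq_self hf, sub_self, mul_zero, add_zero, ← smul_eq_C_mul] at h
  exact mul_left_cancel₀ (X_sub_X_ne_zero (by simp [Fin.ext_iff])) h

lemma Tinv_eq_smul (hτ : τ ≠ 0) (hT : IsDL n τ T) (hf : f.IsSymmetric) {k : ℕ} (hk : k + 1 < n) :
    Tinv n τ T k f = τ⁻¹ • f := by
  simp [Tinv, apply_eq_smul_of_isDL hT hf hk, smul_smul, hτ]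

lemma foldr_comp_eq_pow_smul {R M : Type*} [CommSemiring R] [AddCommMonoid M] [Module R M]
    {S : ℕ → M →ₗ[R] M} {a : R} {v : M} (l : List ℕ) (h : ∀ k ∈ l, S k v = a • v) :
    l.foldr (fun k acc => S k ∘ₗ acc) LinearMap.id v = a ^ l.length • v := by
  induction l with
  | nil => simp
  | cons k l ih =>
    rw [List.foldr_cons, LinearMap.comp_apply, ih fun j hj => h j (List.mem_cons_of_mem _ hj),
      map_smul, h k List.mem_cons_self, smul_smul, List.length_cons, pow_succ]

lemma aeval_apply_of_isDL (hT : IsDL n τ T) {k : ℕ} (hk : k + 1 < n) (f : P n) {x : Fin n → L}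
    (hx : Function.Injective x) :
    aeval x (T k f) = algebraMap K L τ * aeval x f +
      ratio (algebraMap K L τ) (x ⟨k, Nat.lt_of_succ_lt hk⟩) (x ⟨k + 1, hk⟩) *
        (aeval (x ∘ Equiv.swap ⟨k, Nat.lt_of_succ_lt hk⟩ ⟨k + 1, hk⟩) f - aeval x f) := by
  have h := congrArg (aeval x) (hT k hk f)
  simp only [map_mul, map_add, map_sub, aeval_X, aeval_sOp hk, aeval_C] at h
  have hne : x ⟨k, Nat.lt_of_succ_lt hk⟩ ≠ x ⟨k + 1, hk⟩ := hx.ne (by simp [Fin.ext_iff])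
  have hne' := sub_ne_zero.2 hne
  rw [ratio_of_ne _ hne]
  apply mul_left_cancel₀ hne'
  rw [h]
  field_simp

lemma aeval_foldr_omegaOp (hT : IsDL n τ T) (c : K) (hf : f.IsSymmetric) {m i : ℕ}
    (hmi : i + m + 1 = n) {x : Fin n → L} (hx : Function.Injective x) :
    aeval x ((List.range' i m).foldr (fun k acc => T k ∘ₗ acc) LinearMap.id (omegaOp n c f)) =
      macdonaldTail c τ f x i - macdonaldTail c τ f x (i + 1) := by
  induction m generalizing i x with
  | zero =>
    subst hmi
    rw [List.range'_zero, List.foldr_nil, LinearMap.id_apply, aeval_omegaOp i.succ_pos c hf,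
      macdonaldTail_last c τ f x i.lt_succ_self rfl, macdonaldTail_self, sub_zero]
    rfl
  | succ m ih =>
    have hi : i + 1 < n := by omega
    rw [List.range'_succ, List.foldr_cons, LinearMap.comp_apply, aeval_apply_of_isDL hT hi _ hx,
      ih (by omega) hx, ih (by omega) (hx.comp (Equiv.injective _)),
      macdonaldTail_sub_succ c τ hf hx hi]

lemma aeval_Yop (hτ : τ ≠ 0) (hT : IsDL n τ T) (c : K) (hf : f.IsSymmetric) {x : Fin n → L}
    (hx : Function.Injective x) (i : Fin n) :
    aeval x (τ ^ (n - 1) • Yop n c τ T i f) =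
      macdonaldTail c τ f x i - macdonaldTail c τ f x (i + 1) := by
  have hn : n - 1 = n - 1 - i + i := by omega
  have hscalar : τ ^ (n - 1) * ((τ ^ (n - 1 - (i : ℕ)))⁻¹ * τ⁻¹ ^ (i : ℕ)) = 1 := by
    rw [inv_pow, ← mul_inv, ← pow_add, ← hn, mul_inv_cancel₀ (pow_ne_zero _ hτ)]
  rw [Yop, LinearMap.smul_apply, LinearMap.comp_apply, LinearMap.comp_apply,
    foldr_comp_eq_pow_smul (List.range i) fun k hk =>
      Tinv_eq_smul hτ hT hf (by have := List.mem_range.1 hk; omega)]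
  simp only [map_smul, smul_smul, List.length_range, hscalar, one_smul]
  exact aeval_foldr_omegaOp hT c hf (by omega) hx

theorem isMacdonaldOp_sum_Yop (hτ : τ ≠ 0) (hT : IsDL n τ T) (c : K) :
    IsMacdonaldOp c τ (τ ^ (n - 1) • ∑ i, Yop n c τ T i) := by
  intro f hf x hx
  rw [LinearMap.smul_apply, LinearMap.sum_apply, smul_sum, map_sum]
  simp only [aeval_Yop hτ hT c hf hx]
  rw [Fin.sum_univ_eq_sum_range
      fun i => macdonaldTail c τ f x i - macdonaldTail c τ f x (i + 1),
    sum_range_sub', macdonaldTail_self, sub_zero, macdonaldTail_zero]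

lemma pow_mul_sum_eq_eigenvalue (hτ : τ ≠ 0) (c : K) (κ : Fin n → ℕ) :
    τ ^ (n - 1) * ∑ i, c ^ κ i * (τ ^ (i : ℕ))⁻¹ = eigenvalue c τ κ := by
  rw [mul_sum, eigenvalue]
  refine sum_congr rfl fun i _ => ?_
  have hn : n - 1 = i + i.rev := by rw [Fin.val_rev]; omega
  rw [hn, pow_add]
  field_simp

end Cherednik

section RationalFunctions

lemma algebraMap_K_injective : Function.Injective (algebraMap (MvPolynomial (Fin 2) ℚ) K) :=
  IsFractionRing.injective _ _

lemma q_ne_zero : q ≠ 0 := by simp [q]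

lemma t_ne_zero : t ≠ 0 := by simp [t]

lemma algebraMap_X_ne_one (i : Fin 2) : algebraMap (MvPolynomial (Fin 2) ℚ) K (X i) ≠ 1 := by
  rw [← map_one (algebraMap (MvPolynomial (Fin 2) ℚ) K)]
  refine algebraMap_K_injective.ne fun h => ?_
  simpa using congrArg (coeff 0) h

lemma q_ne_t : q ≠ t := algebraMap_K_injective.ne (X_injective.ne (by decide))

lemma eigenvalue_q_t_injective (n : ℕ) :
    Function.Injective (eigenvalue q t : (Fin n → ℕ) → K) := by
  let exponent (κ : Fin n → ℕ) (i : Fin n) : Fin 2 →₀ ℕ :=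
    Finsupp.single 0 (κ i) + Finsupp.single 1 (i.rev : ℕ)
  have hexponent {κ l : Fin n → ℕ} {i j : Fin n} (h : exponent κ i = exponent l j) :
      κ i = l j ∧ i = j := by
    have h₀ := DFunLike.congr_fun h 0
    have h₁ := DFunLike.congr_fun h 1
    simp only [exponent, Finsupp.add_apply, Finsupp.single_apply] at h₀ h₁
    exact ⟨by simpa using h₀, Fin.rev_injective (Fin.ext (by simpa using h₁))⟩
  have heigenvalue (κ : Fin n → ℕ) :
      eigenvalue q t κ = algebraMap _ K (∑ i, monomial (exponent κ i) (1 : ℚ)) := by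
    simp [eigenvalue, q, t, exponent, ← map_pow, ← map_mul, X_pow_eq_monomial, monomial_mul]
  intro κ l h
  rw [heigenvalue, heigenvalue] at h
  funext i
  by_contra hne
  have hcoeff := congrArg (coeff (exponent κ i)) (algebraMap_K_injective h)
  simp only [coeff_sum, coeff_monomial] at hcoeff
  rw [sum_eq_single_of_mem i (mem_univ i) fun j _ hj => if_neg fun e => hj (hexponent e).2,
    sum_eq_zero fun j _ => if_neg fun e => hne ?_] at hcoeff
  · simp at hcoeff
  · obtain ⟨he, rfl⟩ := hexponent e
    exact he.symm

end RationalFunctions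

end Macdonald

open Macdonald

theorem stmt_9_general {n : ℕ} {c τ : K} (hc : c ≠ 0) (hτ : τ ≠ 0) (hc1 : c ≠ 1) (hτ1 : τ ≠ 1)
    (hcτ : c ≠ τ) (hsep : Function.Injective (eigenvalue c τ : (Fin n → ℕ) → K))
    {κ : Fin n → ℕ} {T₁ T₂ : ℕ → P n →ₗ[K] P n} (hT₁ : IsDL n τ T₁) (hT₂ : IsDL n τ⁻¹ T₂)
    {P₁ P₂ : P n} (hP₁ : P₁.IsSymmetric)
    (hκ₁ : coeff (Finsupp.equivFunOnFinite.symm κ) P₁ = 1)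
    (hY₁ : (∑ i, Yop n c τ T₁ i) P₁ = (∑ i, c ^ κ i * (τ ^ (i : ℕ))⁻¹) • P₁)
    (hP₂ : P₂.IsSymmetric) (hκ₂ : coeff (Finsupp.equivFunOnFinite.symm κ) P₂ = 1)
    (hY₂ : (∑ i, Yop n c⁻¹ τ⁻¹ T₂ i) P₂ = (∑ i, c⁻¹ ^ κ i * (τ⁻¹ ^ (i : ℕ))⁻¹) • P₂) :
    P₂ = P₁ := by
  have hτ' := inv_ne_zero hτ
  refine IsMacdonaldOp.eq_of_eigenvalue_inv hc hτ hc1 hτ1 hcτ hsep (isMacdonaldOp_sum_Yop hτ hT₁ c)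
    (isMacdonaldOp_sum_Yop hτ' hT₂ c⁻¹) hP₁ hκ₁ ?_ hP₂ hκ₂ ?_
  · rw [LinearMap.smul_apply, hY₁, smul_smul, pow_mul_sum_eq_eigenvalue hτ]
    rfl
  · rw [LinearMap.smul_apply, hY₂, smul_smul, pow_mul_sum_eq_eigenvalue hτ']
    rfl

theorem stmt_9 (n : ℕ) (κ : Fin n → ℕ) (hκ : Antitone κ)
    (T₁ : ℕ → P n →ₗ[K] P n) (hT₁ : IsDL n t T₁)
    (P₁ : P n) (hP₁ : IsSymMac n q t T₁ κ P₁)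
    (T₂ : ℕ → P n →ₗ[K] P n) (hT₂ : IsDL n t⁻¹ T₂)
    (P₂ : P n) (hP₂ : IsSymMac n q⁻¹ t⁻¹ T₂ κ P₂) :
    P₂ = P₁ := by
  obtain ⟨hsymm₁, hκ₁, -, hY₁⟩ := hP₁
  obtain ⟨hsymm₂, hκ₂, -, hY₂⟩ := hP₂
  exact stmt_9_general q_ne_zero t_ne_zero (algebraMap_X_ne_one 0) (algebraMap_X_ne_one 1) q_ne_t
    (eigenvalue_q_t_injective n) hT₁ hT₂ hsymm₁ hκ₁ hY₁ hsymm₂ hκ₂ hY₂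
end
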